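/- Let (u, ϱ) be a smooth solution on [0,∞) of the perturbation system with no-slip boundary condition, with 0 < α₁ ≤ ϱ₀ + ρ_s ≤ α₂ < ∞, initial data (u₀, ϱ₀) ∈ H²(Ω) × L^∞(Ω), and ∇f ∈ W^{1,∞}(Ω). Then for every 1 ≤ p < ∞ one has ∫₀^∞ ‖∂_t u(t)‖_{Lᵖ(Ω)}² dt < ∞. -/

import Mathlib

/-!
The total density `R = ϱ + ρ_s` and the total pressure `P + p_s` solve the unperturbed
inhomogeneous Navier–Stokes equations with force `-R ∇f` (`Sol`), so that `R` is transported and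
stays in `[α₁, α₂]`. Writing `D = ‖∇u‖₂`, `V = ‖∂ₜu‖₂`, `G = ‖∇∂ₜu‖₂`, three energy estimates are
combined:

* testing with `u` gives `sup ‖u‖₂ < ∞` and `∫ D² dt < ∞` (`Sol.energy`);
* testing with `∂ₜu` and Gronwall's inequality give `sup D < ∞` and `∫ V² dt < ∞` (`Sol.first`);
  the force contributes the exact time derivative of `∫ R u·∇f` and a term that is `O(D²)`;
* testing the time derivative of the momentum equation with `∂ₜu` and Gronwall's inequality give
  `∫ G² dt < ∞` (`Sol.second`). By the transport equation no derivative of `R` appears.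

The Sobolev inequality for functions vanishing on the boundary then bounds `‖∂ₜu‖ₚ` by `G` for every
finite `p` (`Sol.final`).

The estimates usually rely on `H²` regularity for the Stokes system. This is replaced by a weaker
statement with an elementary proof. Let `φ` be a defining function of `Ω`. As `u` is solenoidal and
vanishes on the boundary, the functions `u·∇φ`, `φ u₀`, `φ u₁` vanish on the boundary to second
order, so their second derivatives are controlled by their Laplacian, and integration by parts
against the vorticity bounds the latter by the Stokes operator `νΔu - ∇Π` in `L²`, without any
boundary term (`stokes_H2`). These functions control the part of `u` normal to the boundary and
the tangential derivatives of `u` (`Est.Tg_eq`), and the convective term `(u·∇)u` involves nothing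
else: it is a normal component times a normal derivative, plus a tangential component times a
tangential derivative (`c0_transport`). In the single term that contains `∇²u` in full,
`∂ₜu·(u⊗u : ∇²u)`, the remaining second derivatives are weighted with `φ` through Hardy's
inequality (`hardy`, `Est.nvUU`).
-/

open MeasureTheory Real Filter Topology Set
open scoped RealInnerProductSpace

noncomputable section

/-- The plane `ℝ²`. -/
abbrev E2 := EuclideanSpace ℝ (Fin 2)

/-- Divergence of a vector field on `ℝ²`. -/
def vdiv (u : E2 → E2) (x : E2) : ℝ :=
  ∑ i : Fin 2, fderiv ℝ u x (EuclideanSpace.single i 1) i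

/-- Componentwise Laplacian of a vector field on `ℝ²`. -/
def vlap (u : E2 → E2) (x : E2) : E2 :=
  ∑ j : Fin 2, fderiv ℝ (fun y => fderiv ℝ u y (EuclideanSpace.single j 1)) x
    (EuclideanSpace.single j 1)

/-- `Ω` is a bounded domain in `ℝ²` with smooth boundary. -/
def SmoothBoundedDomain (Ω : Set E2) : Prop :=
  IsOpen Ω ∧ Bornology.IsBounded Ω ∧ Ω.Nonempty ∧
    ∃ φ : E2 → ℝ, ContDiff ℝ (⊤ : ℕ∞) φ ∧ Ω = {x | φ x < 0} ∧
      ∀ x ∈ frontier Ω, fderiv ℝ φ x ≠ 0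

/-- Membership in the Sobolev space `H^k(Ω)` (square-integrable derivatives up to order `k`). -/
def MemHk {F : Type*} [NormedAddCommGroup F] [NormedSpace ℝ F]
    (k : ℕ) (Ω : Set E2) (g : E2 → F) : Prop :=
  ∀ j : ℕ, j ≤ k → IntegrableOn (fun x => ‖iteratedFDeriv ℝ j g x‖ ^ 2) Ω

/-- Joint smoothness of a solution `(u, ϱ, P)` of the system. -/
def SmoothSol (u : ℝ → E2 → E2) (ϱ P : ℝ → E2 → ℝ) : Prop :=
  ContDiff ℝ (⊤ : ℕ∞) (fun p : ℝ × E2 => u p.1 p.2) ∧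
    ContDiff ℝ (⊤ : ℕ∞) (fun p : ℝ × E2 => ϱ p.1 p.2) ∧
    ContDiff ℝ (⊤ : ℕ∞) (fun p : ℝ × E2 => P p.1 p.2)

/-- `ρ_s` is a steady hydrostatic density profile: there is a pressure `p_s` with
`∇p_s = −ρ_s ∇f` on `Ω`. -/
def Hydrostatic (Ω : Set E2) (f ρs : E2 → ℝ) : Prop :=
  ∃ ps : E2 → ℝ, ContDiff ℝ (⊤ : ℕ∞) ps ∧ ∀ x ∈ Ω, gradient ps x = -(ρs x • gradient f x)

/-- The 2D inhomogeneous incompressible Navier–Stokes perturbation system on `Ω`: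
`(ϱ+ρ_s) ∂_t u + (ϱ+ρ_s)(u·∇)u = ν Δu − ∇P − ϱ ∇f`, `∂_t ϱ + u·∇ϱ + u·∇ρ_s = 0`,
`∇·u = 0`, with the no-slip boundary condition `u|_{∂Ω} = 0`. -/
def PerturbationSystem (Ω : Set E2) (ν : ℝ) (f ρs : E2 → ℝ)
    (u : ℝ → E2 → E2) (ϱ P : ℝ → E2 → ℝ) : Prop :=
  (∀ t ∈ Ici (0:ℝ), ∀ x ∈ Ω,
    (ϱ t x + ρs x) • deriv (fun s => u s x) t
        + (ϱ t x + ρs x) • fderiv ℝ (u t) x (u t x)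
      = ν • vlap (u t) x - gradient (P t) x - ϱ t x • gradient f x) ∧
  (∀ t ∈ Ici (0:ℝ), ∀ x ∈ Ω,
    deriv (fun s => ϱ s x) t + fderiv ℝ (ϱ t) x (u t x) + fderiv ℝ ρs x (u t x) = 0) ∧
  (∀ t ∈ Ici (0:ℝ), ∀ x ∈ Ω, vdiv (u t) x = 0) ∧
  (∀ t ∈ Ici (0:ℝ), ∀ x ∈ frontier Ω, u t x = 0)

/-- `∇f ∈ W^{1,∞}(Ω)`. -/
def GradfW1inf (Ω : Set E2) (f : E2 → ℝ) : Prop :=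
  ∃ M : ℝ, ∀ x ∈ Ω, ‖gradient f x‖ ≤ M ∧ ‖iteratedFDeriv ℝ 2 f x‖ ≤ M

/-- `f ∈ W^{2,∞}(Ω)`. -/
def fW2inf (Ω : Set E2) (f : E2 → ℝ) : Prop :=
  ∃ M : ℝ, ∀ x ∈ Ω, |f x| ≤ M ∧ ‖gradient f x‖ ≤ M ∧ ‖iteratedFDeriv ℝ 2 f x‖ ≤ M

open Asymptotics

/-! ### Integration over `Ω` of derivatives of functions vanishing on the boundary -/

lemma exists_bound_on {Ω : Set E2} (hb : Bornology.IsBounded Ω) {F : Type*}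
    [NormedAddCommGroup F] {g : E2 → F} (hg : Continuous g) : ∃ M, 0 ≤ M ∧ ∀ x ∈ Ω, ‖g x‖ ≤ M := by
  obtain ⟨M, hM⟩ := (hb.isCompact_closure).exists_bound_of_continuousOn hg.continuousOn
  exact ⟨max M 0, le_max_right _ _,
    fun x hx => (hM x (subset_closure hx)).trans (le_max_left _ _)⟩

lemma integrableOn_of_cont {Ω : Set E2} (hb : Bornology.IsBounded Ω) {F : Type*}
    [NormedAddCommGroup F] {g : E2 → F} (hg : Continuous g) : IntegrableOn g Ω :=
  (hg.continuousOn.integrableOn_compact hb.isCompact_closure).mono_set subset_closure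

/-- The truncation `s ↦ s³ / (s² + ε)`: it vanishes to third order at `0` and tends to `s`. -/
def trunc3 (ε s : ℝ) : ℝ := s ^ 3 / (s ^ 2 + ε)

/-- The derivative of `trunc3 ε`. -/
def trunc3' (ε s : ℝ) : ℝ := (s ^ 4 + 3 * ε * s ^ 2) / (s ^ 2 + ε) ^ 2

lemma trunc3_hasDerivAt {ε : ℝ} (hε : 0 < ε) (s : ℝ) :
    HasDerivAt (trunc3 ε) (trunc3' ε s) s := by
  have h : s ^ 2 + ε ≠ 0 := by positivity
  have h1 : HasDerivAt (fun s : ℝ => s ^ 3) (3 * s ^ 2) s := by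
    simpa using hasDerivAt_pow 3 s
  have h2 : HasDerivAt (fun s : ℝ => s ^ 2 + ε) (2 * s) s := by
    simpa using (hasDerivAt_pow 2 s).add_const ε
  refine (h1.div h2 h).congr_deriv ?_
  unfold trunc3'
  congr 1
  ring

lemma trunc3'_bound {ε : ℝ} (hε : 0 < ε) (s : ℝ) : |trunc3' ε s| ≤ 3 := by
  unfold trunc3'
  rw [abs_of_nonneg (by positivity), div_le_iff₀ (by positivity)]
  nlinarith [sq_nonneg (s ^ 2), sq_nonneg s, mul_pos hε hε, mul_nonneg hε.le (sq_nonneg s)]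

lemma trunc3'_continuous {ε : ℝ} (hε : 0 < ε) : Continuous (trunc3' ε) := by
  unfold trunc3'
  refine Continuous.div (by fun_prop) (by fun_prop) fun s => by positivity

/-- If `g` vanishes on `∂Ω`, the zero extension of `trunc3 ε ∘ g` is differentiable. -/
lemma hasFDerivAt_ext {Ω : Set E2} (ho : IsOpen Ω) {g : E2 → ℝ}
    (hg : Differentiable ℝ g) (h0 : ∀ x ∈ frontier Ω, g x = 0) {ε : ℝ} (hε : 0 < ε) (x : E2) :
    HasFDerivAt (Ω.indicator fun x => trunc3 ε (g x))
      (Ω.indicator (fun x => trunc3' ε (g x) • fderiv ℝ g x) x) x := by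
  by_cases hx : x ∈ Ω
  · rw [indicator_of_mem hx]
    have h1 : HasFDerivAt (fun x => trunc3 ε (g x)) (trunc3' ε (g x) • fderiv ℝ g x) x :=
      (trunc3_hasDerivAt hε (g x)).comp_hasFDerivAt x (hg x).hasFDerivAt
    refine h1.congr_of_eventuallyEq ?_
    filter_upwards [ho.mem_nhds hx] with y hy
    rw [indicator_of_mem hy]
  · rw [indicator_of_notMem hx]
    by_cases hc : x ∈ closure Ω
    · have hf : x ∈ frontier Ω := by
        rw [frontier, ho.interior_eq]; exact ⟨hc, hx⟩
      have hgx := h0 x hf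
      have hO : g =O[𝓝 x] fun y => y - x := by
        simpa [hgx] using (hg x).isBigO_sub
      have hsq : (fun y => trunc3 ε (g y)) =O[𝓝 x] fun y => ‖y - x‖ ^ 2 := by
        have h2 : (fun y => trunc3 ε (g y)) =O[𝓝 x] fun y => g y ^ 2 := by
          have hbd : ∀ᶠ y in 𝓝 x, |g y| ≤ 1 := by
            have : Tendsto (fun y => |g y|) (𝓝 x) (𝓝 0) := by
              have := (hg.continuous.abs).tendsto x
              simpa [hgx] using this
            exact this.eventually (eventually_le_nhds (by norm_num))
          refine Asymptotics.IsBigO.of_bound (1 / ε) ?_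
          filter_upwards [hbd] with y hy
          unfold trunc3
          rw [norm_eq_abs, norm_eq_abs, abs_div, abs_of_pos (by positivity : 0 < g y ^ 2 + ε),
            div_le_iff₀ (by positivity), abs_pow, abs_pow]
          have e1 : (1 / ε * |g y| ^ 2) * (g y ^ 2 + ε) = |g y| ^ 2 * (1 / ε * g y ^ 2 + 1) := by
            field_simp
          rw [e1]
          have : |g y| ^ 3 ≤ |g y| ^ 2 := by
            have := abs_nonneg (g y)
            nlinarith [sq_nonneg |g y|]
          have h3 : 0 ≤ |g y| ^ 2 * (1 / ε * g y ^ 2) := by positivity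
          linarith
        exact h2.trans (hO.norm_right.pow 2)
      rw [hasFDerivAt_iff_isLittleO_nhds_zero]
      have hlit : (fun y => ‖y - x‖ ^ 2) =o[𝓝 x] fun y => y - x := by
        have := (Asymptotics.isLittleO_norm_pow_id (E' := E2) (n := 2) (by norm_num))
        have h2 : Tendsto (fun y : E2 => y - x) (𝓝 x) (𝓝 0) := by
          have : Continuous fun y : E2 => y - x := by fun_prop
          simpa using this.tendsto x
        exact this.comp_tendsto h2
      have h3 : (Ω.indicator fun x => trunc3 ε (g x)) =o[𝓝 x] fun y => y - x := by
        refine Asymptotics.IsBigO.trans_isLittleO ?_ hlit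
        refine Asymptotics.IsBigO.trans (Asymptotics.isBigO_of_le _ fun y => ?_) hsq
        exact norm_indicator_le_norm_self _ _
      have h4 : Tendsto (fun h : E2 => x + h) (𝓝 0) (𝓝 x) := by
        have : Continuous fun h : E2 => x + h := by fun_prop
        simpa using this.tendsto 0
      have := h3.comp_tendsto h4
      simpa [Function.comp_def, indicator_of_notMem hx] using this
    · refine (hasFDerivAt_const (0 : ℝ) x).congr_of_eventuallyEq ?_
      filter_upwards [isClosed_closure.isOpen_compl.mem_nhds hc] with y hy
      exact indicator_of_notMem (fun h => hy (subset_closure h)) _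

lemma integral_trunc {Ω : Set E2} (ho : IsOpen Ω) (hb : Bornology.IsBounded Ω) {g : E2 → ℝ}
    (hg : ContDiff ℝ 1 g) (h0 : ∀ x ∈ frontier Ω, g x = 0) {ε : ℝ} (hε : 0 < ε) (w : E2) :
    ∫ x in Ω, trunc3' ε (g x) * fderiv ℝ g x w = 0 := by
  have hd := hasFDerivAt_ext ho (hg.differentiable one_ne_zero) h0 hε
  set G := Ω.indicator fun x => trunc3 ε (g x)
  have hfd : ∀ x, fderiv ℝ G x w = Ω.indicator (fun x => trunc3' ε (g x) * fderiv ℝ g x w) x := by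
    intro x
    rw [(hd x).fderiv]
    by_cases hx : x ∈ Ω <;> simp [hx]
  have hcont : Continuous fun x => trunc3' ε (g x) * fderiv ℝ g x w :=
    ((trunc3'_continuous hε).comp hg.continuous).mul
      ((hg.continuous_fderiv one_ne_zero).clm_apply continuous_const)
  have hInt : Integrable (Ω.indicator fun x => trunc3' ε (g x) * fderiv ℝ g x w) :=
    (integrableOn_of_cont hb hcont).integrable_indicator ho.measurableSet
  have hG : Integrable G := by
    refine IntegrableOn.integrable_indicator (integrableOn_of_cont hb ?_) ho.measurableSet
    unfold trunc3
    exact Continuous.div (by have := hg.continuous; fun_prop) (by have := hg.continuous; fun_prop)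
      fun s => by positivity
  have := integral_mul_fderiv_eq_neg_fderiv_mul_of_integrable (μ := volume) (f := G)
    (g := fun _ => (1 : ℝ)) (v := w) (by simpa [hfd] using hInt) (by simp) (by simpa using hG)
    (fun x _ => (hd x).differentiableAt) (fun x _ => by fun_prop)
  simp only [fderiv_fun_const, Pi.zero_apply, zero_apply, mul_zero,
    integral_zero, mul_one, hfd] at this
  rw [integral_indicator ho.measurableSet] at this
  linarith

lemma integral_fderiv_of_ne_zero {Ω : Set E2} (ho : IsOpen Ω) (hb : Bornology.IsBounded Ω)
    {g : E2 → ℝ} (hg : ContDiff ℝ 1 g) (h0 : ∀ x ∈ frontier Ω, g x = 0)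
    (hne : ∀ᵐ x ∂(volume.restrict Ω), g x ≠ 0) (w : E2) :
    ∫ x in Ω, fderiv ℝ g x w = 0 := by
  have hcf : Continuous fun x => fderiv ℝ g x w :=
    (hg.continuous_fderiv one_ne_zero).clm_apply continuous_const
  have hlim : Tendsto (fun n : ℕ => ∫ x in Ω, trunc3' (1 / ((n : ℝ) + 1)) (g x) * fderiv ℝ g x w)
      atTop (𝓝 (∫ x in Ω, fderiv ℝ g x w)) := by
    refine tendsto_integral_of_dominated_convergence (fun x => 3 * |fderiv ℝ g x w|) ?_ ?_ ?_ ?_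
    · intro n
      exact (((trunc3'_continuous (by positivity)).comp hg.continuous).mul hcf).aestronglyMeasurable
    · exact integrableOn_of_cont hb (by fun_prop)
    · intro n
      refine Eventually.of_forall fun x => ?_
      rw [norm_mul, norm_eq_abs, norm_eq_abs]
      exact mul_le_mul_of_nonneg_right (trunc3'_bound (by positivity) _) (abs_nonneg _)
    · filter_upwards [hne] with x hx
      have h1 : Tendsto (fun n : ℕ => 1 / ((n : ℝ) + 1)) atTop (𝓝 0) :=
        tendsto_one_div_add_atTop_nhds_zero_nat
      have h2 : ContinuousAt (fun ε : ℝ => trunc3' ε (g x) * fderiv ℝ g x w) 0 := by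
        unfold trunc3'
        refine ContinuousAt.mul (ContinuousAt.div (by fun_prop) (by fun_prop) ?_) (by fun_prop)
        positivity
      have h3 := h2.tendsto.comp h1
      have h4 : trunc3' 0 (g x) = 1 := by
        unfold trunc3'
        field_simp
        ring
      simpa [Function.comp_def, h4] using h3
  have hz : (fun n : ℕ => ∫ x in Ω, trunc3' (1 / ((n : ℝ) + 1)) (g x) * fderiv ℝ g x w)
      = fun _ => 0 := by
    funext n
    exact integral_trunc ho hb hg h0 (by positivity) w
  rw [hz] at hlim
  exact tendsto_nhds_unique hlim tendsto_const_nhds |>.symm ▸ rfl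

/-- Divergence theorem on `Ω = {φ < 0}` for functions vanishing on `∂Ω`. The truncation argument
sees only `{g ≠ 0}`; replacing `g` by `g + δ φ`, whose zero set in `Ω` is null for all but
countably many `δ`, removes this restriction. -/
lemma integral_fderiv_eq_zero' {Ω : Set E2} (ho : IsOpen Ω) (hb : Bornology.IsBounded Ω)
    {φ : E2 → ℝ} (hφ : ContDiff ℝ 1 φ) (hneg : ∀ x ∈ Ω, φ x < 0)
    (hφ0 : ∀ x ∈ frontier Ω, φ x = 0)
    {g : E2 → ℝ} (hg : ContDiff ℝ 1 g) (h0 : ∀ x ∈ frontier Ω, g x = 0) (w : E2) :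
    ∫ x in Ω, fderiv ℝ g x w = 0 := by
  have hcount := Measure.countable_meas_level_set_pos (μ := volume.restrict Ω)
    (g := fun x => -(g x) / φ x) (by
      exact (hg.continuous.measurable.neg).div hφ.continuous.measurable)
  have key : ∀ δ : ℝ, δ ∉ {t : ℝ | 0 < (volume.restrict Ω) {a : E2 | -(g a) / φ a = t}} →
      (∫ x in Ω, fderiv ℝ g x w) + δ * (∫ x in Ω, fderiv ℝ φ x w) = 0 := by
    intro δ hδ
    have hδ0 : (volume.restrict Ω) {a : E2 | -(g a) / φ a = δ} = 0 := by
      simpa using hδ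
    have h1 := integral_fderiv_of_ne_zero ho hb (g := fun x => g x + δ * φ x) (by fun_prop)
      (fun x hx => by simp [h0 x hx, hφ0 x hx]) (by
        rw [ae_iff]
        refine measure_mono_null (fun x hx => ?_) (measure_union_null hδ0
          (show (volume.restrict Ω) Ωᶜ = 0 by
            rw [Measure.restrict_apply ho.measurableSet.compl]; simp))
        by_cases hxΩ : x ∈ Ω
        · left
          have := (hneg x hxΩ).ne
          simp only [not_not, mem_ofPred_eq] at hx ⊢
          field_simp
          linarith
        · exact Or.inr hxΩ) w
    have h2 : ∀ x, fderiv ℝ (fun x => g x + δ * φ x) x w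
        = fderiv ℝ g x w + δ * fderiv ℝ φ x w := by
      intro x
      have hgd := (hg.differentiable one_ne_zero) x
      have hφd := (hφ.differentiable one_ne_zero) x
      rw [fderiv_fun_add hgd (by fun_prop), fderiv_const_mul hφd]
      simp
    simp_rw [h2] at h1
    rw [integral_add, integral_const_mul] at h1
    · exact h1
    · exact integrableOn_of_cont hb ((hg.continuous_fderiv one_ne_zero).clm_apply continuous_const)
    · exact integrableOn_of_cont hb (continuous_const.mul
        ((hφ.continuous_fderiv one_ne_zero).clm_apply continuous_const))
  obtain ⟨δ, hδ, hδ0⟩ := (hcount.dense_compl ℝ).exists_mem_open (isOpen_Ioo (a := (1:ℝ)) (b := 2))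
    ⟨3/2, by norm_num, by norm_num⟩
  obtain ⟨δ', hδ', hδ0'⟩ := (hcount.dense_compl ℝ).exists_mem_open
    (isOpen_Ioo (a := (3:ℝ)) (b := 4)) ⟨7/2, by norm_num, by norm_num⟩
  have e1 := key δ hδ
  have e2 := key δ' hδ'
  have h3 : (∫ x in Ω, fderiv ℝ φ x w) = 0 := by
    have : (δ' - δ) * (∫ x in Ω, fderiv ℝ φ x w) = 0 := by linarith
    rcases mul_eq_zero.1 this with h | h
    · have := hδ0.2; have := hδ0'.1; linarith
    · exact h
  rw [h3] at e1
  linarith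

/-! ### One-dimensional slices: Ladyzhenskaya-type and sup bounds -/

lemma enorm_le_lintegral_slice {O : Set ℝ} (ho : IsOpen O) (hb : Bornology.IsBounded O) {h : ℝ → ℝ}
    (hh : ContDiff ℝ 1 h) (h0 : ∀ x ∈ frontier O, h x = 0) {x : ℝ} (hx : x ∈ O) :
    ‖h x‖ₑ ≤ ∫⁻ r, O.indicator (fun r => ‖deriv h r‖ₑ) r := by
  obtain ⟨m, hm⟩ := hb.bddBelow
  set S : Set ℝ := Iic x ∩ Oᶜ with hS
  have hSc : IsClosed S := isClosed_Iic.inter ho.isClosed_compl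
  have hSne : S.Nonempty := by
    refine ⟨m - 1, ?_, fun hmO => ?_⟩
    · have := hm hx
      simp only [mem_Iic]; linarith
    · have := hm hmO
      linarith
  have hSb : BddAbove S := ⟨x, fun y hy => hy.1⟩
  have hz : sSup S ∈ S := hSc.csSup_mem hSne hSb
  set z := sSup S with hzdef
  have hzx : z < x := lt_of_le_of_ne hz.1 fun h => hz.2 (h ▸ hx)
  have hsub : Ioc z x ⊆ O := by
    intro y hy
    by_contra hyO
    exact absurd (le_csSup hSb ⟨hy.2, hyO⟩) (not_le.2 hy.1)
  have hzf : z ∈ frontier O := by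
    rw [frontier, ho.interior_eq]
    refine ⟨?_, hz.2⟩
    have : z ∈ closure (Ioc z x) := by
      rw [closure_Ioc hzx.ne]; exact left_mem_Icc.2 hzx.le
    exact closure_mono hsub this
  have hcd : Continuous (deriv h) := hh.continuous_deriv le_rfl
  have hftc : ∫ r in z..x, deriv h r = h x - h z :=
    intervalIntegral.integral_deriv_eq_sub
      (fun y _ => (hh.differentiable one_ne_zero) y) (hcd.intervalIntegrable _ _)
  rw [h0 z hzf, sub_zero, intervalIntegral.integral_of_le hzx.le] at hftc
  rw [← hftc, lintegral_indicator ho.measurableSet]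
  exact (enorm_integral_le_lintegral_enorm _).trans (lintegral_mono_set hsub)

/-- The point of the plane with coordinates `a`, `b`. -/
def pt (a b : ℝ) : E2 := !₂[a, b]

lemma pt_eta (x : E2) : pt (x 0) (x 1) = x := by
  ext i; fin_cases i <;> simp [pt]

lemma pt_eq (a b : ℝ) :
    pt a b = a • EuclideanSpace.single (0 : Fin 2) (1:ℝ)
      + b • EuclideanSpace.single (1 : Fin 2) (1:ℝ) := by
  ext i; fin_cases i <;> simp [pt]

lemma continuous_pt : Continuous fun p : ℝ × ℝ => pt p.1 p.2 := by
  simp_rw [pt_eq]; fun_prop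

lemma contDiff_pt_left (b : ℝ) {n : WithTop ℕ∞} : ContDiff ℝ n fun a => pt a b := by
  simp_rw [pt_eq]; fun_prop

lemma contDiff_pt_right (a : ℝ) {n : WithTop ℕ∞} : ContDiff ℝ n fun b => pt a b := by
  simp_rw [pt_eq]; fun_prop

lemma hasDerivAt_pt_left (a b : ℝ) :
    HasDerivAt (fun a => pt a b) (EuclideanSpace.single (0 : Fin 2) (1:ℝ)) a := by
  simp_rw [pt_eq]
  simpa using ((hasDerivAt_id a).smul_const (EuclideanSpace.single (0 : Fin 2) (1:ℝ))).add_const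
    (b • EuclideanSpace.single (1 : Fin 2) (1:ℝ))

lemma hasDerivAt_pt_right (a b : ℝ) :
    HasDerivAt (fun b => pt a b) (EuclideanSpace.single (1 : Fin 2) (1:ℝ)) b := by
  simp_rw [pt_eq]
  simpa using ((hasDerivAt_id b).smul_const (EuclideanSpace.single (1 : Fin 2) (1:ℝ))).const_add
    (a • EuclideanSpace.single (0 : Fin 2) (1:ℝ))

lemma lintegral_pt {f : E2 → ENNReal} (hf : Measurable f) :
    ∫⁻ x, f x = ∫⁻ a : ℝ, ∫⁻ b : ℝ, f (pt a b) := by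
  have h1 := (EuclideanSpace.volume_preserving_symm_measurableEquiv_toLp (Fin 2)).symm
  have h2 := (volume_preserving_finTwoArrow ℝ).symm
  have h3 := (h1.comp h2)
  have h4 := h3.lintegral_comp hf
  rw [← h4, Measure.volume_eq_prod]
  refine (lintegral_prod _ (hf.comp h3.measurable).aemeasurable).trans ?_
  refine lintegral_congr fun a => lintegral_congr fun b => ?_
  refine congrArg f ?_
  ext i; fin_cases i <;> rfl

lemma lintegral_pt_swap {f : E2 → ENNReal} (hf : Measurable f) :
    ∫⁻ x, f x = ∫⁻ b : ℝ, ∫⁻ a : ℝ, f (pt a b) := by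
  rw [lintegral_pt hf, lintegral_lintegral_swap]
  exact (hf.comp continuous_pt.measurable).aemeasurable

lemma slice_left {Ω : Set E2} (ho : IsOpen Ω) (hb : Bornology.IsBounded Ω) {w : E2 → ℝ}
    (hw : ContDiff ℝ 1 w) (h0 : ∀ x ∈ frontier Ω, w x = 0) {a b : ℝ} (hx : pt a b ∈ Ω) :
    ‖w (pt a b)‖ₑ ≤ ∫⁻ s, Ω.indicator
      (fun x => ‖fderiv ℝ w x (EuclideanSpace.single 0 1)‖ₑ) (pt s b) := by
  have hc : Continuous fun s => pt s b := (contDiff_pt_left b (n := 0)).continuous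
  have hd : ∀ s, deriv (fun s => w (pt s b)) s
      = fderiv ℝ w (pt s b) (EuclideanSpace.single 0 1) := fun s =>
    (((hw.differentiable one_ne_zero) (pt s b)).hasFDerivAt.comp_hasDerivAt s
      (hasDerivAt_pt_left s b)).deriv
  have hbd : Bornology.IsBounded ((fun s => pt s b) ⁻¹' Ω) := by
    obtain ⟨R, hR⟩ := hb.exists_norm_le
    refine (Metric.isBounded_closedBall (x := (0:ℝ)) (r := R)).subset fun s hs => ?_
    have h1 := hR _ hs
    have h2 := PiLp.norm_apply_le (pt s b) 0
    simp only [Metric.mem_closedBall, dist_zero_right]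
    exact (by simpa [pt] using h2 : ‖s‖ ≤ ‖pt s b‖).trans h1
  have := enorm_le_lintegral_slice (ho.preimage hc) hbd (h := fun s => w (pt s b))
    (hw.comp (contDiff_pt_left b))
    (fun s hs => h0 _ (hc.frontier_preimage_subset Ω hs)) (x := a) hx
  simp_rw [hd] at this
  exact this

lemma slice_right {Ω : Set E2} (ho : IsOpen Ω) (hb : Bornology.IsBounded Ω) {w : E2 → ℝ}
    (hw : ContDiff ℝ 1 w) (h0 : ∀ x ∈ frontier Ω, w x = 0) {a b : ℝ} (hx : pt a b ∈ Ω) :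
    ‖w (pt a b)‖ₑ ≤ ∫⁻ s, Ω.indicator
      (fun x => ‖fderiv ℝ w x (EuclideanSpace.single 1 1)‖ₑ) (pt a s) := by
  have hc : Continuous fun s => pt a s := (contDiff_pt_right a (n := 0)).continuous
  have hd : ∀ s, deriv (fun s => w (pt a s)) s
      = fderiv ℝ w (pt a s) (EuclideanSpace.single 1 1) := fun s =>
    (((hw.differentiable one_ne_zero) (pt a s)).hasFDerivAt.comp_hasDerivAt s
      (hasDerivAt_pt_right a s)).deriv
  have hbd : Bornology.IsBounded ((fun s => pt a s) ⁻¹' Ω) := by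
    obtain ⟨R, hR⟩ := hb.exists_norm_le
    refine (Metric.isBounded_closedBall (x := (0:ℝ)) (r := R)).subset fun s hs => ?_
    have h1 := hR _ hs
    have h2 := PiLp.norm_apply_le (pt a s) 1
    simp only [Metric.mem_closedBall, dist_zero_right]
    exact (by simpa [pt] using h2 : ‖s‖ ≤ ‖pt a s‖).trans h1
  have := enorm_le_lintegral_slice (ho.preimage hc) hbd (h := fun s => w (pt a s))
    (hw.comp (contDiff_pt_right a))
    (fun s hs => h0 _ (hc.frontier_preimage_subset Ω hs)) (x := b) hx
  simp_rw [hd] at this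
  exact this

lemma continuous_dir {w : E2 → ℝ} (hw : ContDiff ℝ 1 w) (e : E2) :
    Continuous fun x => fderiv ℝ w x e :=
  (hw.continuous_fderiv one_ne_zero).clm_apply continuous_const

lemma measurable_ind_enorm {Ω : Set E2} (ho : IsOpen Ω) {g : E2 → ℝ} (hg : Continuous g) :
    Measurable (Ω.indicator fun x => ‖g x‖ₑ) :=
  (hg.enorm.measurable).indicator ho.measurableSet

lemma ofReal_integral_abs {Ω : Set E2} (hb : Bornology.IsBounded Ω)
    {g : E2 → ℝ} (hg : Continuous g) : ENNReal.ofReal (∫ x in Ω, |g x|) = ∫⁻ x in Ω, ‖g x‖ₑ := by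
  have := ofReal_integral_norm_eq_lintegral_enorm (integrableOn_of_cont hb hg)
  simpa using this

/-- Ladyzhenskaya's inequality in its `W^{1,1}` form. -/
lemma integral_sq_le {Ω : Set E2} (ho : IsOpen Ω) (hb : Bornology.IsBounded Ω) {w : E2 → ℝ}
    (hw : ContDiff ℝ 1 w) (h0 : ∀ x ∈ frontier Ω, w x = 0) :
    ∫ x in Ω, w x ^ 2 ≤ (∫ x in Ω, |fderiv ℝ w x (EuclideanSpace.single 0 1)|)
      * (∫ x in Ω, |fderiv ℝ w x (EuclideanSpace.single 1 1)|) := by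
  set f0 := Ω.indicator (fun x => ‖fderiv ℝ w x (EuclideanSpace.single 0 1)‖ₑ) with hf0
  set f1 := Ω.indicator (fun x => ‖fderiv ℝ w x (EuclideanSpace.single 1 1)‖ₑ) with hf1
  have m0 : Measurable f0 := measurable_ind_enorm ho (continuous_dir hw _)
  have m1 : Measurable f1 := measurable_ind_enorm ho (continuous_dir hw _)
  have hsq : Continuous fun x => w x ^ 2 := hw.continuous.pow 2
  have mp : Measurable fun p : ℝ × ℝ => pt p.1 p.2 := continuous_pt.measurable
  have mA : Measurable fun b => ∫⁻ s, f0 (pt s b) :=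
    Measurable.lintegral_prod_left' (f := fun p : ℝ × ℝ => f0 (pt p.1 p.2)) (m0.comp mp)
  have hle : ∫⁻ x in Ω, ‖w x ^ 2‖ₑ ≤ (∫⁻ x in Ω, ‖fderiv ℝ w x (EuclideanSpace.single 0 1)‖ₑ)
      * (∫⁻ x in Ω, ‖fderiv ℝ w x (EuclideanSpace.single 1 1)‖ₑ) := by
    rw [← lintegral_indicator ho.measurableSet, ← lintegral_indicator ho.measurableSet,
      ← lintegral_indicator ho.measurableSet, ← hf0, ← hf1,
      lintegral_pt (measurable_ind_enorm ho hsq), lintegral_pt_swap m0,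
      lintegral_pt m1]
    calc _ ≤ ∫⁻ a : ℝ, ∫⁻ b : ℝ, (∫⁻ s, f0 (pt s b)) * (∫⁻ s, f1 (pt a s)) := by
          refine lintegral_mono fun a => lintegral_mono fun b => ?_
          by_cases hx : pt a b ∈ Ω
          · simp only [indicator_of_mem hx]
            rw [pow_two, enorm_mul]
            exact mul_le_mul' (slice_left ho hb hw h0 hx) (slice_right ho hb hw h0 hx)
          · simp [indicator_of_notMem hx]
      _ = ∫⁻ a : ℝ, (∫⁻ b : ℝ, (∫⁻ s, f0 (pt s b))) * (∫⁻ s, f1 (pt a s)) := by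
          refine lintegral_congr fun a => ?_
          rw [lintegral_mul_const _ mA]
      _ = _ := by
          rw [lintegral_const_mul]
          exact Measurable.lintegral_prod_right' (f := fun p : ℝ × ℝ => f1 (pt p.1 p.2))
            (m1.comp mp)
  rw [← ofReal_integral_abs hb (continuous_dir hw _),
    ← ofReal_integral_abs hb (continuous_dir hw _),
    ← ofReal_integral_abs hb hsq, ← ENNReal.ofReal_mul (by positivity),
    ENNReal.ofReal_le_ofReal_iff (by positivity)] at hle
  simpa using hle

/-- Sup bound for functions vanishing on `∂Ω` together with their first derivative. -/
lemma abs_le_integral {Ω : Set E2} (ho : IsOpen Ω) (hb : Bornology.IsBounded Ω) {w w' : E2 → ℝ}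
    (hw : ContDiff ℝ 1 w) (h0 : ∀ x ∈ frontier Ω, w x = 0)
    (hw' : ContDiff ℝ 1 w') (hww' : ∀ x ∈ Ω, fderiv ℝ w x (EuclideanSpace.single 0 1) = w' x)
    (h0' : ∀ x ∈ frontier Ω, w' x = 0) {x : E2} (hx : x ∈ Ω) :
    |w x| ≤ ∫ x in Ω, |fderiv ℝ w' x (EuclideanSpace.single 1 1)| := by
  rw [← pt_eta x] at hx ⊢
  have h1 := slice_left ho hb hw h0 hx
  have h2 : ‖w (pt (x 0) (x 1))‖ₑ
      ≤ ∫⁻ x in Ω, ‖fderiv ℝ w' x (EuclideanSpace.single 1 1)‖ₑ := by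
    rw [← lintegral_indicator ho.measurableSet,
      lintegral_pt (measurable_ind_enorm ho (continuous_dir hw' _))]
    refine h1.trans (lintegral_mono fun s => ?_)
    by_cases hs : pt s (x 1) ∈ Ω
    · simp only [indicator_of_mem hs, hww' _ hs]
      exact slice_right ho hb hw' h0' hs
    · simp [indicator_of_notMem hs]
  rw [← ofReal_integral_abs hb (continuous_dir hw' _), ← ofReal_norm,
    ENNReal.ofReal_le_ofReal_iff (by positivity)] at h2
  simpa using h2

/-! ### Calculus on space-time -/

/-- Space-time `ℝ × ℝ²`. -/
abbrev Q := ℝ × E2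

/-- Directional derivative on space-time. -/
def pd (w : Q) (F : Q → ℝ) (p : Q) : ℝ := fderiv ℝ F p w

/-- The `i`-th spatial direction. -/
def ex (i : Fin 2) : Q := (0, EuclideanSpace.single i 1)

/-- The time direction. -/
def et : Q := (1, 0)

/-- Smoothness on space-time. -/
abbrev Sm (F : Q → ℝ) : Prop := ContDiff ℝ (⊤ : ℕ∞) F

lemma Sm.diff {F : Q → ℝ} (hF : Sm F) : Differentiable ℝ F := hF.differentiable (by simp)

@[fun_prop]
lemma contDiff_pd {w : Q} {F : Q → ℝ} (hF : ContDiff ℝ (⊤ : ℕ∞) F) :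
    ContDiff ℝ (⊤ : ℕ∞) (pd w F) := by
  have h : ContDiff ℝ (⊤ : ℕ∞) (fderiv ℝ F) := hF.fderiv_right (by exact_mod_cast le_top)
  exact h.clm_apply contDiff_const

lemma pd_add {w : Q} {F G : Q → ℝ} (hF : ContDiff ℝ (⊤ : ℕ∞) F)
    (hG : ContDiff ℝ (⊤ : ℕ∞) G) :
    pd w (fun p => F p + G p) = fun p => pd w F p + pd w G p := by
  funext p; simp [pd, fderiv_fun_add (Sm.diff hF p) (Sm.diff hG p)]

lemma pd_sub {w : Q} {F G : Q → ℝ} (hF : ContDiff ℝ (⊤ : ℕ∞) F)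
    (hG : ContDiff ℝ (⊤ : ℕ∞) G) :
    pd w (fun p => F p - G p) = fun p => pd w F p - pd w G p := by
  funext p; simp [pd, fderiv_fun_sub (Sm.diff hF p) (Sm.diff hG p)]

lemma pd_neg {w : Q} {F : Q → ℝ} :
    pd w (fun p => -F p) = fun p => -pd w F p := by
  funext p; simp [pd, fderiv_fun_neg]

lemma pd_mul {w : Q} {F G : Q → ℝ} (hF : ContDiff ℝ (⊤ : ℕ∞) F)
    (hG : ContDiff ℝ (⊤ : ℕ∞) G) :
    pd w (fun p => F p * G p) = fun p => pd w F p * G p + F p * pd w G p := by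
  funext p; simp [pd, fderiv_fun_mul (Sm.diff hF p) (Sm.diff hG p)]; ring

lemma pd_pow {w : Q} {F : Q → ℝ} (n : ℕ) (hF : ContDiff ℝ (⊤ : ℕ∞) F) :
    pd w (fun p => F p ^ n) = fun p => (n : ℝ) * F p ^ (n - 1) * pd w F p := by
  funext p
  have h := ((hasDerivAt_pow n (F p)).comp_hasFDerivAt p (Sm.diff hF p).hasFDerivAt).fderiv
  unfold pd
  have h' : (fun p => F p ^ n) = (fun x => x ^ n) ∘ F := rfl
  rw [h', h]; simp

lemma pd_const {w : Q} (c : ℝ) : pd w (fun _ => c) = fun _ => 0 := by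
  funext p; simp [pd]

lemma pd_comp {w : Q} {F : Q → ℝ} {θ θ' : ℝ → ℝ} (hθ : ∀ s, HasDerivAt θ (θ' s) s) (hF : ContDiff ℝ (⊤ : ℕ∞) F) :
    pd w (fun p => θ (F p)) = fun p => θ' (F p) * pd w F p := by
  funext p
  have h := ((hθ (F p)).comp_hasFDerivAt p (Sm.diff hF p).hasFDerivAt).fderiv
  have h' : (fun p => θ (F p)) = θ ∘ F := rfl
  unfold pd
  rw [h', h]; simp

lemma pd_comm {w w' : Q} {F : Q → ℝ} (hF : Sm F) : pd w (pd w' F) = pd w' (pd w F) := by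
  funext p
  have hd : Differentiable ℝ (fderiv ℝ F) :=
    (hF.fderiv_right (m := (⊤ : ℕ∞)) (by exact_mod_cast le_top)).differentiable (by simp)
  have key : ∀ a b : Q, pd a (pd b F) p = fderiv ℝ (fderiv ℝ F) p a b := by
    intro a b
    unfold pd
    rw [fderiv_clm_apply (hd p) (by fun_prop)]
    simp
  rw [key, key]
  have hs : IsSymmSndFDerivAt ℝ F p :=
    (hF.contDiffAt).isSymmSndFDerivAt (by
      simp only [minSmoothness_of_isRCLikeNormedField]
      exact WithTop.coe_le_coe.2 (le_top : (2 : ℕ∞) ≤ ⊤))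
  exact hs w w'

lemma pd_et_eq {F : Q → ℝ} (hF : Sm F) (t : ℝ) (x : E2) :
    HasDerivAt (fun s => F (s, x)) (pd et F (t, x)) t := by
  have h1 : HasDerivAt (fun s : ℝ => ((s, x) : Q)) (1, 0) t :=
    (hasDerivAt_id t).prodMk (hasDerivAt_const t x)
  exact (hF.diff (t, x)).hasFDerivAt.comp_hasDerivAt t h1

lemma pd_ex_eq' {F : Q → ℝ} (hF : Sm F) (t : ℝ) (x : E2) (v : E2) :
    fderiv ℝ (fun y => F (t, y)) x v = pd (0, v) F (t, x) := by
  have h1 : HasFDerivAt (fun y : E2 => ((t, y) : Q)) (ContinuousLinearMap.inr ℝ ℝ E2) x :=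
    hasFDerivAt_prodMk_right t x
  have := ((hF.diff (t, x)).hasFDerivAt.comp x h1).fderiv
  have h2 : (fun y => F (t, y)) = F ∘ fun y => (t, y) := rfl
  rw [h2, this]; simp [pd]

lemma pd_ex_eq {F : Q → ℝ} (hF : Sm F) (t : ℝ) (x : E2) (i : Fin 2) :
    fderiv ℝ (fun y => F (t, y)) x (EuclideanSpace.single i 1) = pd (ex i) F (t, x) :=
  pd_ex_eq' hF t x _

lemma Sm.slice {F : Q → ℝ} (hF : Sm F) (t : ℝ) {n : ℕ∞} : ContDiff ℝ n (fun y => F (t, y)) := by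
  have h2 : ContDiff ℝ (⊤ : ℕ∞) (fun y => F (t, y)) := hF.comp (contDiff_prodMk_right t)
  exact h2.of_le (by exact_mod_cast le_top)

lemma cont_slice {F : Q → ℝ} (hF : Continuous F) (t : ℝ) : Continuous fun y => F (t, y) := by
  fun_prop

/-- Vanishing on the boundary for all nonnegative times. -/
def B0 (Ω : Set E2) (F : Q → ℝ) : Prop := ∀ t, 0 ≤ t → ∀ x ∈ frontier Ω, F (t, x) = 0

/-- If `F(·, x)` vanishes for nonnegative times, so does its time derivative. -/
lemma pd_et_zero {F : Q → ℝ} (hF : Sm F) {x : E2} (h : ∀ t, 0 ≤ t → F (t, x) = 0) (t : ℝ)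
    (ht : 0 ≤ t) : pd et F (t, x) = 0 := by
  have h1 := (pd_et_eq hF t x).hasDerivWithinAt (s := Ici 0)
  have h2 : HasDerivWithinAt (fun s => F (s, x)) 0 (Ici 0) t :=
    (hasDerivWithinAt_const t (Ici (0:ℝ)) (0:ℝ)).congr (fun s hs => h s hs) (h t ht)
  exact (uniqueDiffOn_Ici (0:ℝ) t ht).eq_deriv _ h1 h2

lemma B0.dt {Ω : Set E2} {F : Q → ℝ} (hF : Sm F) (h : B0 Ω F) : B0 Ω (pd et F) :=
  fun t ht x hx => pd_et_zero hF (fun s hs => h s hs x hx) t ht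

lemma B0.mul {Ω : Set E2} {F : Q → ℝ} (h : B0 Ω F) (G : Q → ℝ) : B0 Ω (fun p => F p * G p) :=
  fun t ht x hx => by simp [h t ht x hx]

/-- Two smooth functions that agree on `[0,∞) × Ω` have the same derivatives there. -/
lemma pd_congr {Ω : Set E2} (ho : IsOpen Ω) {F G : Q → ℝ} (hF : Sm F) (hG : Sm G)
    (h : ∀ t, 0 ≤ t → ∀ x ∈ Ω, F (t, x) = G (t, x)) {t : ℝ} (ht : 0 ≤ t) {x : E2} (hx : x ∈ Ω)
    (i : Fin 2) : pd (ex i) F (t, x) = pd (ex i) G (t, x) := by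
  rw [← pd_ex_eq hF, ← pd_ex_eq hG]
  congr 1
  apply Filter.EventuallyEq.fderiv_eq
  filter_upwards [ho.mem_nhds hx] with y hy using h t ht y hy

lemma pd_et_congr {Ω : Set E2} {F G : Q → ℝ} (hF : Sm F) (hG : Sm G)
    (h : ∀ t, 0 ≤ t → ∀ x ∈ Ω, F (t, x) = G (t, x)) {t : ℝ} (ht : 0 ≤ t) {x : E2} (hx : x ∈ Ω) :
    pd et F (t, x) = pd et G (t, x) := by
  have := pd_et_zero (F := fun p => F p - G p) (hF.sub hG) (x := x)
    (fun s hs => by simp [h s hs x hx]) t ht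
  rw [pd_sub hF hG] at this
  linarith

/-! ### The domain and spatial integrals -/

/-- A bounded open set `Ω`, described by a smooth function `φ` that is negative on `Ω` and a
regular defining function of the boundary. -/
structure GoodDom (Ω : Set E2) (φ : E2 → ℝ) : Prop where
  isOpen : IsOpen Ω
  bdd : Bornology.IsBounded Ω
  smooth : ContDiff ℝ (⊤ : ℕ∞) φ
  neg : ∀ x ∈ Ω, φ x < 0
  zero : ∀ x ∈ frontier Ω, φ x = 0
  grad : ∀ x ∈ frontier Ω, fderiv ℝ φ x ≠ 0
  level : ∀ x ∈ frontier Ω, ∀ᶠ y in 𝓝 x, φ y = 0 → y ∈ frontier Ω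

lemma GoodDom.of_smooth {Ω : Set E2} (h : SmoothBoundedDomain Ω) : ∃ φ, GoodDom Ω φ := by
  obtain ⟨ho, hb, -, φ, hφ, hΩ, hg⟩ := h
  have hc : Continuous φ := hφ.continuous
  have hz : ∀ x ∈ frontier Ω, φ x = 0 := by
    intro x hx
    have h1 : φ x ≤ 0 := by
      have : closure Ω ⊆ {x | φ x ≤ 0} := by
        refine closure_minimal ?_ (isClosed_le hc continuous_const)
        rw [hΩ]; intro y hy; simp only [mem_ofPred_eq] at hy ⊢; exact hy.le
      exact this hx.1
    have h2 : ¬ φ x < 0 := by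
      have : x ∉ Ω := by have := hx.2; rwa [ho.interior_eq] at this
      rw [hΩ] at this; exact this
    linarith
  refine ⟨φ, ho, hb, hφ, fun x hx => by rw [hΩ] at hx; exact hx, hz, hg, ?_⟩
  intro x hx
  have hcf : Continuous (fderiv ℝ φ) := hφ.continuous_fderiv (by simp)
  filter_upwards [hcf.continuousAt.eventually_ne (hg x hx)] with y hy hy0
  rw [frontier, ho.interior_eq]
  refine ⟨?_, by rw [hΩ]; exact fun h => absurd hy0 (ne_of_lt h)⟩
  by_contra hcl
  -- otherwise `φ ≥ 0 = φ y` near `y`, and the derivative at this local minimum would vanish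
  have hmin : IsLocalMin φ y := by
    filter_upwards [isClosed_closure.isOpen_compl.mem_nhds hcl] with z hz'
    rw [hy0]
    by_contra hlt
    exact hz' (subset_closure (by rw [hΩ]; exact not_le.1 hlt))
  exact hy hmin.fderiv_eq_zero

/-- The spatial integral `∫_Ω F(t, x) dx`. -/
def J (Ω : Set E2) (F : Q → ℝ) (t : ℝ) : ℝ := ∫ x in Ω, F (t, x)

section J
variable {Ω : Set E2} {φ : E2 → ℝ}

lemma J_int (hD : GoodDom Ω φ) {F : Q → ℝ} (hF : Continuous F) (t : ℝ) :
    Integrable (fun x => F (t, x)) (volume.restrict Ω) :=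
  integrableOn_of_cont hD.bdd (cont_slice hF t)

lemma J_add (hD : GoodDom Ω φ) {F G : Q → ℝ} (hF : Continuous F) (hG : Continuous G) (t : ℝ) :
    J Ω (fun p => F p + G p) t = J Ω F t + J Ω G t :=
  integral_add (J_int hD hF t) (J_int hD hG t)

lemma J_sub (hD : GoodDom Ω φ) {F G : Q → ℝ} (hF : Continuous F) (hG : Continuous G) (t : ℝ) :
    J Ω (fun p => F p - G p) t = J Ω F t - J Ω G t :=
  integral_sub (J_int hD hF t) (J_int hD hG t)

lemma J_const_mul (c : ℝ) (F : Q → ℝ) (t : ℝ) :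
    J Ω (fun p => c * F p) t = c * J Ω F t :=
  integral_const_mul _ _

lemma J_mono (hD : GoodDom Ω φ) {F G : Q → ℝ} (hF : Continuous F) (hG : Continuous G) {t : ℝ}
    (h : ∀ x ∈ Ω, F (t, x) ≤ G (t, x)) : J Ω F t ≤ J Ω G t :=
  setIntegral_mono_on (J_int hD hF t) (J_int hD hG t) hD.isOpen.measurableSet h

lemma J_congr (hD : GoodDom Ω φ) {F G : Q → ℝ} {t : ℝ}
    (h : ∀ x ∈ Ω, F (t, x) = G (t, x)) : J Ω F t = J Ω G t :=
  setIntegral_congr_fun hD.isOpen.measurableSet h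

lemma J_nonneg {F : Q → ℝ} (h : ∀ p, 0 ≤ F p) (t : ℝ) : 0 ≤ J Ω F t :=
  integral_nonneg fun x => h (t, x)

lemma abs_J_le (F : Q → ℝ) (t : ℝ) : |J Ω F t| ≤ J Ω (fun p => |F p|) t :=
  abs_integral_le_integral_abs

/-- The divergence theorem. -/
lemma J_div (hD : GoodDom Ω φ) {F : Q → ℝ} {V : Fin 2 → Q → ℝ} (hV : ∀ i, Sm (V i))
    (hB : ∀ i, B0 Ω (V i)) {t : ℝ} (ht : 0 ≤ t)
    (h : ∀ x ∈ Ω, F (t, x) = pd (ex 0) (V 0) (t, x) + pd (ex 1) (V 1) (t, x)) : J Ω F t = 0 := by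
  have h0 : ∀ i, J Ω (pd (ex i) (V i)) t = 0 := by
    intro i
    have := integral_fderiv_eq_zero' hD.isOpen hD.bdd
      (hD.smooth.of_le (by exact_mod_cast le_top)) hD.neg hD.zero
      (g := fun y => V i (t, y)) ((hV i).slice t (n := 1)) (hB i t ht)
      (EuclideanSpace.single i 1)
    simp_rw [pd_ex_eq (hV i)] at this
    exact this
  have hc : ∀ i, Continuous (pd (ex i) (V i)) := fun i => (contDiff_pd (hV i)).continuous
  rw [J_congr hD (G := fun p => pd (ex 0) (V 0) p + pd (ex 1) (V 1) p) h, J_add hD (hc 0) (hc 1),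
    h0, h0, add_zero]

lemma J_hasDerivAt (hD : GoodDom Ω φ) {F : Q → ℝ} (hF : Sm F) (t : ℝ) :
    HasDerivAt (J Ω F) (J Ω (pd et F) t) t := by
  have hc : Continuous (pd et F) := (contDiff_pd hF).continuous
  have hK : IsCompact (Icc (t - 1) (t + 1) ×ˢ closure Ω) :=
    isCompact_Icc.prod hD.bdd.isCompact_closure
  obtain ⟨M, hM⟩ := hK.exists_bound_of_continuousOn hc.continuousOn
  have hfin : volume Ω ≠ ⊤ := hD.bdd.measure_lt_top.ne
  refine (hasDerivAt_integral_of_dominated_loc_of_deriv_le (μ := volume.restrict Ω)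
    (F := fun s x => F (s, x)) (F' := fun s x => pd et F (s, x)) (bound := fun _ => M)
    (s := Icc (t - 1) (t + 1)) (Icc_mem_nhds (by linarith) (by linarith)) ?_ ?_ ?_ ?_ ?_ ?_).2
  · exact Eventually.of_forall fun s => (cont_slice hF.continuous s).aestronglyMeasurable
  · exact J_int hD hF.continuous t
  · exact (cont_slice hc t).aestronglyMeasurable
  · refine (ae_restrict_iff' hD.isOpen.measurableSet).2 (Eventually.of_forall fun x hx s hs => ?_)
    exact hM (s, x) ⟨hs, subset_closure hx⟩
  · exact integrableOn_const hfin
  · exact Eventually.of_forall fun x s _ => pd_et_eq hF s x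

lemma J_continuous (hD : GoodDom Ω φ) {F : Q → ℝ} (hF : Sm F) : Continuous (J Ω F) :=
  continuous_iff_continuousAt.2 fun t => (J_hasDerivAt hD hF t).continuousAt

end J

/-! ### Dyadic Lebesgue norms -/

@[fun_prop]
lemma continuous_pd {w : Q} {F : Q → ℝ} (hF : ContDiff ℝ (⊤ : ℕ∞) F) : Continuous (pd w F) :=
  (contDiff_pd hF).continuous

/-- `nn Ω k F t` is the norm of `F(t, ·)` in `L^{2^k}(Ω)`, defined recursively by
`‖F‖_{2q} = ‖F²‖_q^{1/2}`. -/
def nn (Ω : Set E2) : ℕ → (Q → ℝ) → ℝ → ℝ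
  | 0, F, t => J Ω (fun p => |F p|) t
  | k + 1, F, t => √(nn Ω k (fun p => F p ^ 2) t)

section nn
variable {Ω : Set E2} {φ : E2 → ℝ}

lemma nn_nonneg (k : ℕ) (F : Q → ℝ) (t : ℝ) : 0 ≤ nn Ω k F t := by
  cases k
  · exact J_nonneg (fun p => abs_nonneg _) t
  · exact sqrt_nonneg _

lemma nn_sq (k : ℕ) (F : Q → ℝ) (t : ℝ) : nn Ω (k + 1) F t ^ 2 = nn Ω k (fun p => F p ^ 2) t :=
  sq_sqrt (nn_nonneg _ _ _)

lemma nn_one_sq (F : Q → ℝ) (t : ℝ) : nn Ω 1 F t ^ 2 = J Ω (fun p => F p ^ 2) t := by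
  rw [nn_sq]; simp [nn]

lemma nn_mono (hD : GoodDom Ω φ) (k : ℕ) {F G : Q → ℝ} (hF : Continuous F) (hG : Continuous G)
    {t : ℝ} (h : ∀ x ∈ Ω, |F (t, x)| ≤ |G (t, x)|) : nn Ω k F t ≤ nn Ω k G t := by
  induction k generalizing F G with
  | zero => exact J_mono hD hF.abs hG.abs h
  | succ k ih =>
    refine sqrt_le_sqrt (ih (hF.pow 2) (hG.pow 2) fun x hx => ?_)
    simp only [abs_pow]
    exact pow_le_pow_left₀ (abs_nonneg _) (h x hx) 2

lemma nn_const_mul (k : ℕ) (c : ℝ) (F : Q → ℝ) (t : ℝ) :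
    nn Ω k (fun p => c * F p) t = |c| * nn Ω k F t := by
  induction k generalizing F c with
  | zero => simp only [nn, abs_mul, J_const_mul]
  | succ k ih =>
    simp only [nn, mul_pow, ih]
    rw [sqrt_mul (abs_nonneg _), abs_pow, sqrt_sq (abs_nonneg _)]

lemma cauchy_schwarz (hD : GoodDom Ω φ) {F G : Q → ℝ} (hF : Continuous F) (hG : Continuous G)
    (t : ℝ) : J Ω (fun p => |F p * G p|) t ≤ nn Ω 1 F t * nn Ω 1 G t := by
  have h0 : 0 ≤ J Ω (fun p => |F p * G p|) t := J_nonneg (fun p => abs_nonneg _) t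
  -- nonnegativity of the quadratic `s ↦ ∫ (s|F| - |G|)²`
  have hq : ∀ s : ℝ, 0 ≤ (nn Ω 1 F t ^ 2) * (s * s)
      + (-2 * J Ω (fun p => |F p * G p|) t) * s + nn Ω 1 G t ^ 2 := by
    intro s
    have h1 : 0 ≤ J Ω (fun p => (s * |F p| - |G p|) ^ 2) t := J_nonneg (fun p => sq_nonneg _) t
    have h2 : J Ω (fun p => (s * |F p| - |G p|) ^ 2) t
        = (s * s) * J Ω (fun p => F p ^ 2) t + (-2 * s) * J Ω (fun p => |F p * G p|) t
          + J Ω (fun p => G p ^ 2) t := by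
      rw [← J_const_mul, ← J_const_mul, ← J_add hD (by fun_prop) (by fun_prop),
        ← J_add hD (by fun_prop) (by fun_prop)]
      congr 1; funext p
      rw [abs_mul, ← sq_abs (F p), ← sq_abs (G p)]; ring
    rw [nn_one_sq, nn_one_sq]; linarith
  have hd := discrim_le_zero hq
  rw [discrim] at hd
  refine abs_le_of_sq_le_sq' (a := J Ω (fun p => |F p * G p|) t) ?_
    (mul_nonneg (nn_nonneg _ _ _) (nn_nonneg _ _ _)) |>.2
  nlinarith

lemma nn_mul_le (hD : GoodDom Ω φ) (k : ℕ) {F G : Q → ℝ} (hF : Continuous F) (hG : Continuous G)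
    (t : ℝ) : nn Ω k (fun p => F p * G p) t ≤ nn Ω (k + 1) F t * nn Ω (k + 1) G t := by
  induction k generalizing F G with
  | zero => exact cauchy_schwarz hD hF hG t
  | succ k ih =>
    change √_ ≤ √_ * √_
    rw [← sqrt_mul (nn_nonneg _ _ _)]
    refine sqrt_le_sqrt ?_
    simp only [mul_pow]
    exact ih (hF.pow 2) (hG.pow 2)

lemma nn_add_le (hD : GoodDom Ω φ) (k : ℕ) : ∃ C, 0 ≤ C ∧ ∀ {F G : Q → ℝ}, Continuous F →
    Continuous G → ∀ t, nn Ω k (fun p => F p + G p) t ≤ C * (nn Ω k F t + nn Ω k G t) := by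
  induction k with
  | zero =>
    refine ⟨1, zero_le_one, fun {F G} hF hG t => ?_⟩
    rw [one_mul]
    simp only [nn]
    rw [← J_add hD hF.abs hG.abs]
    exact J_mono hD (by fun_prop) (by fun_prop) fun x _ => abs_add_le _ _
  | succ k ih =>
    obtain ⟨C, hC, h⟩ := ih
    refine ⟨√(2 * C), sqrt_nonneg _, fun {F G} hF hG t => ?_⟩
    have h1 : nn Ω k (fun p => (F p + G p) ^ 2) t
        ≤ 2 * (C * (nn Ω k (fun p => F p ^ 2) t + nn Ω k (fun p => G p ^ 2) t)) := by
      refine le_trans (nn_mono hD k (G := fun p => 2 * (F p ^ 2 + G p ^ 2)) (by fun_prop)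
        (by fun_prop) fun x _ => ?_) ?_
      · rw [abs_of_nonneg (by positivity), abs_of_nonneg (by positivity)]
        nlinarith [sq_nonneg (F (t, x) - G (t, x))]
      · rw [nn_const_mul, abs_two]
        gcongr
        exact h (hF.pow 2) (hG.pow 2) t
    rw [← nn_sq k F, ← nn_sq k G] at h1
    have hF0 := nn_nonneg (Ω := Ω) (k + 1) F t
    have hG0 := nn_nonneg (Ω := Ω) (k + 1) G t
    rw [nn, sqrt_le_left (by positivity), mul_pow, sq_sqrt (by positivity)]
    refine h1.trans ?_
    have : nn Ω (k + 1) F t ^ 2 + nn Ω (k + 1) G t ^ 2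
        ≤ (nn Ω (k + 1) F t + nn Ω (k + 1) G t) ^ 2 := by nlinarith
    nlinarith

/-- The filter of nonnegative times; `f =O[T0] g` is a bound on `[0,∞)` with some constant. -/
abbrev T0 : Filter ℝ := 𝓟 (Ici 0)

/-- The filter expressing bounds that hold on all of `[0,∞) × Ω`. -/
abbrev X0 (Ω : Set E2) : Filter Q := 𝓟 (Ici 0 ×ˢ Ω)

lemma bigO_T0 {f g : ℝ → ℝ} (C : ℝ) (h : ∀ t, 0 ≤ t → |f t| ≤ C * |g t|) : f =O[T0] g :=
  IsBigO.of_bound C (eventually_principal.2 fun t ht => h t ht)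

lemma bigO_X0 {F G : Q → ℝ} (C : ℝ) (h : ∀ t, 0 ≤ t → ∀ x ∈ Ω, |F (t, x)| ≤ C * |G (t, x)|) :
    F =O[X0 Ω] G :=
  IsBigO.of_bound C (eventually_principal.2 fun p hp => h p.1 hp.1 p.2 hp.2)

lemma exists_T0 {f g : ℝ → ℝ} (h : f =O[T0] g) : ∃ C, 0 < C ∧ ∀ t, 0 ≤ t → |f t| ≤ C * |g t| := by
  obtain ⟨C, hC, h⟩ := h.exists_pos
  exact ⟨C, hC, fun t ht => eventually_principal.1 h.bound t ht⟩

lemma exists_X0 {F G : Q → ℝ} (h : F =O[X0 Ω] G) :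
    ∃ C, 0 < C ∧ ∀ t, 0 ≤ t → ∀ x ∈ Ω, |F (t, x)| ≤ C * |G (t, x)| := by
  obtain ⟨C, hC, h⟩ := h.exists_pos
  exact ⟨C, hC, fun t ht x hx => eventually_principal.1 h.bound (t, x) ⟨ht, hx⟩⟩

lemma nn_bigO (hD : GoodDom Ω φ) (k : ℕ) {F G : Q → ℝ} (hF : Continuous F) (hG : Continuous G)
    (h : F =O[X0 Ω] G) : nn Ω k F =O[T0] nn Ω k G := by
  obtain ⟨C, hC, h⟩ := exists_X0 h
  refine bigO_T0 C fun t ht => ?_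
  rw [abs_of_nonneg (nn_nonneg _ _ _), abs_of_nonneg (nn_nonneg _ _ _), ← abs_of_pos hC,
    ← nn_const_mul]
  refine nn_mono hD k hF (by fun_prop) fun x hx => ?_
  rw [abs_mul, abs_of_pos hC]
  exact h t ht x hx

lemma nn_mul_bigO (hD : GoodDom Ω φ) (k : ℕ) {F G : Q → ℝ} (hF : Continuous F)
    (hG : Continuous G) {f g : ℝ → ℝ} (h1 : nn Ω (k + 1) F =O[T0] f)
    (h2 : nn Ω (k + 1) G =O[T0] g) :
    nn Ω k (fun p => F p * G p) =O[T0] fun t => f t * g t := by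
  refine IsBigO.trans (bigO_T0 1 fun t _ => ?_) (h1.mul h2)
  rw [abs_of_nonneg (nn_nonneg _ _ _), one_mul]
  exact (nn_mul_le hD k hF hG t).trans (le_abs_self _)

lemma nn_add_bigO (hD : GoodDom Ω φ) (k : ℕ) {F G : Q → ℝ} (hF : Continuous F)
    (hG : Continuous G) {f : ℝ → ℝ} (h1 : nn Ω k F =O[T0] f)
    (h2 : nn Ω k G =O[T0] f) :
    nn Ω k (fun p => F p + G p) =O[T0] f := by
  obtain ⟨C, hC, h⟩ := nn_add_le hD k
  refine IsBigO.trans (bigO_T0 C fun t _ => ?_) (h1.add h2)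
  rw [abs_of_nonneg (nn_nonneg _ _ _)]
  refine (h hF hG t).trans ?_
  gcongr
  exact le_abs_self _

/-- A factor bounded uniformly in space can be pulled out of the norm. -/
lemma nn_sup_mul (hD : GoodDom Ω φ) (k : ℕ) {F G : Q → ℝ} (hF : Continuous F)
    (hG : Continuous G) {f g : ℝ → ℝ} (h1 : F =O[X0 Ω] fun p => f p.1)
    (h2 : nn Ω k G =O[T0] g) :
    nn Ω k (fun p => F p * G p) =O[T0] fun t => f t * g t := by
  obtain ⟨C, hC, h⟩ := exists_X0 h1
  have : nn Ω k (fun p => F p * G p) =O[T0] fun t => f t * nn Ω k G t := by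
    refine bigO_T0 C fun t ht => ?_
    rw [abs_of_nonneg (nn_nonneg _ _ _), abs_mul, abs_of_nonneg (nn_nonneg _ G _), ← mul_assoc]
    have h3 : C * |f t| = abs (C * |f t|) := (abs_of_nonneg (by positivity)).symm
    rw [h3, ← nn_const_mul]
    refine nn_mono hD k (by fun_prop) (by fun_prop) fun x hx => ?_
    rw [abs_mul, abs_mul, ← h3]
    gcongr
    exact h t ht x hx
  exact this.trans ((isBigO_refl _ _).mul h2)

lemma nn_const_bigO (k : ℕ) : nn Ω k (fun _ => 1) =O[T0] fun _ => (1 : ℝ) := by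
  refine bigO_T0 (nn Ω k (fun _ => 1) 0) fun t _ => ?_
  rw [abs_of_nonneg (nn_nonneg _ _ _), abs_one, mul_one]
  apply le_of_eq
  have : ∀ c : ℝ, nn Ω k (fun _ => c) t = nn Ω k (fun _ => c) 0 := by
    induction k with
    | zero => intro c; rfl
    | succ k ih => intro c; simp only [nn, ih]
  exact this 1

lemma nn_step_bigO (hD : GoodDom Ω φ) (k : ℕ) {F : Q → ℝ} (hF : Continuous F) :
    nn Ω k F =O[T0] nn Ω (k + 1) F := by
  have := nn_mul_bigO hD k (continuous_const (y := (1 : ℝ))) hF (nn_const_bigO (k + 1))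
    (isBigO_refl _ _)
  simpa using this

lemma J_bigO (F : Q → ℝ) : J Ω F =O[T0] nn Ω 0 F :=
  bigO_T0 1 fun t _ => by
    rw [one_mul, abs_of_nonneg (nn_nonneg _ F _)]
    exact abs_J_le F t

end nn

/-! ### Sobolev inequalities for functions vanishing on the boundary -/

section Sobolev
variable {Ω : Set E2} {φ : E2 → ℝ}

/-- The size of the spatial gradient in `L²(Ω)`. -/
def gr (Ω : Set E2) (g : Q → ℝ) (t : ℝ) : ℝ := nn Ω 1 (pd (ex 0) g) t + nn Ω 1 (pd (ex 1) g) t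

lemma gr_nonneg (g : Q → ℝ) (t : ℝ) : 0 ≤ gr Ω g t := add_nonneg (nn_nonneg _ _ _) (nn_nonneg _ _ _)

lemma nn_le_gr (i : Fin 2) (g : Q → ℝ) (t : ℝ) : nn Ω 1 (pd (ex i) g) t ≤ gr Ω g t := by
  have h0 := nn_nonneg (Ω := Ω) 1 (pd (ex 0) g) t
  have h1 := nn_nonneg (Ω := Ω) 1 (pd (ex 1) g) t
  unfold gr
  fin_cases i
  · simpa using h1
  · simpa using h0

lemma gr_bigO {g : Q → ℝ} {f : ℝ → ℝ} (h : ∀ i, nn Ω 1 (pd (ex i) g) =O[T0] f) :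
    gr Ω g =O[T0] f := (h 0).add (h 1)

lemma B0.pow {F : Q → ℝ} (h : B0 Ω F) {n : ℕ} (hn : n ≠ 0) : B0 Ω (fun p => F p ^ n) :=
  fun t ht x hx => by simp [h t ht x hx, hn]

/-- `‖gⁿ⁺¹‖₂ ≤ (n+1) ‖gⁿ‖₂ ‖∇g‖₂`: the engine of all Sobolev inequalities below. -/
lemma nn_pow_succ_le (hD : GoodDom Ω φ) {g : Q → ℝ} (hg : Sm g) (h0 : B0 Ω g) (n : ℕ) {t : ℝ}
    (ht : 0 ≤ t) : nn Ω 1 (fun p => g p ^ (n + 1)) t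
      ≤ (n + 1) * nn Ω 1 (fun p => g p ^ n) t * gr Ω g t := by
  have hw : Sm (fun p => g p ^ (n + 1)) := hg.pow _
  have h1 := integral_sq_le hD.isOpen hD.bdd (w := fun x => g (t, x) ^ (n + 1))
    (hw.slice t (n := 1)) (fun x hx => by simp [h0 t ht x hx])
  have h2 : ∀ i, ∫ x in Ω, |fderiv ℝ (fun x => g (t, x) ^ (n + 1)) x (EuclideanSpace.single i 1)|
      ≤ (n + 1) * nn Ω 1 (fun p => g p ^ n) t * gr Ω g t := by
    intro i
    simp_rw [pd_ex_eq hw, pd_pow (n + 1) hg]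
    have h3 : nn Ω 0 (fun p => (((n + 1 : ℕ) : ℝ) * g p ^ n) * pd (ex i) g p) t
        ≤ (n + 1) * nn Ω 1 (fun p => g p ^ n) t * gr Ω g t := by
      refine (nn_mul_le hD 0 (by have := hg.continuous; fun_prop) (by fun_prop) t).trans ?_
      rw [nn_const_mul, abs_of_nonneg (by positivity)]
      push_cast
      have := nn_nonneg (Ω := Ω) 1 (fun p => g p ^ n) t
      gcongr
      exact nn_le_gr i g t
    exact h3
  have h4 : nn Ω 1 (fun p => g p ^ (n + 1)) t ^ 2
      ≤ ((n + 1) * nn Ω 1 (fun p => g p ^ n) t * gr Ω g t) ^ 2 := by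
    rw [nn_one_sq, sq ((n + 1) * nn Ω 1 (fun p => g p ^ n) t * gr Ω g t)]
    refine h1.trans (mul_le_mul (h2 0) (h2 1) (integral_nonneg fun _ => abs_nonneg _) ?_)
    have := nn_nonneg (Ω := Ω) 1 (fun p => g p ^ n) t
    have := gr_nonneg (Ω := Ω) g t
    positivity
  refine (abs_le_of_sq_le_sq' h4 ?_).2
  have := nn_nonneg (Ω := Ω) 1 (fun p => g p ^ n) t
  have := gr_nonneg (Ω := Ω) g t
  positivity

lemma nn_pow_bigO (hD : GoodDom Ω φ) {g : Q → ℝ} (hg : Sm g) (h0 : B0 Ω g) (n : ℕ) :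
    nn Ω 1 (fun p => g p ^ n) =O[T0] fun t => gr Ω g t ^ n := by
  induction n with
  | zero => simpa using nn_const_bigO 1
  | succ n ih =>
    have : nn Ω 1 (fun p => g p ^ (n + 1)) =O[T0]
        fun t => nn Ω 1 (fun p => g p ^ n) t * gr Ω g t := by
      refine bigO_T0 (n + 1) fun t ht => ?_
      rw [abs_of_nonneg (nn_nonneg _ _ _),
        abs_of_nonneg (mul_nonneg (nn_nonneg _ _ _) (gr_nonneg _ _)), ← mul_assoc]
      exact nn_pow_succ_le hD hg h0 n ht
    refine this.trans ?_
    simp only [pow_succ]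
    exact ih.mul (isBigO_refl _ _)

/-- The Poincaré inequality. -/
lemma nn_one_gr (hD : GoodDom Ω φ) {g : Q → ℝ} (hg : Sm g) (h0 : B0 Ω g) :
    nn Ω 1 g =O[T0] gr Ω g := by
  simpa using nn_pow_bigO hD hg h0 1

/-- Ladyzhenskaya's inequality. -/
lemma nn_two_sq (hD : GoodDom Ω φ) {g : Q → ℝ} (hg : Sm g) (h0 : B0 Ω g) :
    (fun t => nn Ω 2 g t ^ 2) =O[T0] fun t => nn Ω 1 g t * gr Ω g t := by
  refine bigO_T0 2 fun t ht => ?_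
  rw [abs_of_nonneg (by positivity),
        abs_of_nonneg (mul_nonneg (nn_nonneg _ _ _) (gr_nonneg _ _)), ← mul_assoc, nn_sq]
  have := nn_pow_succ_le hD hg h0 1 ht
  norm_num at this
  exact this

lemma bigO_of_sq {f g : ℝ → ℝ} {l : Filter ℝ} (h : (fun t => f t ^ 2) =O[l] fun t => g t ^ 2) :
    f =O[l] g := IsBigO.of_pow two_ne_zero h

lemma nn_two_gr (hD : GoodDom Ω φ) {g : Q → ℝ} (hg : Sm g) (h0 : B0 Ω g) :
    nn Ω 2 g =O[T0] gr Ω g := by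
  refine bigO_of_sq ?_
  simp_rw [nn_sq 1]
  exact nn_pow_bigO hD hg h0 2

lemma nn_three_gr (hD : GoodDom Ω φ) {g : Q → ℝ} (hg : Sm g) (h0 : B0 Ω g) :
    nn Ω 3 g =O[T0] gr Ω g := by
  refine bigO_of_sq (bigO_of_sq ?_)
  simp_rw [nn_sq 2, nn_sq 1, ← pow_mul]
  exact nn_pow_bigO hD hg h0 4

/-- The pointwise bound by the mixed second derivative. -/
lemma sup_le_mixed (hD : GoodDom Ω φ) {g : Q → ℝ} (hg : Sm g) (h0 : B0 Ω g)
    (h1 : B0 Ω (pd (ex 0) g)) :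
    g =O[X0 Ω] fun p => nn Ω 0 (pd (ex 1) (pd (ex 0) g)) p.1 := by
  refine bigO_X0 1 fun t ht x hx => ?_
  rw [one_mul, abs_of_nonneg (nn_nonneg _ _ _)]
  have := abs_le_integral hD.isOpen hD.bdd (hg.slice t (n := 1)) (h0 t ht)
    (w' := fun y => pd (ex 0) g (t, y)) (Sm.slice (contDiff_pd hg) t (n := 1))
    (fun y _ => pd_ex_eq hg t y 0) (h1 t ht) hx
  simp_rw [pd_ex_eq (contDiff_pd hg)] at this
  exact this

lemma nn_one_continuous (hD : GoodDom Ω φ) {F : Q → ℝ} (hF : Sm F) : Continuous (nn Ω 1 F) := by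
  have h : nn Ω 1 F = fun t => √(J Ω (fun p => F p ^ 2) t) := by
    funext t; rw [← nn_one_sq, sqrt_sq (nn_nonneg _ _ _)]
  rw [h]
  exact (J_continuous hD (hF.pow 2)).sqrt

/-! ### Time-independent coefficients -/

/-- A smooth time-independent function on space-time. -/
structure Stat (F : Q → ℝ) : Prop where
  sm : ContDiff ℝ (⊤ : ℕ∞) F
  inv : ∀ t x, F (t, x) = F (0, x)

lemma Stat.lift {c : E2 → ℝ} (hc : ContDiff ℝ (⊤ : ℕ∞) c) : Stat (fun p => c p.2) :=
  ⟨hc.comp contDiff_snd, fun _ _ => rfl⟩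

lemma Stat.pd {F : Q → ℝ} (h : Stat F) (i : Fin 2) : Stat (pd (ex i) F) := by
  refine ⟨contDiff_pd h.sm, fun t x => ?_⟩
  rw [← pd_ex_eq h.sm, ← pd_ex_eq h.sm]
  have : (fun y => F (t, y)) = fun y => F (0, y) := funext (h.inv t)
  rw [this]

lemma Stat.dt {F : Q → ℝ} (h : Stat F) : _root_.pd et F = fun _ => 0 := by
  funext p
  obtain ⟨t, x⟩ := p
  have h1 := pd_et_eq h.sm t x
  have h2 : (fun s => F (s, x)) = fun _ => F (0, x) := funext fun s => h.inv s x
  rw [h2] at h1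
  exact h1.unique (hasDerivAt_const t _)

lemma Stat.mul {F G : Q → ℝ} (hF : Stat F) (hG : Stat G) : Stat (fun p => F p * G p) :=
  ⟨hF.sm.mul hG.sm, fun t x => by simp only [hF.inv t x, hG.inv t x]⟩

lemma Stat.add {F G : Q → ℝ} (hF : Stat F) (hG : Stat G) : Stat (fun p => F p + G p) :=
  ⟨hF.sm.add hG.sm, fun t x => by simp only [hF.inv t x, hG.inv t x]⟩

lemma Stat.neg {F : Q → ℝ} (hF : Stat F) : Stat (fun p => -F p) :=
  ⟨hF.sm.neg, fun t x => by simp only [hF.inv t x]⟩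

lemma Stat.const (c : ℝ) : Stat (fun _ => c) := ⟨contDiff_const, fun _ _ => rfl⟩

lemma Stat.bigO (hD : GoodDom Ω φ) {F : Q → ℝ} (h : Stat F) : F =O[X0 Ω] fun _ => (1 : ℝ) := by
  obtain ⟨M, -, hM⟩ := exists_bound_on hD.bdd (cont_slice h.sm.continuous 0)
  refine bigO_X0 M fun t _ x hx => ?_
  rw [h.inv, abs_one, mul_one]
  exact hM x hx

lemma Stat.mul_bigO (hD : GoodDom Ω φ) {F : Q → ℝ} (h : Stat F) {G K : Q → ℝ}
    (hG : G =O[X0 Ω] K) : (fun p => F p * G p) =O[X0 Ω] K := by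
  simpa using (h.bigO hD).mul hG

end Sobolev

/-! ### Absorption and Gronwall's inequality -/

/-- `T` can be absorbed: it is bounded by `ε G² + C_ε a` for every `ε > 0`. -/
def Absorb (G a T : ℝ → ℝ) : Prop :=
  ∀ ε, 0 < ε → ∃ C, 0 ≤ C ∧ ∀ t, 0 ≤ t → |T t| ≤ ε * G t ^ 2 + C * a t

lemma Absorb.of_bigO {G a T : ℝ → ℝ} (ha : ∀ t, 0 ≤ a t) (h : T =O[T0] a) : Absorb G a T := by
  intro ε hε
  obtain ⟨C, hC, h⟩ := exists_T0 h
  refine ⟨C, hC.le, fun t ht => (h t ht).trans ?_⟩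
  rw [abs_of_nonneg (ha t)]
  have : 0 ≤ ε * G t ^ 2 := by positivity
  linarith

lemma Absorb.add {G a T T' : ℝ → ℝ} (h : Absorb G a T) (h' : Absorb G a T') :
    Absorb G a (fun t => T t + T' t) := by
  intro ε hε
  obtain ⟨C, hC, h⟩ := h (ε / 2) (by positivity)
  obtain ⟨C', hC', h'⟩ := h' (ε / 2) (by positivity)
  refine ⟨C + C', by positivity, fun t ht => (abs_add_le _ _).trans ?_⟩
  have := h t ht; have := h' t ht
  linarith

lemma Absorb.mono {G a T T' : ℝ → ℝ} (h : Absorb G a T) (hT : T' =O[T0] T) : Absorb G a T' := by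
  intro ε hε
  obtain ⟨K, hK, hT⟩ := exists_T0 hT
  obtain ⟨C, hC, h⟩ := h (ε / K) (by positivity)
  refine ⟨K * C, by positivity, fun t ht => (hT t ht).trans ?_⟩
  have := mul_le_mul_of_nonneg_left (h t ht) hK.le
  have e : K * (ε / K * G t ^ 2 + C * a t) = ε * G t ^ 2 + K * C * a t := by field_simp
  linarith

/-- Young's inequality. -/
lemma Absorb.young {G a A : ℝ → ℝ} (h : Absorb G a (fun t => A t ^ 2)) : Absorb G a (fun t => G t * A t) := by
  intro ε hε
  obtain ⟨C, hC, h⟩ := h (ε ^ 2) (by positivity)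
  refine ⟨C / (2 * ε), by positivity, fun t ht => ?_⟩
  have h1 := h t ht
  rw [abs_of_nonneg (sq_nonneg (A t))] at h1
  have h2 : |G t * A t| ≤ (ε * G t ^ 2 + A t ^ 2 / ε) / 2 := by
    rw [abs_mul, ← sq_abs (G t), ← sq_abs (A t)]
    have : ε * |G t| ^ 2 + |A t| ^ 2 / ε - 2 * (|G t| * |A t|) = (ε * |G t| - |A t|) ^ 2 / ε := by
      field_simp; ring
    have h3 : 0 ≤ (ε * |G t| - |A t|) ^ 2 / ε := by positivity
    linarith
  refine h2.trans ?_
  have h4 : A t ^ 2 / ε ≤ (ε ^ 2 * G t ^ 2 + C * a t) / ε := by gcongr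
  have h5 : (ε ^ 2 * G t ^ 2 + C * a t) / ε = ε * G t ^ 2 + 2 * (C / (2 * ε) * a t) := by
    field_simp
  linarith

lemma Absorb.young' {G a A T : ℝ → ℝ} (ha : ∀ t, 0 ≤ a t) (hT : T =O[T0] fun t => G t * A t)
    (h : (fun t => A t ^ 2) =O[T0] a) : Absorb G a T :=
  (Absorb.young (Absorb.of_bigO ha h)).mono hT

/-- Bounded integrals over `[0, T]`, uniformly in `T`. -/
def L1 (a : ℝ → ℝ) : Prop := ∃ M, ∀ T, 0 ≤ T → ∫ t in (0:ℝ)..T, a t ≤ M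

lemma L1.mono {a b : ℝ → ℝ} (hb : L1 b) (hca : Continuous a) (hcb : Continuous b) {C : ℝ}
    (hC : 0 ≤ C) (h : ∀ t, 0 ≤ t → a t ≤ C * b t) : L1 a := by
  obtain ⟨M, hM⟩ := hb
  refine ⟨C * M, fun T hT => ?_⟩
  calc ∫ t in (0:ℝ)..T, a t ≤ ∫ t in (0:ℝ)..T, C * b t :=
        intervalIntegral.integral_mono_on hT (hca.intervalIntegrable _ _)
          ((hcb.const_mul C).intervalIntegrable _ _) fun t ht => h t ht.1
    _ = C * ∫ t in (0:ℝ)..T, b t := by simp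
    _ ≤ C * M := by have := hM T hT; gcongr

lemma L1.add {a b : ℝ → ℝ} (ha : L1 a) (hb : L1 b) (hca : Continuous a) (hcb : Continuous b) :
    L1 (fun t => a t + b t) := by
  obtain ⟨M, hM⟩ := ha
  obtain ⟨K, hK⟩ := hb
  refine ⟨M + K, fun T hT => ?_⟩
  rw [intervalIntegral.integral_add (hca.intervalIntegrable _ _) (hcb.intervalIntegrable _ _)]
  exact add_le_add (hM T hT) (hK T hT)

lemma le_of_deriv_nonpos {W W' : ℝ → ℝ} (h : ∀ t, HasDerivAt W (W' t) t)
    (h' : ∀ t, 0 ≤ t → W' t ≤ 0) {T : ℝ} (hT : 0 ≤ T) : W T ≤ W 0 := by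
  have : AntitoneOn W (Ici 0) := by
    refine antitoneOn_of_deriv_nonpos (convex_Ici 0)
      (fun t _ => (h t).continuousAt.continuousWithinAt)
      (fun t _ => (h t).differentiableAt.differentiableWithinAt) fun t ht => ?_
    rw [(h t).deriv]
    rw [interior_Ici] at ht
    exact h' t (le_of_lt ht)
  exact this (mem_Ici.2 le_rfl) hT hT

lemma gronwall {Y Y' Z a : ℝ → ℝ} (hY : ∀ t, HasDerivAt Y (Y' t) t) (hY0 : ∀ t, 0 ≤ t → 0 ≤ Y t)
    (hZ : Continuous Z) (hZ0 : ∀ t, 0 ≤ Z t) (ha : Continuous a) (ha0 : ∀ t, 0 ≤ a t)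
    (haL : L1 a) (h : ∀ t, 0 ≤ t → Y' t + Z t ≤ a t * (1 + Y t)) :
    (∃ M, ∀ t, 0 ≤ t → Y t ≤ M) ∧ L1 Z := by
  obtain ⟨A, hA⟩ := haL
  have hda : ∀ t, HasDerivAt (fun t => ∫ s in (0:ℝ)..t, a s) (a t) t :=
    fun t => (ha.integral_hasStrictDerivAt 0 t).hasDerivAt
  have hdZ : ∀ t, HasDerivAt (fun t => ∫ s in (0:ℝ)..t, Z s) (Z t) t :=
    fun t => (hZ.integral_hasStrictDerivAt 0 t).hasDerivAt
  -- `(1 + Y) exp(-∫ a)` is nonincreasing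
  have h1 : ∀ t, 0 ≤ t → 1 + Y t ≤ (1 + Y 0) * exp A := by
    intro t ht
    have hd : ∀ t, HasDerivAt (fun t => (1 + Y t) * exp (-∫ s in (0:ℝ)..t, a s))
        (Y' t * exp (-∫ s in (0:ℝ)..t, a s)
          + (1 + Y t) * (exp (-∫ s in (0:ℝ)..t, a s) * (-a t))) t :=
      fun t => ((hY t).const_add 1).mul ((hda t).neg.exp)
    have := le_of_deriv_nonpos hd (fun t ht => by
      have e := exp_pos (-∫ s in (0:ℝ)..t, a s)
      have : Y' t - a t * (1 + Y t) ≤ 0 := by linarith [h t ht, hZ0 t]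
      nlinarith) ht
    simp only [intervalIntegral.integral_same, neg_zero, exp_zero, mul_one] at this
    calc 1 + Y t = ((1 + Y t) * exp (-∫ s in (0:ℝ)..t, a s)) * exp (∫ s in (0:ℝ)..t, a s) := by
          rw [mul_assoc, ← exp_add]; simp
      _ ≤ (1 + Y 0) * exp A := by
          have := hY0 0 le_rfl
          have := hA t ht
          gcongr
  set K := (1 + Y 0) * exp A
  refine ⟨⟨K, fun t ht => by linarith [h1 t ht]⟩, Y 0 + K * A, fun T hT => ?_⟩
  have hd : ∀ t, HasDerivAt (fun t => Y t + (∫ s in (0:ℝ)..t, Z s) - K * ∫ s in (0:ℝ)..t, a s)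
      (Y' t + Z t - K * a t) t := fun t => ((hY t).add (hdZ t)).sub ((hda t).const_mul K)
  have := le_of_deriv_nonpos hd (fun t ht => by
    have := h1 t ht
    have h2 := h t ht
    have := mul_le_mul_of_nonneg_left (h1 t ht) (ha0 t)
    linarith) hT
  simp only [intervalIntegral.integral_same, mul_zero, add_zero, sub_zero] at this
  have h3 := hY0 T hT
  have h4 := hA T hT
  have hK : 0 ≤ K := by have := h1 0 le_rfl; have := hY0 0 le_rfl; linarith
  have := mul_le_mul_of_nonneg_left h4 hK
  linarith

/-! ### Norm bounds bundled with continuity -/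

/-- `F` is continuous and its `L^{2^k}` norm is `O(m)` on `[0,∞)`. -/
structure NB (Ω : Set E2) (k : ℕ) (F : Q → ℝ) (m : ℝ → ℝ) : Prop where
  cont : Continuous F
  bd : nn Ω k F =O[T0] m

section NB
variable {Ω : Set E2} {φ : E2 → ℝ} {k : ℕ} {F G : Q → ℝ} {m m' : ℝ → ℝ}

lemma NB.add (hD : GoodDom Ω φ) (h : NB Ω k F m) (h' : NB Ω k G m) :
    NB Ω k (fun p => F p + G p) m :=
  ⟨h.cont.add h'.cont, nn_add_bigO hD k h.cont h'.cont h.bd h'.bd⟩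

lemma NB.neg (h : NB Ω k F m) : NB Ω k (fun p => -F p) m := by
  refine ⟨h.cont.neg, ?_⟩
  have : (fun p => -F p) = fun p => (-1) * F p := by funext p; ring
  rw [this]
  have h2 : nn Ω k (fun p => (-1) * F p) = nn Ω k F := by
    funext t; rw [nn_const_mul]; simp
  rw [h2]; exact h.bd

lemma NB.sub (hD : GoodDom Ω φ) (h : NB Ω k F m) (h' : NB Ω k G m) :
    NB Ω k (fun p => F p - G p) m := by
  simpa only [sub_eq_add_neg] using h.add hD h'.neg

lemma NB.mono (h : NB Ω k F m) (hm : m =O[T0] m') : NB Ω k F m' := ⟨h.cont, h.bd.trans hm⟩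

lemma NB.of_bigO (hD : GoodDom Ω φ) (h : NB Ω k G m) (hF : Continuous F) (hFG : F =O[X0 Ω] G) :
    NB Ω k F m := ⟨hF, (nn_bigO hD k hF h.cont hFG).trans h.bd⟩

lemma NB.abs (hD : GoodDom Ω φ) (h : NB Ω k F m) : NB Ω k (fun p => |F p|) m :=
  h.of_bigO hD h.cont.abs (bigO_X0 1 fun t _ x _ => by simp)

lemma NB.stat (hD : GoodDom Ω φ) (h : NB Ω k F m) (hG : Stat G) :
    NB Ω k (fun p => G p * F p) m :=
  h.of_bigO hD (hG.sm.continuous.mul h.cont) (hG.mul_bigO hD (isBigO_refl _ _))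

lemma NB.const_mul (hD : GoodDom Ω φ) (h : NB Ω k F m) (c : ℝ) :
    NB Ω k (fun p => c * F p) m := h.stat hD (Stat.const c)

lemma NB.mul (hD : GoodDom Ω φ) (h : NB Ω (k + 1) F m) (h' : NB Ω (k + 1) G m') :
    NB Ω k (fun p => F p * G p) (fun t => m t * m' t) :=
  ⟨h.cont.mul h'.cont, nn_mul_bigO hD k h.cont h'.cont h.bd h'.bd⟩

lemma NB.sup_mul (hD : GoodDom Ω φ) (hF : Continuous F) (hFm : F =O[X0 Ω] fun p => m p.1)
    (h : NB Ω k G m') : NB Ω k (fun p => F p * G p) (fun t => m t * m' t) :=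
  ⟨hF.mul h.cont, nn_sup_mul hD k hF h.cont hFm h.bd⟩

lemma NB.step (hD : GoodDom Ω φ) (h : NB Ω (k + 1) F m) : NB Ω k F m :=
  ⟨h.cont, (nn_step_bigO hD k h.cont).trans h.bd⟩

lemma NB.congr (hD : GoodDom Ω φ) (h : NB Ω k G m) (hF : Continuous F)
    (e : ∀ t, 0 ≤ t → ∀ x ∈ Ω, F (t, x) = G (t, x)) : NB Ω k F m :=
  h.of_bigO hD hF (bigO_X0 1 fun t ht x hx => by rw [e t ht x hx, one_mul])

lemma NB.J (h : NB Ω 0 F m) : J Ω F =O[T0] m := (J_bigO F).trans h.bd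

end NB

lemma bigO_cancel {f g : ℝ → ℝ} (h : (fun t => f t ^ 2) =O[T0] fun t => f t * g t) :
    f =O[T0] g := by
  obtain ⟨C, hC, h⟩ := exists_T0 h
  refine bigO_T0 C fun t ht => ?_
  have := h t ht
  rw [abs_pow, abs_mul, sq] at this
  by_cases hf : |f t| = 0
  · rw [hf]; positivity
  · have hp : 0 < |f t| := lt_of_le_of_ne (abs_nonneg _) (Ne.symm hf)
    exact le_of_mul_le_mul_left (by linarith) hp

/-! ### The defining function -/

/-- The defining function of the domain, as a function on space-time. -/
def lift (φ : E2 → ℝ) : Q → ℝ := fun p => φ p.2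

lemma clm_apply_E2 (L : E2 →L[ℝ] ℝ) (v : E2) :
    L v = v 0 * L (EuclideanSpace.single 0 1) + v 1 * L (EuclideanSpace.single 1 1) := by
  have : v = v 0 • EuclideanSpace.single 0 1 + v 1 • EuclideanSpace.single 1 1 := by
    ext i; fin_cases i <;> simp
  conv_lhs => rw [this]
  simp

section phi
variable {Ω : Set E2} {φ : E2 → ℝ}

lemma GoodDom.stat (hD : GoodDom Ω φ) : Stat (lift φ) := Stat.lift hD.smooth

lemma fderiv_lift (hD : GoodDom Ω φ) (t : ℝ) (x : E2) (i : Fin 2) :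
    fderiv ℝ φ x (EuclideanSpace.single i 1) = pd (ex i) (lift φ) (t, x) :=
  pd_ex_eq hD.stat.sm t x i

/-- The weight `|∇φ|² + φ²`, which is bounded below on `Ω`. -/
def c0 (φ : E2 → ℝ) : Q → ℝ := fun p =>
  pd (ex 0) (lift φ) p ^ 2 + pd (ex 1) (lift φ) p ^ 2 + lift φ p ^ 2

lemma sum_sq_eq_zero {a b c : ℝ} (h : a ^ 2 + b ^ 2 + c ^ 2 = 0) : a = 0 ∧ b = 0 ∧ c = 0 := by
  have ha := sq_nonneg a
  have hb := sq_nonneg b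
  have hc := sq_nonneg c
  refine ⟨pow_eq_zero_iff two_ne_zero |>.1 ?_, pow_eq_zero_iff two_ne_zero |>.1 ?_,
    pow_eq_zero_iff two_ne_zero |>.1 ?_⟩ <;> linarith

lemma one_bigO_c0 (hD : GoodDom Ω φ) : (fun _ => (1 : ℝ)) =O[X0 Ω] c0 φ := by
  have hs := hD.stat
  have hsm := hs.sm
  have hcc : Continuous (c0 φ) := by unfold c0; have := hsm.continuous; fun_prop
  have hne : ∀ x ∈ closure Ω, c0 φ (0, x) ≠ 0 := by
    intro x hx h
    unfold c0 at h
    obtain ⟨h1, h2, h0⟩ := sum_sq_eq_zero h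
    have hx' : x ∉ Ω := fun hx' => (hD.neg x hx').ne h0
    have hf : x ∈ frontier Ω := by
      rw [frontier, hD.isOpen.interior_eq]; exact ⟨hx, hx'⟩
    apply hD.grad x hf
    ext v
    rw [clm_apply_E2, fderiv_lift hD 0, fderiv_lift hD 0, h1, h2]; simp
  have hcont : ContinuousOn (fun x => (c0 φ (0, x))⁻¹) (closure Ω) :=
    (cont_slice hcc 0).continuousOn.inv₀ hne
  obtain ⟨M, hM⟩ := hD.bdd.isCompact_closure.exists_bound_of_continuousOn hcont
  refine bigO_X0 M fun t _ x hx => ?_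
  have hinv : c0 φ (t, x) = c0 φ (0, x) := by
    unfold c0; rw [hs.inv t, (hs.pd 0).inv t, (hs.pd 1).inv t]
  rw [hinv, abs_one]
  have h1 := hM x (subset_closure hx)
  have h2 := hne x (subset_closure hx)
  rw [norm_inv, Real.norm_eq_abs] at h1
  have h3 : 0 < |c0 φ (0, x)| := abs_pos.2 h2
  calc (1 : ℝ) = |c0 φ (0, x)|⁻¹ * |c0 φ (0, x)| := by field_simp
    _ ≤ M * |c0 φ (0, x)| := by gcongr

lemma bigO_c0_mul (hD : GoodDom Ω φ) {F G : Q → ℝ} (h : (fun p => c0 φ p * F p) =O[X0 Ω] G) :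
    F =O[X0 Ω] G := by
  have := (one_bigO_c0 hD).mul (isBigO_refl F (X0 Ω))
  simp only [one_mul] at this
  exact this.trans h

/-! ### Boundary behaviour -/

/-- The gradient of a function vanishing on the boundary is parallel to `∇φ` there. -/
lemma B0.parallel (hD : GoodDom Ω φ) {g : Q → ℝ} (hg : Sm g) (h0 : B0 Ω g) {t : ℝ} (ht : 0 ≤ t)
    {x : E2} (hx : x ∈ frontier Ω) :
    pd (ex 0) (lift φ) (t, x) * pd (ex 1) g (t, x)
      = pd (ex 1) (lift φ) (t, x) * pd (ex 0) g (t, x) := by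
  have hgs : ContDiff ℝ 1 (fun y => g (t, y)) := hg.slice t (n := 1)
  have hφ1 : ContDiff ℝ 1 φ := hD.smooth.of_le (by exact_mod_cast le_top)
  have hext : IsLocalExtrOn (fun y => g (t, y)) {y | φ y = φ x} x := by
    left
    have : ∀ᶠ y in 𝓝[{y | φ y = φ x}] x, g (t, x) ≤ g (t, y) := by
      filter_upwards [mem_nhdsWithin_of_mem_nhds (hD.level x hx), self_mem_nhdsWithin] with y hy hy'
      have hy' : φ y = φ x := hy'
      rw [h0 t ht x hx, h0 t ht y (hy (hy'.trans (hD.zero x hx)))]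
    exact this
  obtain ⟨a, b, hab, h⟩ := hext.exists_multipliers_of_hasStrictFDerivAt_1d
    (hφ1.contDiffAt.hasStrictFDerivAt (by simp)) (hgs.contDiffAt.hasStrictFDerivAt (by simp))
  have hi : ∀ i, a * pd (ex i) (lift φ) (t, x) + b * pd (ex i) g (t, x) = 0 := by
    intro i
    have := congrArg (fun L : E2 →L[ℝ] ℝ => L (EuclideanSpace.single i 1)) h
    simpa [fderiv_lift hD t, pd_ex_eq hg] using this
  by_cases hb : b = 0
  · exfalso
    have ha : a ≠ 0 := by rintro rfl; exact hab (by simp [hb])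
    apply hD.grad x hx
    ext v
    have h1 := hi 0
    have h2 := hi 1
    simp only [hb, zero_mul, add_zero, mul_eq_zero, ha, false_or] at h1 h2
    rw [clm_apply_E2, fderiv_lift hD t, fderiv_lift hD t, h1, h2]; simp
  · have h1 := hi 0
    have h2 := hi 1
    apply mul_left_cancel₀ hb
    linear_combination pd (ex 0) (lift φ) (t, x) * h2 - pd (ex 1) (lift φ) (t, x) * h1

lemma eq_on_frontier {F G : Q → ℝ} (hF : Continuous F) (hG : Continuous G)
    (h : ∀ t, 0 ≤ t → ∀ x ∈ Ω, F (t, x) = G (t, x)) {t : ℝ} (ht : 0 ≤ t) {x : E2}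
    (hx : x ∈ frontier Ω) : F (t, x) = G (t, x) := by
  have : closure Ω ⊆ {x | F (t, x) = G (t, x)} :=
    closure_minimal (fun y hy => by simp only [mem_ofPred_eq]; exact h t ht y hy)
      (isClosed_eq (cont_slice hF t) (cont_slice hG t))
  have := this hx.1
  simpa only [mem_ofPred_eq] using this

/-- For a solenoidal field `U` vanishing on the boundary, the function `U · ∇φ` vanishes there to
second order. -/
lemma B0_grad_normal (hD : GoodDom Ω φ) {U : Fin 2 → Q → ℝ} (hU : ∀ i, Sm (U i))
    (h0 : ∀ i, B0 Ω (U i))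
    (hdiv : ∀ t, 0 ≤ t → ∀ x ∈ Ω, pd (ex 0) (U 0) (t, x) + pd (ex 1) (U 1) (t, x) = 0)
    (i : Fin 2) :
    B0 Ω (pd (ex i) fun p => pd (ex 0) (lift φ) p * U 0 p + pd (ex 1) (lift φ) p * U 1 p) := by
  intro t ht x hx
  have hs := hD.stat.sm
  have hU0 := hU 0
  have hU1 := hU 1
  have hd := eq_on_frontier (F := fun p => pd (ex 0) (U 0) p + pd (ex 1) (U 1) p)
    (G := fun _ => 0) (by fun_prop) (by fun_prop) hdiv ht hx
  have p0 := (h0 0).parallel hD hU0 ht hx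
  have p1 := (h0 1).parallel hD hU1 ht hx
  have z0 := h0 0 t ht x hx
  have z1 := h0 1 t ht x hx
  have hne : ¬ (pd (ex 0) (lift φ) (t, x) = 0 ∧ pd (ex 1) (lift φ) (t, x) = 0) := by
    rintro ⟨e0, e1⟩
    apply hD.grad x hx
    ext v
    rw [clm_apply_E2, fderiv_lift hD t, fderiv_lift hD t, e0, e1]; simp
  rw [pd_add (by fun_prop) (by fun_prop), pd_mul (by fun_prop) (by fun_prop),
    pd_mul (by fun_prop) (by fun_prop)]
  simp only [z0, z1, mul_zero, zero_add]
  generalize pd (ex 0) (lift φ) (t, x) = a0 at *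
  generalize pd (ex 1) (lift φ) (t, x) = a1 at *
  by_cases ha : a0 = 0
  · subst ha
    have ha1 : a1 ≠ 0 := fun h => hne ⟨rfl, h⟩
    have e00 : pd (ex 0) (U 0) (t, x) = 0 := by
      apply mul_left_cancel₀ ha1; linear_combination -p0
    have e01 : pd (ex 0) (U 1) (t, x) = 0 := by
      apply mul_left_cancel₀ ha1; linear_combination -p1
    rw [e00, zero_add] at hd
    fin_cases i <;> simp [e01, hd]
  · apply mul_left_cancel₀ ha
    fin_cases i
    · simp only [Fin.zero_eta]
      linear_combination a0 ^ 2 * hd - a0 * p1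
    · simp only [Fin.mk_one]
      linear_combination a0 * a1 * hd + a0 * p0
end phi

/-! ### Hardy's inequality -/

section Hardy
variable {Ω : Set E2} {φ : E2 → ℝ}

/-- A smooth regularisation of `s ↦ 1 / (2|s|)` on the negative half-line, equal to
`1 / (√(s² + ε²) - s)`. -/
def hw (ε s : ℝ) : ℝ := (√(s ^ 2 + ε ^ 2) + s) / ε ^ 2

lemma hw_contDiff {ε : ℝ} (hε : 0 < ε) : ContDiff ℝ (⊤ : ℕ∞) (hw ε) := by
  unfold hw
  have : ContDiff ℝ (⊤ : ℕ∞) (fun s : ℝ => √(s ^ 2 + ε ^ 2)) :=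
    ContDiff.sqrt (by fun_prop) (fun s => by positivity)
  fun_prop

lemma hw_hasDerivAt {ε : ℝ} (hε : 0 < ε) (s : ℝ) :
    HasDerivAt (hw ε) (hw ε s / √(s ^ 2 + ε ^ 2)) s := by
  have hp : 0 < √(s ^ 2 + ε ^ 2) := by positivity
  have h1 : HasDerivAt (fun s : ℝ => s ^ 2 + ε ^ 2) (2 * s) s := by
    simpa using (hasDerivAt_pow 2 s).add_const (ε ^ 2)
  have h2 := ((h1.sqrt (by positivity)).add (hasDerivAt_id s)).div_const (ε ^ 2)
  refine h2.congr_deriv ?_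
  unfold hw
  field_simp
  ring

lemma hw_mul {ε : ℝ} (hε : 0 < ε) (s : ℝ) : hw ε s * (√(s ^ 2 + ε ^ 2) - s) = 1 := by
  unfold hw
  have : √(s ^ 2 + ε ^ 2) ^ 2 = s ^ 2 + ε ^ 2 := sq_sqrt (by positivity)
  field_simp
  linear_combination this

lemma hw_pos {ε : ℝ} (hε : 0 < ε) (s : ℝ) : 0 < hw ε s := by
  have h : |s| < √(s ^ 2 + ε ^ 2) := by
    rw [← sqrt_sq_eq_abs]; exact sqrt_lt_sqrt (sq_nonneg _) (by nlinarith [sq_pos_of_pos hε])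
  unfold hw
  have : 0 < √(s ^ 2 + ε ^ 2) + s := by linarith [neg_abs_le s]
  positivity

lemma hw_sq_le {ε : ℝ} (hε : 0 < ε) {s : ℝ} (hs : s ≤ 0) :
    hw ε s ^ 2 ≤ hw ε s / √(s ^ 2 + ε ^ 2) := by
  have h1 := hw_mul hε s
  have h2 := hw_pos hε s
  have hp : 0 < √(s ^ 2 + ε ^ 2) := by positivity
  rw [le_div_iff₀ hp]
  have : hw ε s * √(s ^ 2 + ε ^ 2) ≤ 1 := by nlinarith
  nlinarith

lemma hw_sq_mul_le {ε : ℝ} (hε : 0 < ε) {s : ℝ} (hs : s ≤ 0) : hw ε s ^ 2 * s ^ 2 ≤ 1 := by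
  have h1 := hw_mul hε s
  have h2 := hw_pos hε s
  have hp : 0 < √(s ^ 2 + ε ^ 2) := by positivity
  have h3 : 0 ≤ hw ε s * (-s) := mul_nonneg h2.le (by linarith)
  have h4 : hw ε s * (-s) ≤ 1 := by nlinarith
  nlinarith

lemma one_le_hw_mul {ε : ℝ} (hε : 0 < ε) (s : ℝ) : 1 ≤ hw ε s * (ε + 2 * |s|) := by
  rw [← hw_mul hε s]
  have h2 := hw_pos hε s
  gcongr
  have : √(s ^ 2 + ε ^ 2) ≤ |s| + ε := by
    rw [sqrt_le_left (by positivity), ← sq_abs s]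
    nlinarith [abs_nonneg s]
  linarith [neg_abs_le s]

lemma quad_bound {X g α β : ℝ} (hg : 0 ≤ g) (hα : 0 ≤ α) (hβ : 0 ≤ β)
    (h : X ^ 2 ≤ α * g ^ 2 + β * (X * g)) : X ≤ (α + β + 1) * g := by
  by_contra hlt
  push Not at hlt
  have h1 : g ≤ X := by nlinarith
  have h2 : α * g ^ 2 ≤ α * (X * g) := by
    apply mul_le_mul_of_nonneg_left _ hα; nlinarith
  have hX : 0 < X := by nlinarith
  nlinarith

lemma hardy_weight (hD : GoodDom Ω φ) : ∃ C, 0 ≤ C ∧ ∀ ε, 0 < ε → ∀ g : Q → ℝ, Sm g → B0 Ω g →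
    ∀ t, 0 ≤ t → nn Ω 1 (fun p => g p * hw ε (lift φ p)) t ≤ C * gr Ω g t := by
  have hs := hD.stat
  have hsm := hs.sm
  obtain ⟨C1, hC1, h1⟩ := exists_X0 (one_bigO_c0 hD)
  obtain ⟨M0, hM0, hb0⟩ := exists_X0 ((hs.pd 0).bigO hD)
  obtain ⟨M1, hM1, hb1⟩ := exists_X0 ((hs.pd 1).bigO hD)
  obtain ⟨M2, hM2, hb2⟩ := exists_X0 ((((hs.pd 0).pd 0).add ((hs.pd 1).pd 1)).bigO hD)
  obtain ⟨K, hK, hk⟩ := exists_T0 (nn_const_bigO (Ω := Ω) 1)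
  refine ⟨C1 * K ^ 2 + C1 * (2 * M0 + 2 * M1 + M2 * K) + 1, by positivity,
    fun ε hε g hg h0 t ht => ?_⟩
  set A : Q → ℝ := fun p => hw ε (lift φ p) with hA
  have hAs : ContDiff ℝ (⊤ : ℕ∞) A := (hw_contDiff hε).comp hsm
  have hAc := hAs.continuous
  have hgc := hg.continuous
  have hAd : ∀ w, pd w A = fun p => hw ε (lift φ p) / √(lift φ p ^ 2 + ε ^ 2) * pd w (lift φ) p :=
    fun w => pd_comp (hw_hasDerivAt hε) hsm
  set X := nn Ω 1 (fun p => g p * A p) t with hX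
  have hX0 : 0 ≤ X := nn_nonneg _ _ _
  have hg0 := gr_nonneg (Ω := Ω) g t
  have hn : nn Ω 1 g t ≤ K * gr Ω g t := by
    have := nn_pow_succ_le hD hg h0 0 ht
    simp only [zero_add, pow_one, pow_zero, Nat.cast_zero, one_mul] at this
    have h2 := hk t ht
    rw [abs_of_nonneg (nn_nonneg _ _ _), abs_one, mul_one] at h2
    exact this.trans (by gcongr)
  have hn0 := nn_nonneg (Ω := Ω) 1 g t
  -- the divergence of `g² A(φ) ∇φ` has zero integral
  set V : Fin 2 → Q → ℝ := fun i p => g p ^ 2 * A p * pd (ex i) (lift φ) p with hV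
  have hVs : ∀ i, ContDiff ℝ (⊤ : ℕ∞) (V i) := fun i => by simp only [hV]; fun_prop
  have hVB : ∀ i, B0 Ω (V i) := fun i s hs' x hx => by simp [hV, h0 s hs' x hx]
  have hdiv : J Ω (fun p => pd (ex 0) (V 0) p + pd (ex 1) (V 1) p) t = 0 :=
    J_div hD hVs hVB ht fun x _ => rfl
  have hVd : ∀ i, pd (ex i) (V i) = fun p =>
      (2 * (g p * A p) * pd (ex i) g p * pd (ex i) (lift φ) p
      + g p ^ 2 * (hw ε (lift φ p) / √(lift φ p ^ 2 + ε ^ 2)) * pd (ex i) (lift φ) p ^ 2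
      + g p ^ 2 * A p * pd (ex i) (pd (ex i) (lift φ)) p) := by
    intro i
    simp only [hV]
    rw [pd_mul (by fun_prop) (by fun_prop), pd_mul (by fun_prop) (by fun_prop), hAd, pd_pow 2 hg]
    funext p; push_cast; ring
  -- pointwise inequality
  have hpt : ∀ x ∈ Ω, (g (t, x) * A (t, x)) ^ 2 ≤ C1 * (g (t, x) ^ 2
      + (pd (ex 0) (V 0) (t, x) + pd (ex 1) (V 1) (t, x))
      + ((2 * M0) * |(g (t, x) * A (t, x)) * pd (ex 0) g (t, x)|
        + ((2 * M1) * |(g (t, x) * A (t, x)) * pd (ex 1) g (t, x)|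
        + M2 * |(g (t, x) * A (t, x)) * g (t, x)|))) := by
    intro x hx
    have e1 := h1 t ht x hx
    have e2 := hb0 t ht x hx
    have e3 := hb1 t ht x hx
    have e4 := hb2 t ht x hx
    have hneg : lift φ (t, x) ≤ 0 := (hD.neg x hx).le
    have e5 := hw_sq_le hε hneg
    have e6 := hw_sq_mul_le hε hneg
    simp only [abs_one, mul_one] at e1 e2 e3 e4
    have hcpos : 0 ≤ c0 φ (t, x) := by unfold c0; positivity
    rw [abs_of_nonneg hcpos] at e1
    rw [hVd, hVd]
    have hAe : A (t, x) = hw ε (lift φ (t, x)) := rfl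
    simp only [hAe]
    set a0 := pd (ex 0) (lift φ) (t, x)
    set a1 := pd (ex 1) (lift φ) (t, x)
    set s := lift φ (t, x)
    set B := hw ε s
    set G := g (t, x)
    set B' := B / √(s ^ 2 + ε ^ 2)
    set g0 := pd (ex 0) g (t, x)
    set g1 := pd (ex 1) g (t, x)
    set l0 := pd (ex 0) (pd (ex 0) (lift φ)) (t, x)
    set l1 := pd (ex 1) (pd (ex 1) (lift φ)) (t, x)
    have k1 : (G * B) ^ 2 ≤ C1 * (c0 φ (t, x) * (G * B) ^ 2) := by
      nlinarith [sq_nonneg (G * B)]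
    refine k1.trans (mul_le_mul_of_nonneg_left ?_ hC1.le)
    have k2 : c0 φ (t, x) = a0 ^ 2 + a1 ^ 2 + s ^ 2 := rfl
    rw [k2]
    have k3 : G ^ 2 * (B ^ 2 * s ^ 2) ≤ G ^ 2 := by nlinarith [sq_nonneg G]
    have k4 : G ^ 2 * B ^ 2 * (a0 ^ 2 + a1 ^ 2) ≤ G ^ 2 * B' * (a0 ^ 2 + a1 ^ 2) := by gcongr
    have k5 : -(2 * (G * B) * g0 * a0) ≤ 2 * M0 * |G * B * g0| := by
      calc -(2 * (G * B) * g0 * a0) ≤ |-(2 * (G * B) * g0 * a0)| := le_abs_self _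
        _ = 2 * |a0| * |G * B * g0| := by rw [abs_neg]; simp only [abs_mul, abs_two]; ring
        _ ≤ _ := by gcongr
    have k6 : -(2 * (G * B) * g1 * a1) ≤ 2 * M1 * |G * B * g1| := by
      calc -(2 * (G * B) * g1 * a1) ≤ |-(2 * (G * B) * g1 * a1)| := le_abs_self _
        _ = 2 * |a1| * |G * B * g1| := by rw [abs_neg]; simp only [abs_mul, abs_two]; ring
        _ ≤ _ := by gcongr
    have k7 : -(G ^ 2 * B * (l0 + l1)) ≤ M2 * |G * B * G| := by
      calc -(G ^ 2 * B * (l0 + l1)) ≤ |-(G ^ 2 * B * (l0 + l1))| := le_abs_self _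
        _ = |l0 + l1| * |G * B * G| := by rw [abs_neg]; simp only [abs_mul, abs_pow]; ring
        _ ≤ _ := by gcongr
    linarith
  have hV0 := (hVs 0)
  have hV1 := (hVs 1)
  have hInt : X ^ 2 ≤ C1 * (nn Ω 1 g t ^ 2 + 0 + ((2 * M0) * (X * gr Ω g t)
      + ((2 * M1) * (X * gr Ω g t) + M2 * (X * nn Ω 1 g t)))) := by
    have c0' : Continuous (pd (ex 0) (V 0)) := by fun_prop
    have c1' : Continuous (pd (ex 1) (V 1)) := by fun_prop
    rw [hX, nn_one_sq]
    refine (J_mono hD (by fun_prop) (by fun_prop) hpt (G := fun p => C1 * (g p ^ 2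
      + (pd (ex 0) (V 0) p + pd (ex 1) (V 1) p)
      + ((2 * M0) * |(g p * A p) * pd (ex 0) g p|
        + ((2 * M1) * |(g p * A p) * pd (ex 1) g p|
        + M2 * |(g p * A p) * g p|))))).trans ?_
    rw [J_add hD c0' c1'] at hdiv
    rw [J_const_mul, J_add hD (by fun_prop) (by fun_prop), J_add hD (by fun_prop) (by fun_prop),
      J_add hD c0' c1', J_add hD (by fun_prop) (by fun_prop),
      J_add hD (by fun_prop) (by fun_prop), J_const_mul,
      J_const_mul, J_const_mul, hdiv, ← nn_one_sq]
    have j0 := (cauchy_schwarz hD (F := fun p => g p * A p) (G := pd (ex 0) g) (by fun_prop)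
      (by fun_prop) t).trans (mul_le_mul_of_nonneg_left (nn_le_gr 0 g t) hX0)
    have j1 := (cauchy_schwarz hD (F := fun p => g p * A p) (G := pd (ex 1) g) (by fun_prop)
      (by fun_prop) t).trans (mul_le_mul_of_nonneg_left (nn_le_gr 1 g t) hX0)
    have j2 := cauchy_schwarz hD (F := fun p => g p * A p) (G := g) (by fun_prop)
      (by fun_prop) t
    gcongr
  refine quad_bound hg0 (by positivity) (by positivity) (hInt.trans ?_)
  have q1 : nn Ω 1 g t ^ 2 ≤ K ^ 2 * gr Ω g t ^ 2 := by
    rw [← mul_pow]; gcongr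
  have q2 : M2 * (X * nn Ω 1 g t) ≤ M2 * (X * (K * gr Ω g t)) := by gcongr
  have e : C1 * K ^ 2 * gr Ω g t ^ 2 + C1 * (2 * M0 + 2 * M1 + M2 * K) * (X * gr Ω g t)
    = C1 * (K ^ 2 * gr Ω g t ^ 2 + 0 + ((2 * M0) * (X * gr Ω g t)
      + ((2 * M1) * (X * gr Ω g t) + M2 * (X * (K * gr Ω g t))))) := by ring
  rw [e]
  gcongr

/-- Hardy's inequality: `∫ |g w| ≤ C ‖∇g‖₂ ‖φ w‖₂` if `g` vanishes on the boundary. -/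
lemma hardy (hD : GoodDom Ω φ) : ∃ C, 0 ≤ C ∧ ∀ g w : Q → ℝ, Sm g → B0 Ω g → Continuous w →
    ∀ t, 0 ≤ t → nn Ω 0 (fun p => g p * w p) t
      ≤ C * (gr Ω g t * nn Ω 1 (fun p => lift φ p * w p) t) := by
  obtain ⟨C, hC, h⟩ := hardy_weight hD
  obtain ⟨K, hK, hadd⟩ := nn_add_le hD 1
  refine ⟨C * K * 2, by positivity, fun g w hg h0 hw' t ht => ?_⟩
  have hgc := hg.continuous
  have hlc := hD.stat.sm.continuous
  have key : ∀ ε, 0 < ε → nn Ω 0 (fun p => g p * w p) t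
      ≤ C * K * 2 * (gr Ω g t * nn Ω 1 (fun p => lift φ p * w p) t)
        + ε * (C * gr Ω g t * (K * nn Ω 1 w t)) := by
    intro ε hε
    have hAc : Continuous fun p => hw ε (lift φ p) := (hw_contDiff hε).continuous.comp hlc
    have e1 : nn Ω 0 (fun p => g p * w p) t
        ≤ nn Ω 0 (fun p => (g p * hw ε (lift φ p)) * (ε * |w p| + 2 * |lift φ p * w p|)) t := by
      refine nn_mono hD 0 (by fun_prop) (by fun_prop) fun x _ => ?_
      have hp := hw_pos hε (lift φ (t, x))
      have h1 := one_le_hw_mul hε (lift φ (t, x))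
      rw [abs_mul, abs_mul, abs_mul, abs_of_pos hp,
        abs_of_nonneg (a := ε * |w (t, x)| + 2 * |lift φ (t, x) * w (t, x)|) (by positivity),
        abs_mul]
      calc |g (t, x)| * |w (t, x)| = (|g (t, x)| * |w (t, x)|) * 1 := by ring
        _ ≤ (|g (t, x)| * |w (t, x)|) * (hw ε (lift φ (t, x)) * (ε + 2 * |lift φ (t, x)|)) := by
            gcongr
        _ = _ := by ring
    have e2 := nn_mul_le hD 0 (F := fun p => g p * hw ε (lift φ p))
      (G := fun p => ε * |w p| + 2 * |lift φ p * w p|) (by fun_prop) (by fun_prop) t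
    have e3 := hadd (F := fun p => ε * |w p|) (G := fun p => 2 * |lift φ p * w p|)
      (by fun_prop) (by fun_prop) t
    have e4 : nn Ω 1 (fun p => |w p|) t ≤ nn Ω 1 w t :=
      nn_mono hD 1 (by fun_prop) (by fun_prop) fun x _ => by simp
    have e5 : nn Ω 1 (fun p => |lift φ p * w p|) t ≤ nn Ω 1 (fun p => lift φ p * w p) t :=
      nn_mono hD 1 (by fun_prop) (by fun_prop) fun x _ => by simp
    rw [nn_const_mul, nn_const_mul, abs_of_pos hε, abs_two] at e3
    have e6 := h ε hε g hg h0 t ht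
    have hg0 := gr_nonneg (Ω := Ω) g t
    calc nn Ω 0 (fun p => g p * w p) t
        ≤ (C * gr Ω g t) * (K * (ε * nn Ω 1 w t + 2 * nn Ω 1 (fun p => lift φ p * w p) t)) := by
          refine e1.trans (e2.trans (mul_le_mul e6 (e3.trans ?_) (nn_nonneg _ _ _)
            (by positivity)))
          gcongr
      _ = _ := by ring
  have hg0 := gr_nonneg (Ω := Ω) g t
  have hw0 := nn_nonneg (Ω := Ω) 1 w t
  have hd : 0 ≤ C * gr Ω g t * (K * nn Ω 1 w t) := by positivity
  refine le_of_forall_pos_le_add fun δ hδ => ?_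
  refine (key (δ / (C * gr Ω g t * (K * nn Ω 1 w t) + 1)) (by positivity)).trans ?_
  gcongr
  rw [div_mul_eq_mul_div, div_le_iff₀ (by positivity)]
  nlinarith
end Hardy

local notation "∂₀" => pd (ex 0)
local notation "∂₁" => pd (ex 1)

/-! ### Second derivatives of functions vanishing to second order on the boundary -/

section Stokes
variable {Ω : Set E2} {φ : E2 → ℝ}

/-- The divergence theorem, with the two components of the field given separately. -/
lemma J_div2 (hD : GoodDom Ω φ) {F V W : Q → ℝ} {t : ℝ} (ht : 0 ≤ t)
    (hV : ContDiff ℝ (⊤ : ℕ∞) V) (hW : ContDiff ℝ (⊤ : ℕ∞) W) (bV : B0 Ω V) (bW : B0 Ω W)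
    (h : ∀ x ∈ Ω, F (t, x) = ∂₀ V (t, x) + ∂₁ W (t, x)) : J Ω F t = 0 := by
  refine J_div hD (V := ![V, W]) ?_ ?_ ht h
  · intro i; fin_cases i
    · exact hV
    · exact hW
  · intro i; fin_cases i
    · exact bV
    · exact bW

/-- The size of the second spatial derivatives in `L²(Ω)`. -/
def H2 (Ω : Set E2) (g : Q → ℝ) (t : ℝ) : ℝ := gr Ω (∂₀ g) t + gr Ω (∂₁ g) t

lemma H2_nonneg (g : Q → ℝ) (t : ℝ) : 0 ≤ H2 Ω g t := add_nonneg (gr_nonneg _ _) (gr_nonneg _ _)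

lemma NB.gr {g : Q → ℝ} (hg : Sm g) (i : Fin 2) : NB Ω 1 (pd (ex i) g) (gr Ω g) := by
  refine ⟨by fun_prop, bigO_T0 1 fun t _ => ?_⟩
  rw [abs_of_nonneg (nn_nonneg _ _ _), abs_of_nonneg (gr_nonneg _ _), one_mul]
  exact nn_le_gr i g t

lemma gr_le_H2 (i : Fin 2) (g : Q → ℝ) : gr Ω (pd (ex i) g) =O[T0] H2 Ω g := by
  refine bigO_T0 1 fun t _ => ?_
  rw [abs_of_nonneg (gr_nonneg _ _), abs_of_nonneg (H2_nonneg _ _), one_mul]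
  have h0 := gr_nonneg (Ω := Ω) (∂₀ g) t
  have h1 := gr_nonneg (Ω := Ω) (∂₁ g) t
  fin_cases i <;> simp only [H2, Fin.zero_eta, Fin.mk_one] <;> linarith

lemma NB.H2 {g : Q → ℝ} (hg : Sm g) (i j : Fin 2) : NB Ω 1 (pd (ex i) (pd (ex j) g)) (H2 Ω g) :=
  (NB.gr (contDiff_pd hg) i).mono (gr_le_H2 j g)

lemma NB.gr_H2 (hD : GoodDom Ω φ) {g : Q → ℝ} (hg : Sm g) (h1 : ∀ i, B0 Ω (pd (ex i) g)) (i : Fin 2) :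
    NB Ω 1 (pd (ex i) g) (_root_.H2 Ω g) :=
  ⟨by fun_prop, (nn_one_gr hD (contDiff_pd hg) (h1 i)).trans (gr_le_H2 i g)⟩

lemma gr_bigO_H2 (hD : GoodDom Ω φ) {g : Q → ℝ} (hg : Sm g) (h1 : ∀ i, B0 Ω (pd (ex i) g)) :
    gr Ω g =O[T0] _root_.H2 Ω g := gr_bigO fun i => (NB.gr_H2 hD hg h1 i).bd

lemma NB.zero_H2 (hD : GoodDom Ω φ) {g : Q → ℝ} (hg : Sm g) (h0 : B0 Ω g)
    (h1 : ∀ i, B0 Ω (pd (ex i) g)) : NB Ω 1 g (_root_.H2 Ω g) :=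
  ⟨hg.continuous, (nn_one_gr hD hg h0).trans (gr_bigO_H2 hD hg h1)⟩

/-- All second derivatives are controlled by the Laplacian if the gradient vanishes on the
boundary. -/
lemma H2_sq (hD : GoodDom Ω φ) {g : Q → ℝ} (hg : Sm g) (h1 : ∀ i, B0 Ω (pd (ex i) g)) :
    (fun t => H2 Ω g t ^ 2) =O[T0] J Ω (fun p => (∂₀ (∂₀ g) p + ∂₁ (∂₁ g) p) ^ 2) := by
  refine bigO_T0 4 fun t ht => ?_
  have hc : ∂₁ (∂₀ g) = ∂₀ (∂₁ g) := pd_comm hg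
  have key : J Ω (fun p => ∂₀ (∂₁ g) p ^ 2 - ∂₀ (∂₀ g) p * ∂₁ (∂₁ g) p) t = 0 := by
    refine J_div2 hD (V := fun p => ∂₁ g p * ∂₁ (∂₀ g) p) (W := fun p => -(∂₁ g p * ∂₀ (∂₀ g) p))
      ht (by fun_prop) (by fun_prop) ((h1 1).mul _)
      (fun t ht x hx => by simp [h1 1 t ht x hx]) ?_
    · intro x _
      have hc2 : ∂₀ (∂₁ (∂₀ g)) = ∂₁ (∂₀ (∂₀ g)) := pd_comm (contDiff_pd hg)
      simp (disch := fun_prop) only [pd_neg, pd_mul]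
      rw [hc2, hc]; ring
  have e : J Ω (fun p => (∂₀ (∂₀ g) p + ∂₁ (∂₁ g) p) ^ 2) t
      = nn Ω 1 (∂₀ (∂₀ g)) t ^ 2 + nn Ω 1 (∂₁ (∂₁ g)) t ^ 2 + nn Ω 1 (∂₀ (∂₁ g)) t ^ 2
        + nn Ω 1 (∂₁ (∂₀ g)) t ^ 2 := by
    have e1 : J Ω (fun p => (∂₀ (∂₀ g) p + ∂₁ (∂₁ g) p) ^ 2) t
        = J Ω (fun p => (∂₀ (∂₀ g) p ^ 2 + ∂₁ (∂₁ g) p ^ 2 + ∂₀ (∂₁ g) p ^ 2 + ∂₁ (∂₀ g) p ^ 2)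
          - 2 * (∂₀ (∂₁ g) p ^ 2 - ∂₀ (∂₀ g) p * ∂₁ (∂₁ g) p)) t := by
      apply J_congr hD; intro x _; rw [hc]; ring
    rw [e1, J_sub hD (by fun_prop) (by fun_prop), J_const_mul, key, J_add hD (by fun_prop) (by fun_prop),
      J_add hD (by fun_prop) (by fun_prop), J_add hD (by fun_prop) (by fun_prop)]
    simp only [nn_one_sq]; ring
  rw [e, abs_of_nonneg (by positivity), abs_of_nonneg (by positivity)]
  unfold H2 gr
  set a := nn Ω 1 (∂₀ (∂₀ g)) t
  set b := nn Ω 1 (∂₁ (∂₁ g)) t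
  set c := nn Ω 1 (∂₀ (∂₁ g)) t
  set d := nn Ω 1 (∂₁ (∂₀ g)) t
  nlinarith [sq_nonneg (a - b), sq_nonneg (a - c), sq_nonneg (a - d), sq_nonneg (b - c),
    sq_nonneg (b - d), sq_nonneg (c - d)]

/-- Pointwise identity behind `stokes_H2`: `ν ∇ω·∇χ - ∇Π·∇^⊥χ`, with `χ = div σ`, equals
`ν ∇ω·Δσ` up to a divergence. -/
lemma div_identity {s0 s1 w P z0 z1 : Q → ℝ} (ν : ℝ) (hs0 : Sm s0) (hs1 : Sm s1) (hw : Sm w)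
    (hP : Sm P) (hz0 : Sm z0) (hz1 : Sm z1) (p : Q) :
    ∂₀ (fun p => (∂₀ s0 p + ∂₁ s1 p) * ∂₁ P p
        - ν * (∂₀ w p * ∂₀ s0 p + ∂₁ w p * ∂₁ s0 p - (∂₀ w p * ∂₀ s0 p + ∂₁ w p * ∂₀ s1 p))
        - ν * (w p * z0 p)) p
      + ∂₁ (fun p => -((∂₀ s0 p + ∂₁ s1 p) * ∂₀ P p)
        - ν * (∂₀ w p * ∂₀ s1 p + ∂₁ w p * ∂₁ s1 p - (∂₀ w p * ∂₁ s0 p + ∂₁ w p * ∂₁ s1 p))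
        - ν * (w p * z1 p)) p
    = ∂₀ (fun p => ∂₀ s0 p + ∂₁ s1 p) p * (∂₁ P p - ν * ∂₀ w p)
      - ∂₁ (fun p => ∂₀ s0 p + ∂₁ s1 p) p * (∂₀ P p + ν * ∂₁ w p)
      + ν * (∂₀ w p * (∂₀ (∂₀ s0) p + ∂₁ (∂₁ s0) p - z0 p)
        + ∂₁ w p * (∂₀ (∂₀ s1) p + ∂₁ (∂₁ s1) p - z1 p))
      - ν * (w p * (∂₀ z0 p + ∂₁ z1 p)) := by
  simp (disch := fun_prop) only [pd_add, pd_sub, pd_neg, pd_mul, pd_const]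
  rw [pd_comm (w := ex 1) (w' := ex 0) hP, pd_comm (w := ex 1) (w' := ex 0) hs0,
    pd_comm (w := ex 1) (w' := ex 0) hs1, pd_comm (w := ex 1) (w' := ex 0) hw]
  ring

/-- Let `U` be solenoidal and vanish on the boundary, and let `η = a·U` vanish there to second
order. Then the second derivatives of `η` are controlled in `L²` by the Stokes operator
`νΔU - ∇Π` and by `∇U`. -/
lemma stokes_H2 (hD : GoodDom Ω φ) {ν : ℝ} (hν : 0 < ν) {U : Fin 2 → Q → ℝ}
    (hU : ∀ i, Sm (U i)) (h0 : ∀ i, B0 Ω (U i))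
    (hdiv : ∀ t, 0 ≤ t → ∀ x ∈ Ω, ∂₀ (U 0) (t, x) + ∂₁ (U 1) (t, x) = 0)
    {P : Q → ℝ} (hP : Sm P) {F : Fin 2 → Q → ℝ} {N : ℝ → ℝ} (hF : ∀ j, NB Ω 1 (F j) N)
    (hFe : ∀ j, ∀ t, 0 ≤ t → ∀ x ∈ Ω,
      F j (t, x) = ν * (∂₀ (∂₀ (U j)) (t, x) + ∂₁ (∂₁ (U j)) (t, x)) - pd (ex j) P (t, x))
    (hN : ∀ i j, NB Ω 1 (pd (ex i) (U j)) N)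
    {a b : Q → ℝ} (ha : Stat a) (hb : Stat b)
    (h1 : ∀ i, B0 Ω (pd (ex i) fun p => a p * U 0 p + b p * U 1 p)) :
    H2 Ω (fun p => a p * U 0 p + b p * U 1 p) =O[T0] N := by
  have hU0 := hU 0
  have hU1 := hU 1
  have has := ha.sm
  have hbs := hb.sm
  have hUN : ∀ j, NB Ω 1 (U j) N := fun j =>
    ⟨(hU j).continuous, (nn_one_gr hD (hU j) (h0 j)).trans (gr_bigO fun i => (hN i j).bd)⟩
  set η : Q → ℝ := fun p => a p * U 0 p + b p * U 1 p with hη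
  have hηs : Sm η := by
    have : ContDiff ℝ (⊤ : ℕ∞) η := by rw [hη]; fun_prop
    exact this
  have hη0 : B0 Ω η := fun t ht x hx => by simp [hη, h0 0 t ht x hx, h0 1 t ht x hx]
  set M := H2 Ω η
  have n0 : NB Ω 1 η M := NB.zero_H2 hD hηs hη0 h1
  have n1 : ∀ i, NB Ω 1 (pd (ex i) η) M := NB.gr_H2 hD hηs h1
  have n2 : ∀ i j, NB Ω 1 (pd (ex i) (pd (ex j) η)) M := NB.H2 hηs
  -- vorticity
  set w : Q → ℝ := fun p => ∂₀ (U 1) p - ∂₁ (U 0) p with hw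
  have hws : ContDiff ℝ (⊤ : ℕ∞) w := by rw [hw]; fun_prop
  have hwN : NB Ω 1 w N := (hN 0 1).sub hD (hN 1 0)
  have hlap0 : ∀ t, 0 ≤ t → ∀ x ∈ Ω,
      ∂₀ (∂₀ (U 0)) (t, x) + ∂₁ (∂₁ (U 0)) (t, x) = -∂₁ w (t, x) := by
    intro t ht x hx
    have := pd_congr hD.isOpen (F := fun p => ∂₀ (U 0) p + ∂₁ (U 1) p) (G := fun _ => 0)
      (by exact ContDiff.add (contDiff_pd hU0) (contDiff_pd hU1)) contDiff_const hdiv ht hx 0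
    rw [pd_const, pd_add (by fun_prop) (by fun_prop)] at this
    rw [hw, pd_sub (by fun_prop) (by fun_prop), pd_comm (w := ex 1) (w' := ex 0) hU1]
    linarith
  have hlap1 : ∀ t, 0 ≤ t → ∀ x ∈ Ω,
      ∂₀ (∂₀ (U 1)) (t, x) + ∂₁ (∂₁ (U 1)) (t, x) = ∂₀ w (t, x) := by
    intro t ht x hx
    have := pd_congr hD.isOpen (F := fun p => ∂₀ (U 0) p + ∂₁ (U 1) p) (G := fun _ => 0)
      (by exact ContDiff.add (contDiff_pd hU0) (contDiff_pd hU1)) contDiff_const hdiv ht hx 1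
    rw [pd_const, pd_add (by fun_prop) (by fun_prop)] at this
    rw [hw, pd_sub (by fun_prop) (by fun_prop), ← pd_comm (w := ex 1) (w' := ex 0) hU0]
    linarith
  -- the tangential multiples of `η`
  set s0 : Q → ℝ := fun p => b p * η p with hs0
  set s1 : Q → ℝ := fun p => -(a p * η p) with hs1
  have hs0s : ContDiff ℝ (⊤ : ℕ∞) s0 := by rw [hs0]; fun_prop
  have hs1s : ContDiff ℝ (⊤ : ℕ∞) s1 := by rw [hs1]; fun_prop
  set z0 : Q → ℝ := fun p => 2 * (∂₀ b p * ∂₀ η p + ∂₁ b p * ∂₁ η p)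
    + (∂₀ (∂₀ b) p + ∂₁ (∂₁ b) p) * η p with hz0
  set z1 : Q → ℝ := fun p => -(2 * (∂₀ a p * ∂₀ η p + ∂₁ a p * ∂₁ η p)
    + (∂₀ (∂₀ a) p + ∂₁ (∂₁ a) p) * η p) with hz1
  have hz0s : ContDiff ℝ (⊤ : ℕ∞) z0 := by rw [hz0]; fun_prop
  have hz1s : ContDiff ℝ (⊤ : ℕ∞) z1 := by rw [hz1]; fun_prop
  have lap_s0 : ∀ p, ∂₀ (∂₀ s0) p + ∂₁ (∂₁ s0) p - z0 p = b p * (∂₀ (∂₀ η) p + ∂₁ (∂₁ η) p) := by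
    intro p
    rw [hs0, hz0]
    simp (disch := fun_prop) only [pd_add, pd_mul]
    ring
  have lap_s1 : ∀ p, ∂₀ (∂₀ s1) p + ∂₁ (∂₁ s1) p - z1 p = -(a p * (∂₀ (∂₀ η) p + ∂₁ (∂₁ η) p)) := by
    intro p
    rw [hs1, hz1]
    simp (disch := fun_prop) only [pd_add, pd_mul, pd_neg]
    ring
  have h1' : ∀ i t, 0 ≤ t → ∀ x ∈ frontier Ω, pd (ex i) η (t, x) = 0 := h1
  have bs0 : ∀ i t, 0 ≤ t → ∀ x ∈ frontier Ω, pd (ex i) s0 (t, x) = 0 := by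
    intro i t ht x hx
    rw [hs0, pd_mul (by fun_prop) (by fun_prop)]
    simp [h1' i t ht x hx, hη0 t ht x hx]
  have bs1 : ∀ i t, 0 ≤ t → ∀ x ∈ frontier Ω, pd (ex i) s1 (t, x) = 0 := by
    intro i t ht x hx
    rw [hs1, pd_neg, pd_mul (by fun_prop) (by fun_prop)]
    simp [h1' i t ht x hx, hη0 t ht x hx]
  have bz0 : ∀ t, 0 ≤ t → ∀ x ∈ frontier Ω, z0 (t, x) = 0 := by
    intro t ht x hx
    simp [hz0, h1' 0 t ht x hx, h1' 1 t ht x hx, hη0 t ht x hx]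
  have bz1 : ∀ t, 0 ≤ t → ∀ x ∈ frontier Ω, z1 (t, x) = 0 := by
    intro t ht x hx
    simp [hz1, h1' 0 t ht x hx, h1' 1 t ht x hx, hη0 t ht x hx]
  set χ : Q → ℝ := fun p => ∂₀ s0 p + ∂₁ s1 p with hχ
  have hχs : ContDiff ℝ (⊤ : ℕ∞) χ := by rw [hχ]; fun_prop
  set r : Q → ℝ := fun p => 2 * (∂₀ a p * ∂₀ (U 0) p + ∂₁ a p * ∂₁ (U 0) p
      + (∂₀ b p * ∂₀ (U 1) p + ∂₁ b p * ∂₁ (U 1) p))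
    + ((∂₀ (∂₀ a) p + ∂₁ (∂₁ a) p) * U 0 p + (∂₀ (∂₀ b) p + ∂₁ (∂₁ b) p) * U 1 p) with hr
  have lap_η : ∀ p, a p * (∂₀ (∂₀ (U 0)) p + ∂₁ (∂₁ (U 0)) p)
      + b p * (∂₀ (∂₀ (U 1)) p + ∂₁ (∂₁ (U 1)) p) = ∂₀ (∂₀ η) p + ∂₁ (∂₁ η) p - r p := by
    intro p
    rw [hη, hr]
    simp (disch := fun_prop) only [pd_add, pd_mul]
    ring
  set L : Q → ℝ := fun p => ∂₀ (∂₀ η) p + ∂₁ (∂₁ η) p with hL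
  have hLc : Continuous L := by rw [hL]; fun_prop
  -- everything except `ν (Δη)²` integrates to `O(M N)`
  have nχ : ∀ i, NB Ω 1 (pd (ex i) χ) M := by
    intro i
    have : ∀ (c : Q → ℝ), Stat c → ∀ j, NB Ω 1 (pd (ex i) (pd (ex j) fun p => c p * η p)) M := by
      intro c hc j
      have hcs := hc.sm
      simp (disch := fun_prop) only [pd_add, pd_mul]
      exact ((n0.stat hD ((hc.pd j).pd i)).add hD ((n1 i).stat hD (hc.pd j))).add hD
        (((n1 j).stat hD (hc.pd i)).add hD ((n2 i j).stat hD hc))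
    rw [hχ, pd_add (by fun_prop) (by fun_prop), hs0, hs1]
    refine (this b hb 0).add hD ?_
    simp only [pd_neg]
    exact (this a ha 1).neg
  have nzc : ∀ (c : Q → ℝ), Stat c → ∀ i, NB Ω 1 (pd (ex i) fun p =>
      2 * (∂₀ c p * ∂₀ η p + ∂₁ c p * ∂₁ η p) + (∂₀ (∂₀ c) p + ∂₁ (∂₁ c) p) * η p) M := by
    intro c hc i
    have hcs := hc.sm
    simp (disch := fun_prop) only [pd_add, pd_mul, pd_const, zero_mul, zero_add]
    refine NB.add hD (NB.const_mul hD (NB.add hD (NB.add hD ?_ ?_) (NB.add hD ?_ ?_)) 2) (NB.add hD ?_ ?_)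
    · exact (n1 0).stat hD ((hc.pd 0).pd i)
    · exact (n2 i 0).stat hD (hc.pd 0)
    · exact (n1 1).stat hD ((hc.pd 1).pd i)
    · exact (n2 i 1).stat hD (hc.pd 1)
    · exact n0.stat hD ((((hc.pd 0).pd 0).pd i).add (((hc.pd 1).pd 1).pd i))
    · exact (n1 i).stat hD (((hc.pd 0).pd 0).add ((hc.pd 1).pd 1))
  have nz : NB Ω 1 (fun p => ∂₀ z0 p + ∂₁ z1 p) M := by
    refine (nzc b hb 0).add hD ?_
    rw [hz1, pd_neg]
    exact (nzc a ha 1).neg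
  have nr : NB Ω 1 r N := by
    refine NB.add hD (NB.const_mul hD (NB.add hD (NB.add hD ?_ ?_) (NB.add hD ?_ ?_)) 2) (NB.add hD ?_ ?_)
    · exact (hN 0 0).stat hD (ha.pd 0)
    · exact (hN 1 0).stat hD (ha.pd 1)
    · exact (hN 0 1).stat hD (hb.pd 0)
    · exact (hN 1 1).stat hD (hb.pd 1)
    · exact (hUN 0).stat hD (((ha.pd 0).pd 0).add ((ha.pd 1).pd 1))
    · exact (hUN 1).stat hD (((hb.pd 0).pd 0).add ((hb.pd 1).pd 1))
  have nL : NB Ω 1 L M := (n2 0 0).add hD (n2 1 1)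
  set Rest : Q → ℝ := fun p => (∂₀ χ p * F 1 p - ∂₁ χ p * F 0 p) + ν * (L p * r p)
    + ν * ((∂₀ z0 p + ∂₁ z1 p) * w p) with hRest
  have nRest : NB Ω 0 Rest (fun t => M t * N t) :=
    ((((nχ 0).mul hD (hF 1)).sub hD ((nχ 1).mul hD (hF 0))).add hD
      ((nL.mul hD nr).const_mul hD ν)).add hD ((nz.mul hD hwN).const_mul hD ν)
  have key : ∀ t, 0 ≤ t → J Ω (fun p => ν * L p ^ 2 - Rest p) t = 0 := by
    intro t ht
    refine J_div2 hD ht ?_ ?_ ?_ ?_ (fun x hx => ?_) (V := fun p => (∂₀ s0 p + ∂₁ s1 p) * ∂₁ P p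
        - ν * (∂₀ w p * ∂₀ s0 p + ∂₁ w p * ∂₁ s0 p - (∂₀ w p * ∂₀ s0 p + ∂₁ w p * ∂₀ s1 p))
        - ν * (w p * z0 p)) (W := fun p => -((∂₀ s0 p + ∂₁ s1 p) * ∂₀ P p)
        - ν * (∂₀ w p * ∂₀ s1 p + ∂₁ w p * ∂₁ s1 p - (∂₀ w p * ∂₁ s0 p + ∂₁ w p * ∂₁ s1 p))
        - ν * (w p * z1 p))
    · fun_prop
    · fun_prop
    · intro t ht x hx; simp [bs0 _ t ht x hx, bs1 _ t ht x hx, bz0 t ht x hx]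
    · intro t ht x hx; simp [bs0 _ t ht x hx, bs1 _ t ht x hx, bz1 t ht x hx]
    · rw [div_identity ν hs0s hs1s hws hP hz0s hz1s, lap_s0, lap_s1]
      have e0 := hFe 0 t ht x hx
      have e1 := hFe 1 t ht x hx
      rw [hlap0 t ht x hx] at e0
      rw [hlap1 t ht x hx] at e1
      have e2 := lap_η (t, x)
      rw [hlap0 t ht x hx, hlap1 t ht x hx] at e2
      have e3 : ∂₁ P (t, x) - ν * ∂₀ w (t, x) = -F 1 (t, x) := by linarith
      have e4 : ∂₀ P (t, x) + ν * ∂₁ w (t, x) = -F 0 (t, x) := by linarith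
      rw [e3, e4]
      change ν * L (t, x) ^ 2 - ((∂₀ χ (t, x) * F 1 (t, x) - ∂₁ χ (t, x) * F 0 (t, x))
        + ν * (L (t, x) * r (t, x)) + ν * ((∂₀ z0 (t, x) + ∂₁ z1 (t, x)) * w (t, x)))
        = ∂₀ χ (t, x) * -F 1 (t, x) - ∂₁ χ (t, x) * -F 0 (t, x)
          + ν * (∂₀ w (t, x) * (b (t, x) * L (t, x)) + ∂₁ w (t, x) * -(a (t, x) * L (t, x)))
          - ν * (w (t, x) * (∂₀ z0 (t, x) + ∂₁ z1 (t, x)))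
      have e5 : L (t, x) - r (t, x) = a (t, x) * -∂₁ w (t, x) + b (t, x) * ∂₀ w (t, x) := e2.symm
      linear_combination ν * L (t, x) * e5
  apply bigO_cancel
  refine (H2_sq hD hηs h1).trans ?_
  refine IsBigO.trans ?_ nRest.J
  refine bigO_T0 ν⁻¹ fun t ht => ?_
  have := key t ht
  rw [J_sub hD (by fun_prop) nRest.cont, J_const_mul] at this
  have e : J Ω Rest t = ν * J Ω (fun p => L p ^ 2) t := by linarith
  rw [e, abs_mul, abs_of_pos hν, ← mul_assoc, inv_mul_cancel₀ hν.ne', one_mul]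

end Stokes

/-! ### Estimates for solenoidal fields near the boundary -/

/-- Coefficients of the three fields `HH` with respect to `U`. -/
def ca (φ : E2 → ℝ) : Fin 3 → Q → ℝ := ![∂₀ (lift φ), lift φ, fun _ => 0]

/-- Coefficients of the three fields `HH` with respect to `U`. -/
def cb (φ : E2 → ℝ) : Fin 3 → Q → ℝ := ![∂₁ (lift φ), fun _ => 0, lift φ]

/-- The combinations `U·∇φ`, `φ U₀`, `φ U₁` of a vector field `U`. If `U` is solenoidal and vanishes
on the boundary, they vanish there to second order. -/
def HH (φ : E2 → ℝ) (U : Fin 2 → Q → ℝ) (k : Fin 3) : Q → ℝ :=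
  fun p => ca φ k p * U 0 p + cb φ k p * U 1 p

/-- A solenoidal field `U` vanishing on the boundary, with bounded energy, together with a bound `D`
of `‖∇U‖₂` and a bound `N ≥ 1` for the second derivatives of the fields `HH φ U k`. -/
structure Est (Ω : Set E2) (φ : E2 → ℝ) (U : Fin 2 → Q → ℝ) (D N : ℝ → ℝ) : Prop where
  dom : GoodDom Ω φ
  sm : ∀ j, ContDiff ℝ (⊤ : ℕ∞) (U j)
  b0 : ∀ j, B0 Ω (U j)
  div : ∀ t, 0 ≤ t → ∀ x ∈ Ω, ∂₀ (U 0) (t, x) + ∂₁ (U 1) (t, x) = 0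
  gU : ∀ i j, NB Ω 1 (pd (ex i) (U j)) D
  D0 : ∀ t, 0 ≤ D t
  N0 : ∀ t, 0 ≤ N t
  DN : D =O[T0] N
  oneN : (fun _ => (1 : ℝ)) =O[T0] N
  en : ∀ j, NB Ω 1 (U j) (fun _ => 1)
  h2 : ∀ k, H2 Ω (HH φ U k) =O[T0] N

section HHlemmas
variable {Ω : Set E2} {φ : E2 → ℝ} {U : Fin 2 → Q → ℝ}

lemma ca_stat (hD : GoodDom Ω φ) (k : Fin 3) : Stat (ca φ k) := by
  fin_cases k
  · exact hD.stat.pd 0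
  · exact hD.stat
  · exact Stat.const 0

lemma cb_stat (hD : GoodDom Ω φ) (k : Fin 3) : Stat (cb φ k) := by
  fin_cases k
  · exact hD.stat.pd 1
  · exact Stat.const 0
  · exact hD.stat

lemma HH_sm (hD : GoodDom Ω φ) (hU : ∀ j, ContDiff ℝ (⊤ : ℕ∞) (U j)) (k : Fin 3) :
    ContDiff ℝ (⊤ : ℕ∞) (HH φ U k) := by
  have h1 := (ca_stat hD k).sm
  have h2 := (cb_stat hD k).sm
  have h3 := hU 0
  have h4 := hU 1
  unfold HH; fun_prop

lemma HH_b0 (hb : ∀ j, B0 Ω (U j)) (k : Fin 3) : B0 Ω (HH φ U k) := fun t ht x hx => by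
  simp [HH, hb 0 t ht x hx, hb 1 t ht x hx]

lemma HH_pd (hD : GoodDom Ω φ) (hU : ∀ j, ContDiff ℝ (⊤ : ℕ∞) (U j)) (k : Fin 3) (i : Fin 2) :
    pd (ex i) (HH φ U k) = fun p => pd (ex i) (ca φ k) p * U 0 p + ca φ k p * pd (ex i) (U 0) p
      + (pd (ex i) (cb φ k) p * U 1 p + cb φ k p * pd (ex i) (U 1) p) := by
  have h1 := (ca_stat hD k).sm
  have h2 := (cb_stat hD k).sm
  have h3 := hU 0
  have h4 := hU 1
  unfold HH
  simp (disch := fun_prop) only [pd_add, pd_mul]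

lemma HH_b1 (hD : GoodDom Ω φ) (hU : ∀ j, ContDiff ℝ (⊤ : ℕ∞) (U j)) (hb : ∀ j, B0 Ω (U j))
    (hdiv : ∀ t, 0 ≤ t → ∀ x ∈ Ω, ∂₀ (U 0) (t, x) + ∂₁ (U 1) (t, x) = 0) (k : Fin 3) (i : Fin 2) :
    B0 Ω (pd (ex i) (HH φ U k)) := by
  fin_cases k
  · exact B0_grad_normal hD hU hb hdiv i
  all_goals
    intro t ht x hx
    have h0 : lift φ (t, x) = 0 := hD.zero x hx
    rw [HH_pd hD hU]
    simp [hb 0 t ht x hx, hb 1 t ht x hx, ca, cb, h0]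

end HHlemmas

lemma NB.of_c0 {Ω : Set E2} {φ : E2 → ℝ} {F : Q → ℝ} {k : ℕ} {m : ℝ → ℝ} (hD : GoodDom Ω φ)
    (hF : Continuous F) (h : NB Ω k (fun p => c0 φ p * F p) m) : NB Ω k F m :=
  h.of_bigO hD hF (bigO_c0_mul hD (isBigO_refl _ _))

/-- The tangential derivative. -/
def Tg (φ : E2 → ℝ) (G : Q → ℝ) : Q → ℝ :=
  fun p => -(∂₁ (lift φ) p * ∂₀ G p) + ∂₀ (lift φ) p * ∂₁ G p

/-- The tangential component of `U`. -/
def uT (φ : E2 → ℝ) (U : Fin 2 → Q → ℝ) : Q → ℝ :=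
  fun p => -(∂₁ (lift φ) p * U 0 p) + ∂₀ (lift φ) p * U 1 p

/-- The part of `(|∇φ|² + φ²) U` that is expressed through the fields `HH`. -/
def hv (φ : E2 → ℝ) (U : Fin 2 → Q → ℝ) (i : Fin 2) : Q → ℝ :=
  fun p => pd (ex i) (lift φ) p * HH φ U 0 p + lift φ p * HH φ U (![1, 2] i) p

/-- Splitting of the transport operator into a part with coefficients vanishing to second order and
a tangential derivative. -/
lemma c0_transport (φ : E2 → ℝ) (U : Fin 2 → Q → ℝ) (x y : ℝ) (p : Q) :
    c0 φ p * (U 0 p * x + U 1 p * y) = hv φ U 0 p * x + hv φ U 1 p * y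
      + uT φ U p * (-(∂₁ (lift φ) p * x) + ∂₀ (lift φ) p * y) := by
  simp [hv, HH, ca, cb, uT, c0]; ring

namespace Est
variable {Ω : Set E2} {φ : E2 → ℝ} {U : Fin 2 → Q → ℝ} {D N : ℝ → ℝ}

lemma nU (h : Est Ω φ U D N) (j : Fin 2) : NB Ω 3 (U j) D :=
  ⟨(h.sm j).continuous, (nn_three_gr h.dom (h.sm j) (h.b0 j)).trans (gr_bigO fun i => (h.gU i j).bd)⟩

lemma comb (h : Est Ω φ U D N) {k : ℕ} {m : ℝ → ℝ} (hm : ∀ j, NB Ω k (U j) m) (l : Fin 3) :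
    NB Ω k (HH φ U l) m :=
  ((hm 0).stat h.dom (ca_stat h.dom l)).add h.dom ((hm 1).stat h.dom (cb_stat h.dom l))

lemma smH (h : Est Ω φ U D N) (k : Fin 3) : ContDiff ℝ (⊤ : ℕ∞) (HH φ U k) := HH_sm h.dom h.sm k
lemma b0H (h : Est Ω φ U D N) (k : Fin 3) : B0 Ω (HH φ U k) := HH_b0 h.b0 k
lemma b1H (h : Est Ω φ U D N) (k : Fin 3) (i : Fin 2) : B0 Ω (pd (ex i) (HH φ U k)) :=
  HH_b1 h.dom h.sm h.b0 h.div k i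

lemma nH (h : Est Ω φ U D N) (k : Fin 3) : NB Ω 3 (HH φ U k) D := h.comb h.nU k
lemma eH (h : Est Ω φ U D N) (k : Fin 3) : NB Ω 1 (HH φ U k) (fun _ => 1) := h.comb h.en k

lemma gH (h : Est Ω φ U D N) (k : Fin 3) (i : Fin 2) : NB Ω 1 (pd (ex i) (HH φ U k)) D := by
  rw [HH_pd h.dom h.sm]
  have n : ∀ j, NB Ω 1 (U j) D := fun j => ((h.nU j).step h.dom).step h.dom
  have hD := h.dom
  exact (((n 0).stat hD ((ca_stat hD k).pd i)).add hD ((h.gU i 0).stat hD (ca_stat hD k))).add hD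
    (((n 1).stat hD ((cb_stat hD k).pd i)).add hD ((h.gU i 1).stat hD (cb_stat hD k)))

lemma g2H (h : Est Ω φ U D N) (k : Fin 3) (i j : Fin 2) :
    NB Ω 1 (pd (ex i) (pd (ex j) (HH φ U k))) N := (NB.H2 (h.smH k) i j).mono (h.h2 k)

lemma g3H (h : Est Ω φ U D N) (k : Fin 3) (i : Fin 2) : NB Ω 3 (pd (ex i) (HH φ U k)) N := by
  have hs := h.smH k
  exact ⟨by fun_prop, (nn_three_gr h.dom (contDiff_pd hs) (h.b1H k i)).trans
    (gr_bigO fun j => (h.g2H k j i).bd)⟩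

/-- Interpolation for the gradients of the fields `HH`. -/
lemma gHi (h : Est Ω φ U D N) (k : Fin 3) (i : Fin 2) :
    NB Ω 2 (pd (ex i) (HH φ U k)) (fun t => √(D t) * √(N t)) := by
  have hs := h.smH k
  refine ⟨by fun_prop, bigO_of_sq ?_⟩
  refine (nn_two_sq h.dom (contDiff_pd hs) (h.b1H k i)).trans ?_
  simp only [mul_pow, sq_sqrt (h.D0 _), sq_sqrt (h.N0 _)]
  exact (h.gH k i).bd.mul (gr_bigO fun j => (h.g2H k j i).bd)

lemma nUi (h : Est Ω φ U D N) (j : Fin 2) : NB Ω 2 (U j) (fun t => √(D t)) := by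
  refine ⟨(h.sm j).continuous, bigO_of_sq ?_⟩
  refine (nn_two_sq h.dom (h.sm j) (h.b0 j)).trans ?_
  simp only [sq_sqrt (h.D0 _)]
  simpa using (h.en j).bd.mul (gr_bigO fun i => (h.gU i j).bd)

/-- `‖∇H‖₂² = O(‖H‖₂ ‖∇²H‖₂) = O(N)`. -/
lemma gHe (h : Est Ω φ U D N) (k : Fin 3) (i : Fin 2) :
    NB Ω 1 (pd (ex i) (HH φ U k)) (fun t => √(N t)) := by
  have hs := h.smH k
  refine ⟨by fun_prop, bigO_of_sq ?_⟩
  simp only [sq_sqrt (h.N0 _)]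
  have e : NB Ω 0 (fun p => HH φ U k p * pd (ex i) (pd (ex i) (HH φ U k)) p) N := by
    simpa using (h.eH k).mul h.dom (h.g2H k i i)
  refine IsBigO.trans (bigO_T0 1 fun t ht => ?_) e.J
  have hz : J Ω (fun p => pd (ex i) (HH φ U k) p ^ 2
      + HH φ U k p * pd (ex i) (pd (ex i) (HH φ U k)) p) t = 0 := by
    fin_cases i
    · refine J_div2 h.dom ht (V := fun p => HH φ U k p * ∂₀ (HH φ U k) p) (W := fun _ => 0)
        (by fun_prop) (by fun_prop) ((h.b0H k).mul _) (fun _ _ _ _ => rfl) fun x _ => ?_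
      rw [pd_mul (by fun_prop) (by fun_prop), pd_const]
      simp; ring
    · refine J_div2 h.dom ht (W := fun p => HH φ U k p * ∂₁ (HH φ U k) p) (V := fun _ => 0)
        (by fun_prop) (by fun_prop) (fun _ _ _ _ => rfl) ((h.b0H k).mul _) fun x _ => ?_
      rw [pd_mul (by fun_prop) (by fun_prop), pd_const]
      simp; ring
  rw [J_add h.dom (by fun_prop) (by fun_prop), ← nn_one_sq] at hz
  rw [one_mul, eq_neg_of_add_eq_zero_left hz, abs_neg]

/-- A bound on the product of two fields vanishing on the boundary, one of them to second order. -/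
lemma sup_prod (h : Est Ω φ U D N) {g : Q → ℝ} (hg : ContDiff ℝ (⊤ : ℕ∞) g) (g0 : B0 Ω g)
    (k : Fin 3) {m : ℝ → ℝ}
    (h1 : NB Ω 0 (fun p => HH φ U k p * ∂₁ (∂₀ g) p) m)
    (h2 : NB Ω 0 (fun p => ∂₀ g p * ∂₁ (HH φ U k) p) m)
    (h3 : NB Ω 0 (fun p => ∂₁ g p * ∂₀ (HH φ U k) p) m)
    (h4 : NB Ω 0 (fun p => g p * ∂₁ (∂₀ (HH φ U k)) p) m) :
    (fun p => g p * HH φ U k p) =O[X0 Ω] fun p => m p.1 := by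
  have hs := h.smH k
  have hsup := sup_le_mixed h.dom (g := fun p => g p * HH φ U k p)
    (show ContDiff ℝ (⊤ : ℕ∞) _ by fun_prop) (g0.mul _) (fun t ht x hx => by
      rw [pd_mul (by fun_prop) (by fun_prop)]
      simp [g0 t ht x hx, h.b0H k t ht x hx])
  refine hsup.trans ?_
  have e : NB Ω 0 (∂₁ (∂₀ fun p => g p * HH φ U k p)) m := by
    simp (disch := fun_prop) only [pd_add, pd_mul]
    refine NB.add h.dom (NB.add h.dom ?_ h2) (NB.add h.dom h3 h4)
    exact h1.congr h.dom (by fun_prop) fun _ _ _ _ => mul_comm _ _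
  obtain ⟨C, hC, hb⟩ := exists_T0 e.bd
  exact bigO_X0 C fun t ht x _ => hb t ht

lemma sup_H (h : Est Ω φ U D N) (k : Fin 3) :
    HH φ U k =O[X0 Ω] fun p => √(N p.1) := by
  have hs := h.smH k
  have e : (fun t => √(N t) * √(N t)) = N := funext fun t => mul_self_sqrt (h.N0 t)
  have h1 : NB Ω 0 (fun p => HH φ U k p * ∂₁ (∂₀ (HH φ U k)) p) N := by
    simpa using (h.eH k).mul h.dom (h.g2H k 1 0)
  have h2 : ∀ i j, NB Ω 0 (fun p => pd (ex i) (HH φ U k) p * pd (ex j) (HH φ U k) p) N := by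
    intro i j
    have := (h.gHe k i).mul h.dom (h.gHe k j)
    rwa [e] at this
  have := h.sup_prod hs (h.b0H k) k h1 (h2 _ _) (h2 _ _) h1
  refine IsBigO.of_pow two_ne_zero ?_
  refine (this.congr_left fun p => ?_).congr_right fun p => ?_
  · simp [sq]
  · exact (sq_sqrt (h.N0 _)).symm

lemma sup_HH (h : Est Ω φ U D N) (k l : Fin 3) :
    (fun p => HH φ U k p * HH φ U l p) =O[X0 Ω] fun p => D p.1 * N p.1 := by
  have hD := h.dom
  have n : ∀ k, NB Ω 1 (HH φ U k) D := fun k => ((h.nH k).step hD).step hD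
  have g : ∀ k i, NB Ω 1 (pd (ex i) (HH φ U k)) N := fun k i => ((h.g3H k i).step hD).step hD
  exact h.sup_prod (h.smH k) (h.b0H k) l
    ((n l).mul hD (h.g2H k 1 0)) ((h.gH k 0).mul hD (g l 1)) ((h.gH k 1).mul hD (g l 0))
    ((n k).mul hD (h.g2H l 1 0))

/-- The second derivatives of `U` are square integrable with the weight `φ`. -/
lemma wU (h : Est Ω φ U D N) (i k j : Fin 2) :
    NB Ω 1 (fun p => lift φ p * pd (ex i) (pd (ex k) (U j)) p) N := by
  have hD := h.dom
  have hf := hD.stat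
  have hfs := hf.sm
  have hs := h.sm j
  have n : NB Ω 1 (U j) N := (((h.nU j).step hD).step hD).mono h.DN
  have e : HH φ U (![1, 2] j) = fun p => lift φ p * U j p := by
    funext p; fin_cases j <;> simp [HH, ca, cb]
  have e2 := h.g2H (![1, 2] j) i k
  rw [e] at e2
  have e3 := e2.sub hD ((n.stat hD ((hf.pd k).pd i)).add hD
    ((((h.gU i j).mono h.DN).stat hD (hf.pd k)).add hD (((h.gU k j).mono h.DN).stat hD (hf.pd i))))
  refine e3.congr hD (by fun_prop) fun t ht x _ => ?_
  simp (disch := fun_prop) only [pd_add, pd_mul]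
  ring

/-- Hardy's inequality for a function paired with second derivatives of `U`. -/
lemma hardyU (h : Est Ω φ U D N) {g : Q → ℝ} (hg : ContDiff ℝ (⊤ : ℕ∞) g) (g0 : B0 Ω g) {m : ℝ → ℝ}
    (hm : ∀ i, NB Ω 1 (pd (ex i) g) m) (i k j : Fin 2) :
    NB Ω 0 (fun p => g p * pd (ex i) (pd (ex k) (U j)) p) (fun t => m t * N t) := by
  have hs := h.sm j
  obtain ⟨C, hC, hh⟩ := hardy h.dom
  refine ⟨by fun_prop, IsBigO.trans (bigO_T0 C fun t ht => ?_)
    ((gr_bigO fun i => (hm i).bd).mul (h.wU i k j).bd)⟩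
  rw [abs_of_nonneg (nn_nonneg _ _ _),
    abs_of_nonneg (mul_nonneg (gr_nonneg _ _) (nn_nonneg _ _ _))]
  exact hh g (pd (ex i) (pd (ex k) (U j))) hg g0 (by fun_prop) t ht

lemma sup_UH (h : Est Ω φ U D N) (j : Fin 2) (k : Fin 3) :
    (fun p => U j p * HH φ U k p) =O[X0 Ω] fun p => D p.1 * N p.1 := by
  have hD := h.dom
  have g : ∀ k i, NB Ω 1 (pd (ex i) (HH φ U k)) N := fun k i => ((h.g3H k i).step hD).step hD
  exact h.sup_prod (h.sm j) (h.b0 j) k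
    (h.hardyU (h.smH k) (h.b0H k) (h.gH k) 1 0 j) ((h.gU 0 j).mul hD (g k 1))
    ((h.gU 1 j).mul hD (g k 0)) ((((h.nU j).step hD).step hD).mul hD (h.g2H k 1 0))

end Est

/-- The convective term `(U·∇)U`. -/
def bb (U : Fin 2 → Q → ℝ) (j : Fin 2) : Q → ℝ := fun p => U 0 p * ∂₀ (U j) p + U 1 p * ∂₁ (U j) p

lemma bb_sm {U : Fin 2 → Q → ℝ} (h : ∀ j, ContDiff ℝ (⊤ : ℕ∞) (U j)) (j : Fin 2) :
    ContDiff ℝ (⊤ : ℕ∞) (bb U j) := by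
  have := h 0
  have := h 1
  have := h j
  unfold bb; fun_prop

namespace Est
variable {Ω : Set E2} {φ : E2 → ℝ} {U : Fin 2 → Q → ℝ} {D N : ℝ → ℝ}

/-- Since `U` is solenoidal, its tangential derivatives are derivatives of `U·∇φ`, up to terms of
lower order. -/
lemma Tg_eq (h : Est Ω φ U D N) (j : Fin 2) : ∃ (i : Fin 2) (s : ℝ), ∀ t, 0 ≤ t → ∀ x ∈ Ω,
    Tg φ (U j) (t, x) = s * (pd (ex i) (HH φ U 0) (t, x)
      - (pd (ex i) (∂₀ (lift φ)) (t, x) * U 0 (t, x)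
        + pd (ex i) (∂₁ (lift φ)) (t, x) * U 1 (t, x))) := by
  fin_cases j
  · refine ⟨1, 1, fun t ht x hx => ?_⟩
    rw [HH_pd h.dom h.sm]
    have := h.div t ht x hx
    simp only [ca, cb, Tg, Matrix.cons_val_zero, Fin.zero_eta]
    linear_combination -∂₁ (lift φ) (t, x) * this
  · refine ⟨0, -1, fun t ht x hx => ?_⟩
    rw [HH_pd h.dom h.sm]
    have := h.div t ht x hx
    simp only [ca, cb, Tg, Matrix.cons_val_zero, Fin.mk_one]
    linear_combination ∂₀ (lift φ) (t, x) * this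

lemma Tg_cont (h : Est Ω φ U D N) {G : Q → ℝ} (hG : ContDiff ℝ (⊤ : ℕ∞) G) :
    Continuous (Tg φ G) := by
  have := h.dom.stat.sm
  unfold Tg; fun_prop

lemma oneSN (h : Est Ω φ U D N) : (fun _ => (1 : ℝ)) =O[T0] fun t => √(N t) := by
  refine bigO_of_sq ?_
  simp only [sq_sqrt (h.N0 _), one_pow]; exact h.oneN

lemma TgUi (h : Est Ω φ U D N) (j : Fin 2) :
    NB Ω 2 (Tg φ (U j)) (fun t => √(D t) * √(N t)) := by
  obtain ⟨i, s, e⟩ := h.Tg_eq j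
  have hD := h.dom
  have n : ∀ j, NB Ω 2 (U j) (fun t => √(D t) * √(N t)) := fun j => (h.nUi j).mono (by
    simpa using (isBigO_refl (fun t => √(D t)) T0).mul h.oneSN)
  exact (((h.gHi 0 i).sub hD (((n 0).stat hD ((hD.stat.pd 0).pd i)).add hD
    ((n 1).stat hD ((hD.stat.pd 1).pd i)))).const_mul hD s).congr hD (h.Tg_cont (h.sm j)) e

lemma TgU (h : Est Ω φ U D N) (j : Fin 2) : NB Ω 2 (Tg φ (U j)) N := by
  obtain ⟨i, s, e⟩ := h.Tg_eq j
  have hD := h.dom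
  have n : ∀ j, NB Ω 2 (U j) N := fun j => ((h.nU j).step hD).mono h.DN
  exact ((((h.g3H 0 i).step hD).sub hD (((n 0).stat hD ((hD.stat.pd 0).pd i)).add hD
    ((n 1).stat hD ((hD.stat.pd 1).pd i)))).const_mul hD s).congr hD (h.Tg_cont (h.sm j)) e

/-- Tangential derivatives of `∇U` are in `L²`, as `U·∇φ` has second derivatives there. -/
lemma TgdU (h : Est Ω φ U D N) (j l : Fin 2) : NB Ω 1 (Tg φ (pd (ex l) (U j))) N := by
  obtain ⟨i, s, e⟩ := h.Tg_eq j
  have hD := h.dom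
  have hf := hD.stat
  have hfs := hf.sm
  have hs := h.sm j
  have h0 := h.sm 0
  have h1 := h.sm 1
  have hH := h.smH 0
  have n : ∀ j, NB Ω 1 (U j) N := fun j => (((h.nU j).step hD).step hD).mono h.DN
  have g : ∀ i j, NB Ω 1 (pd (ex i) (U j)) N := fun i j => (h.gU i j).mono h.DN
  -- differentiate the formula for the tangential derivative
  have n1 : NB Ω 1 (pd (ex l) fun p => s * (pd (ex i) (HH φ U 0) p
      - (pd (ex i) (∂₀ (lift φ)) p * U 0 p + pd (ex i) (∂₁ (lift φ)) p * U 1 p))) N := by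
    simp (disch := fun_prop) only [pd_add, pd_mul, pd_sub, pd_const, zero_mul, zero_add]
    refine NB.const_mul hD ((h.g2H 0 l i).sub hD (NB.add hD (NB.add hD ?_ ?_) (NB.add hD ?_ ?_))) s
    · exact (n 0).stat hD (((hf.pd 0).pd i).pd l)
    · exact (g l 0).stat hD ((hf.pd 0).pd i)
    · exact (n 1).stat hD (((hf.pd 1).pd i).pd l)
    · exact (g l 1).stat hD ((hf.pd 1).pd i)
  have n2 : NB Ω 1 (fun p => -(pd (ex l) (∂₁ (lift φ)) p * ∂₀ (U j) p)
      + pd (ex l) (∂₀ (lift φ)) p * ∂₁ (U j) p) N :=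
    (((g 0 j).stat hD ((hf.pd 1).pd l)).neg).add hD ((g 1 j).stat hD ((hf.pd 0).pd l))
  refine (n1.sub hD n2).congr hD (h.Tg_cont (by fun_prop)) fun t ht x hx => ?_
  have hT : ContDiff ℝ (⊤ : ℕ∞) (Tg φ (U j)) := by unfold Tg; fun_prop
  have := pd_congr hD.isOpen hT (G := fun p => s * (pd (ex i) (HH φ U 0) p
      - (pd (ex i) (∂₀ (lift φ)) p * U 0 p + pd (ex i) (∂₁ (lift φ)) p * U 1 p)))
    (show ContDiff ℝ (⊤ : ℕ∞) _ by fun_prop) e ht hx l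
  rw [← this]
  unfold Tg
  simp (disch := fun_prop) only [pd_add, pd_mul, pd_neg]
  rw [pd_comm (w := ex l) (w' := ex 0) hs, pd_comm (w := ex l) (w' := ex 1) hs]
  ring

lemma uT_of (h : Est Ω φ U D N) {k : ℕ} {m : ℝ → ℝ} (n : ∀ j, NB Ω k (U j) m) :
    NB Ω k (uT φ U) m :=
  (((n 0).stat h.dom (h.dom.stat.pd 1)).neg).add h.dom ((n 1).stat h.dom (h.dom.stat.pd 0))

lemma hv_cont (h : Est Ω φ U D N) (i : Fin 2) : Continuous (hv φ U i) := by
  have := h.dom.stat.sm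
  have := h.smH 0
  have := h.smH (![1, 2] i)
  unfold hv; fun_prop

/-- The convective term in `L²`. -/
lemma nb (h : Est Ω φ U D N) (j : Fin 2) : NB Ω 1 (bb U j) (fun t => √(N t) * D t) := by
  have hD := h.dom
  have sup : ∀ i, hv φ U i =O[X0 Ω] fun p => √(N p.1) := fun i =>
    ((hD.stat.pd i).mul_bigO hD (h.sup_H 0)).add (hD.stat.mul_bigO hD (h.sup_H _))
  refine NB.of_c0 hD (bb_sm h.sm j).continuous ?_
  simp only [bb, c0_transport]
  refine ((NB.sup_mul hD (h.hv_cont 0) (m := fun t => √(N t)) (sup 0) (h.gU 0 j)).add hD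
    (NB.sup_mul hD (h.hv_cont 1) (m := fun t => √(N t)) (sup 1) (h.gU 1 j))).add hD ?_
  have := (h.uT_of h.nUi).mul hD (h.TgUi j)
  refine this.mono (IsBigO.of_bound 1 (Eventually.of_forall fun t => ?_))
  have : √(D t) * (√(D t) * √(N t)) = √(N t) * D t := by
    rw [← mul_assoc, mul_self_sqrt (h.D0 t)]; ring
  rw [this, one_mul]

/-- The convective term multiplied by `U`, in `L²`. -/
lemma nUb (h : Est Ω φ U D N) (k j : Fin 2) :
    NB Ω 1 (fun p => U k p * bb U j p) (fun t => D t * N t * D t) := by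
  have hD := h.dom
  have hs := (h.sm k).continuous
  have hb := (bb_sm h.sm j).continuous
  have sup : ∀ i, (fun p => U k p * hv φ U i p) =O[X0 Ω] fun p => D p.1 * N p.1 := fun i =>
    (((hD.stat.pd i).mul_bigO hD (h.sup_UH k 0)).add
      (hD.stat.mul_bigO hD (h.sup_UH k (![1, 2] i)))).congr_left fun p => by simp only [hv]; ring
  have hc : ∀ i, Continuous fun p => U k p * hv φ U i p := fun i => hs.mul (h.hv_cont i)
  refine NB.of_c0 hD (by fun_prop) ?_
  have e1 := (NB.sup_mul hD (hc 0) (m := fun t => D t * N t) (sup 0) (h.gU 0 j)).add hD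
    (NB.sup_mul hD (hc 1) (m := fun t => D t * N t) (sup 1) (h.gU 1 j))
  have e2 := ((h.nU k).mul hD (h.uT_of h.nU)).mul hD (h.TgU j)
  have e3 := e1.add hD (e2.mono (m' := fun t => D t * N t * D t)
    (IsBigO.of_bound 1 (Eventually.of_forall fun t => by
      rw [one_mul]; apply le_of_eq; congr 1; ring)))
  have hc0 : Continuous (c0 φ) := by
    have := hD.stat.sm
    unfold c0; fun_prop
  refine e3.congr hD (by fun_prop) fun t ht x hx => ?_
  have := c0_transport φ U (∂₀ (U j) (t, x)) (∂₁ (U j) (t, x)) (t, x)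
  simp only [bb, Tg]
  linear_combination U k (t, x) * this

/-- The term `v·(b·∇)U` with `b = (U·∇)U`. -/
lemma nvbU (h : Est Ω φ U D N) {v : Q → ℝ} {G : ℝ → ℝ} (hv3 : NB Ω 3 v G) (j : Fin 2) :
    NB Ω 0 (fun p => v p * (bb U 0 p * ∂₀ (U j) p + bb U 1 p * ∂₁ (U j) p))
      (fun t => G t * D t * N t * D t) := by
  have hD := h.dom
  have hf := hD.stat
  have hfs := hf.sm
  have hvc := hv3.cont
  have h0 := h.sm 0
  have h1 := h.sm 1
  have hj := h.sm j
  have hH := h.smH 0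
  have hH' := h.smH (![1, 2] j)
  have hb0 := bb_sm h.sm 0
  have hb1 := bb_sm h.sm 1
  have hc0 : Continuous (c0 φ) := by unfold c0; fun_prop
  have n2 : ∀ j, NB Ω 2 (U j) N := fun j => ((h.nU j).step hD).mono h.DN
  have vu : ∀ i, NB Ω 2 (fun p => v p * U i p) (fun t => G t * D t) := fun i => hv3.mul hD (h.nU i)
  -- a product `v U_i A ∂U` with `A` bounded in `L⁴`
  have four : ∀ (i k l : Fin 2) (A : Q → ℝ), NB Ω 2 A N →
      NB Ω 0 (fun p => v p * U i p * A p * pd (ex k) (U l) p)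
        (fun t => G t * D t * N t * D t) :=
    fun i k l A hA => ((vu i).mul hD hA).mul hD (h.gU k l)
  -- the normal component of `b`
  have A1 : ∀ i, NB Ω 2 (fun p => pd (ex i) (HH φ U 0) p - (pd (ex i) (∂₀ (lift φ)) p * U 0 p
      + pd (ex i) (∂₁ (lift φ)) p * U 1 p)) N := fun i => ((h.g3H 0 i).step hD).sub hD
    (((n2 0).stat hD ((hf.pd 0).pd i)).add hD ((n2 1).stat hD ((hf.pd 1).pd i)))
  have A2 : ∀ i, NB Ω 2 (fun p => pd (ex i) (HH φ U (![1, 2] j)) p - pd (ex i) (lift φ) p * U j p) N :=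
    fun i => ((h.g3H _ i).step hD).sub hD ((n2 j).stat hD (hf.pd i))
  have e := ((((four 0 0 j _ (A1 0)).stat hD (hf.pd 0)).add hD
        ((four 0 1 j _ (A1 0)).stat hD (hf.pd 1))).add hD
      (((four 1 0 j _ (A1 1)).stat hD (hf.pd 0)).add hD
        ((four 1 1 j _ (A1 1)).stat hD (hf.pd 1)))).add hD
    ((((four 0 0 0 _ (h.TgU j)).add hD (four 1 1 0 _ (h.TgU j))).stat hD (hf.pd 1).neg).add hD
      (((four 0 0 1 _ (h.TgU j)).add hD (four 1 1 1 _ (h.TgU j))).stat hD (hf.pd 0)))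
  have e' := e.add hD ((((four 0 0 0 _ (A2 0)).add hD (four 1 1 0 _ (A2 0))).stat hD hf).add hD
      (((four 0 0 1 _ (A2 1)).add hD (four 1 1 1 _ (A2 1))).stat hD hf))
  refine NB.of_c0 hD (by fun_prop) (e'.congr hD (by fun_prop) fun t ht x hx => ?_)
  have eH : HH φ U (![1, 2] j) = fun p => lift φ p * U j p := by
    funext p; fin_cases j <;> simp [HH, ca, cb]
  rw [eH, HH_pd hD h.sm, HH_pd hD h.sm]
  simp (disch := fun_prop) only [pd_mul]
  simp only [c0, bb, Tg, ca, cb, Matrix.cons_val_zero]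
  ring

/-- The term `v·(U⊗U):∇²U`. -/
lemma nvUU (h : Est Ω φ U D N) {v : Q → ℝ} {G : ℝ → ℝ} (hvs : ContDiff ℝ (⊤ : ℕ∞) v)
    (v0 : B0 Ω v) (hvG : ∀ i, NB Ω 1 (pd (ex i) v) G) (j : Fin 2) :
    NB Ω 0 (fun p => v p * (U 0 p * (U 0 p * ∂₀ (∂₀ (U j)) p + U 1 p * ∂₁ (∂₀ (U j)) p)
        + U 1 p * (U 0 p * ∂₀ (∂₁ (U j)) p + U 1 p * ∂₁ (∂₁ (U j)) p)))
      (fun t => G t * (D t * N t) * N t) := by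
  have hD := h.dom
  have hf := hD.stat
  have hfs := hf.sm
  have h0 := h.sm 0
  have h1 := h.sm 1
  have hj := h.sm j
  have hv3 : NB Ω 3 v G :=
    ⟨hvs.continuous, (nn_three_gr hD hvs v0).trans (gr_bigO fun i => (hvG i).bd)⟩
  have hc0 : Continuous (c0 φ) := by unfold c0; fun_prop
  -- Hardy's inequality for the part with second-order vanishing coefficients
  have har : ∀ (k l : Fin 3) (i m : Fin 2),
      NB Ω 0 (fun p => v p * (HH φ U k p * HH φ U l p) * pd (ex i) (pd (ex m) (U j)) p)
        (fun t => G t * (D t * N t) * N t) := by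
    intro k l i m
    have hk := h.smH k
    have hl := h.smH l
    refine h.hardyU (by fun_prop) (v0.mul _) (fun i => ?_) i m j
    simp (disch := fun_prop) only [pd_mul]
    have e0 := NB.sup_mul hD (by fun_prop) (m := fun t => D t * N t) (h.sup_HH k l) (hvG i)
    have e1 := (hv3.mul hD (h.g3H k i)).mul hD ((h.nH l).step hD)
    have e2 := (hv3.mul hD (h.g3H l i)).mul hD ((h.nH k).step hD)
    have E : ∀ f : ℝ → ℝ, (∀ t, f t = G t * (D t * N t)) → f =O[T0] fun t => G t * (D t * N t) :=
      fun f hf' => (isBigO_refl _ _).congr_left fun t => (hf' t).symm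
    refine NB.congr hD (((e0.mono (E _ fun t => by ring)).add hD
      (e1.mono (E _ fun t => by ring))).add hD (e2.mono (E _ fun t => by ring)))
      (by fun_prop) fun t _ x _ => ?_
    ring
  -- terms containing a tangential derivative
  have tan : ∀ (i m : Fin 2), NB Ω 0 (fun p => v p * U i p * uT φ U p * Tg φ (pd (ex m) (U j)) p)
      (fun t => G t * (D t * N t) * N t) := by
    intro i m
    have := ((hv3.mul hD (h.nU i)).mul hD (((h.uT_of h.nU).step hD).mono h.DN)).mul hD (h.TgdU j m)
    exact this.mono ((isBigO_refl _ _).congr_left fun t => by ring)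
  have tanH : ∀ (k : Fin 3) (m : Fin 2),
      NB Ω 0 (fun p => v p * HH φ U k p * uT φ U p * Tg φ (pd (ex m) (U j)) p)
      (fun t => G t * (D t * N t) * N t) := by
    intro i m
    have := ((hv3.mul hD (h.nH i)).mul hD (((h.uT_of h.nU).step hD).mono h.DN)).mul hD (h.TgdU j m)
    exact this.mono ((isBigO_refl _ _).congr_left fun t => by ring)
  have harv : ∀ i m : Fin 2, NB Ω 0 (fun p => v p * (hv φ U i p * hv φ U m p)
      * pd (ex i) (pd (ex m) (U j)) p) (fun t => G t * (D t * N t) * N t) := by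
    intro i m
    have hk := h.smH 0
    have hk1 := h.smH (![1, 2] i)
    have hk2 := h.smH (![1, 2] m)
    have e := (((har 0 0 i m).stat hD ((hf.pd i).mul (hf.pd m))).add hD
      ((har 0 (![1, 2] m) i m).stat hD ((hf.pd i).mul hf))).add hD
      (((har (![1, 2] i) 0 i m).stat hD (hf.mul (hf.pd m))).add hD
      ((har (![1, 2] i) (![1, 2] m) i m).stat hD (hf.mul hf)))
    have c1 := h.hv_cont i
    have c2 := h.hv_cont m
    refine e.congr hD (by fun_prop) fun t _ x _ => ?_
    simp only [hv]; ring
  have tanv : ∀ m : Fin 2, NB Ω 0 (fun p => v p * hv φ U m p * uT φ U p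
      * Tg φ (pd (ex m) (U j)) p) (fun t => G t * (D t * N t) * N t) := by
    intro m
    have e := ((tanH 0 m).stat hD (hf.pd m)).add hD ((tanH (![1, 2] m) m).stat hD hf)
    have c2 := h.hv_cont m
    have c3 := (h.uT_of h.nU).cont
    have c4 := (h.TgdU j m).cont
    refine e.congr hD (by fun_prop) fun t _ x _ => ?_
    simp only [hv]; ring
  have e := ((((harv 0 0).add hD (harv 1 0)).add hD ((harv 0 1).add hD (harv 1 1))).add hD
    ((tanv 0).add hD (tanv 1))).add hD
    (((tan 0 0).add hD (tan 1 1)).stat hD (G := c0 φ) (by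
      have e : c0 φ = fun p => ∂₀ (lift φ) p * ∂₀ (lift φ) p + ∂₁ (lift φ) p * ∂₁ (lift φ) p
        + lift φ p * lift φ p := by funext p; simp only [c0]; ring
      rw [e]
      exact (((hf.pd 0).mul (hf.pd 0)).add ((hf.pd 1).mul (hf.pd 1))).add (hf.mul hf)))
  refine NB.of_c0 hD (by fun_prop) (NB.of_c0 hD (by fun_prop)
    (e.congr hD (by fun_prop) fun t ht x hx => ?_))
  have q0 := c0_transport φ U (∂₀ (∂₀ (U j)) (t, x)) (∂₁ (∂₀ (U j)) (t, x)) (t, x)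
  have q1 := c0_transport φ U (∂₀ (∂₁ (U j)) (t, x)) (∂₁ (∂₁ (U j)) (t, x)) (t, x)
  have hc := congrFun (pd_comm (w := ex 1) (w' := ex 0) hj) (t, x)
  have q2 := c0_transport φ U (hv φ U 0 (t, x) * ∂₀ (∂₀ (U j)) (t, x)
    + hv φ U 1 (t, x) * ∂₁ (∂₀ (U j)) (t, x)) (hv φ U 0 (t, x) * ∂₀ (∂₁ (U j)) (t, x)
    + hv φ U 1 (t, x) * ∂₁ (∂₁ (U j)) (t, x)) (t, x)
  simp only [Tg]
  rw [hc] at q0 q2 ⊢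
  linear_combination v (t, x) * c0 φ (t, x) * (U 0 (t, x) * q0 + U 1 (t, x) * q1) + v (t, x) * q2

end Est

/-! ### Solutions: transport and energy -/

/-- A smooth solution of the inhomogeneous Navier-Stokes equations with potential force `∇f`,
total density `R` and total pressure `P`; `R` initially takes values in `[α₁, α₂]`. -/
structure Sol (Ω : Set E2) (φ : E2 → ℝ) (ν α₁ α₂ : ℝ) (U : Fin 2 → Q → ℝ) (R P f : Q → ℝ) :
    Prop where
  dom : GoodDom Ω φ
  hν : 0 < ν
  hα : 0 < α₁
  sm : ∀ j, ContDiff ℝ (⊤ : ℕ∞) (U j)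
  smR : ContDiff ℝ (⊤ : ℕ∞) R
  smP : ContDiff ℝ (⊤ : ℕ∞) P
  stf : Stat f
  b0 : ∀ j, B0 Ω (U j)
  div : ∀ t, 0 ≤ t → ∀ x ∈ Ω, ∂₀ (U 0) (t, x) + ∂₁ (U 1) (t, x) = 0
  mom : ∀ j, ∀ t, 0 ≤ t → ∀ x ∈ Ω, R (t, x) * (pd et (U j) (t, x) + bb U j (t, x))
    = ν * (∂₀ (∂₀ (U j)) (t, x) + ∂₁ (∂₁ (U j)) (t, x)) - pd (ex j) P (t, x)
      - R (t, x) * pd (ex j) f (t, x)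
  tr : ∀ t, 0 ≤ t → ∀ x ∈ Ω,
    pd et R (t, x) + (U 0 (t, x) * ∂₀ R (t, x) + U 1 (t, x) * ∂₁ R (t, x)) = 0
  dens0 : ∀ x ∈ Ω, α₁ ≤ R (0, x) ∧ R (0, x) ≤ α₂

/-- The squared gradient of a vector field. -/
def gs (U : Fin 2 → Q → ℝ) : Q → ℝ :=
  fun p => (∂₀ (U 0) p ^ 2 + ∂₀ (U 1) p ^ 2) + (∂₁ (U 0) p ^ 2 + ∂₁ (U 1) p ^ 2)

/-- The `L²` norm of the gradient of a vector field. -/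
def gn (Ω : Set E2) (U : Fin 2 → Q → ℝ) (t : ℝ) : ℝ := √(J Ω (gs U) t)

/-- The `L²` norm of a vector field. -/
def vn (Ω : Set E2) (U : Fin 2 → Q → ℝ) (t : ℝ) : ℝ := √(J Ω (fun p => U 0 p ^ 2 + U 1 p ^ 2) t)

section norms
variable {Ω : Set E2} {φ : E2 → ℝ} {U : Fin 2 → Q → ℝ}

lemma gs_sm (h : ∀ j, ContDiff ℝ (⊤ : ℕ∞) (U j)) : ContDiff ℝ (⊤ : ℕ∞) (gs U) := by
  have := h 0
  have := h 1
  unfold gs; fun_prop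

lemma gs_nonneg (p : Q) : 0 ≤ gs U p := by unfold gs; positivity

lemma gn_nonneg (t : ℝ) : 0 ≤ gn Ω U t := sqrt_nonneg _
lemma vn_nonneg (t : ℝ) : 0 ≤ vn Ω U t := sqrt_nonneg _

lemma gn_sq (t : ℝ) : gn Ω U t ^ 2 = J Ω (gs U) t := sq_sqrt (J_nonneg gs_nonneg t)
lemma vn_sq (t : ℝ) : vn Ω U t ^ 2 = J Ω (fun p => U 0 p ^ 2 + U 1 p ^ 2) t :=
  sq_sqrt (J_nonneg (fun _ => by positivity) t)

lemma gn_cont (hD : GoodDom Ω φ) (h : ∀ j, ContDiff ℝ (⊤ : ℕ∞) (U j)) : Continuous (gn Ω U) :=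
  (J_continuous hD (gs_sm h)).sqrt

lemma vn_cont (hD : GoodDom Ω φ) (h : ∀ j, ContDiff ℝ (⊤ : ℕ∞) (U j)) : Continuous (vn Ω U) := by
  have := h 0
  have := h 1
  exact (J_continuous hD (show ContDiff ℝ (⊤ : ℕ∞) _ by fun_prop)).sqrt

lemma nb_of_sq (hD : GoodDom Ω φ) {F G : Q → ℝ} (hF : Continuous F) (hG : Continuous G)
    (h : ∀ p, F p ^ 2 ≤ G p) : NB Ω 1 F (fun t => √(J Ω G t)) := by
  refine ⟨hF, bigO_T0 1 fun t _ => ?_⟩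
  rw [one_mul, abs_of_nonneg (nn_nonneg _ _ _), abs_of_nonneg (sqrt_nonneg _)]
  apply Real.le_sqrt_of_sq_le
  rw [nn_one_sq]
  exact J_mono hD (by fun_prop) hG fun x _ => h _

lemma nb_gn (hD : GoodDom Ω φ) (h : ∀ j, ContDiff ℝ (⊤ : ℕ∞) (U j)) (i j : Fin 2) :
    NB Ω 1 (pd (ex i) (U j)) (gn Ω U) := by
  have := h j
  refine nb_of_sq hD (by fun_prop) (gs_sm h).continuous fun p => ?_
  unfold gs
  have a1 := sq_nonneg (∂₀ (U 0) p)
  have a2 := sq_nonneg (∂₀ (U 1) p)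
  have a3 := sq_nonneg (∂₁ (U 0) p)
  have a4 := sq_nonneg (∂₁ (U 1) p)
  fin_cases i <;> fin_cases j <;> simp only [Fin.zero_eta, Fin.mk_one] <;> linarith

lemma nb_vn (hD : GoodDom Ω φ) (h : ∀ j, ContDiff ℝ (⊤ : ℕ∞) (U j)) (j : Fin 2) :
    NB Ω 1 (U j) (vn Ω U) := by
  have := h j
  have := h 0
  have := h 1
  refine nb_of_sq hD (by fun_prop) (by fun_prop) fun p => ?_
  have a1 := sq_nonneg (U 0 p)
  have a2 := sq_nonneg (U 1 p)
  fin_cases j <;> simp only [Fin.zero_eta, Fin.mk_one] <;> linarith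

end norms

namespace Sol
variable {Ω : Set E2} {φ : E2 → ℝ} {ν α₁ α₂ : ℝ} {U : Fin 2 → Q → ℝ} {R P f : Q → ℝ}

/-- Nonnegative functions of the density that vanish initially vanish for all times. -/
lemma transport_zero (h : Sol Ω φ ν α₁ α₂ U R P f) {θ : ℝ → ℝ} (hθ : ContDiff ℝ (⊤ : ℕ∞) θ)
    (h0 : ∀ s, 0 ≤ θ s) (hi : ∀ x ∈ Ω, θ (R (0, x)) = 0) {t : ℝ} (ht : 0 ≤ t) {x : E2}
    (hx : x ∈ Ω) : θ (R (t, x)) = 0 := by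
  have hD := h.dom
  have hR := h.smR
  have u0 := h.sm 0
  have u1 := h.sm 1
  have hs : ContDiff ℝ (⊤ : ℕ∞) (fun p => θ (R p)) := hθ.comp hR
  have hd : ∀ w, pd w (fun p => θ (R p)) = fun p => deriv θ (R p) * pd w R p := fun w =>
    pd_comp (fun s => (hθ.differentiable (by simp) s).hasDerivAt) hR
  have hz : J Ω (fun p => θ (R p)) t ≤ J Ω (fun p => θ (R p)) 0 := by
    refine le_of_deriv_nonpos (J_hasDerivAt hD hs) (fun t ht => le_of_eq ?_) ht
    refine J_div2 hD ht (V := fun p => -(U 0 p * θ (R p))) (W := fun p => -(U 1 p * θ (R p)))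
      (by fun_prop) (by fun_prop) (fun t ht x hx => by simp [h.b0 0 t ht x hx])
      (fun t ht x hx => by simp [h.b0 1 t ht x hx]) fun x hx => ?_
    simp (disch := fun_prop) only [pd_neg, pd_mul]
    simp only [hd]
    linear_combination deriv θ (R (t, x)) * h.tr t ht x hx + θ (R (t, x)) * h.div t ht x hx
  have hz0 : J Ω (fun p => θ (R p)) 0 = 0 := by
    rw [J_congr hD (G := fun _ => 0) fun x hx => hi x hx]; simp [J]
  have hz1 : J Ω (fun p => θ (R p)) t = 0 :=
    le_antisymm (hz.trans hz0.le) (J_nonneg (fun p => h0 _) t)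
  have hae := (setIntegral_eq_zero_iff_of_nonneg_ae (Eventually.of_forall fun x => h0 _)
    (J_int hD hs.continuous t)).1 hz1
  exact Measure.eqOn_open_of_ae_eq hae hD.isOpen (cont_slice hs.continuous t).continuousOn
    continuousOn_const hx

lemma R_le (h : Sol Ω φ ν α₁ α₂ U R P f) {t : ℝ} (ht : 0 ≤ t) {x : E2} (hx : x ∈ Ω) :
    R (t, x) ≤ α₂ := by
  have hθ : ContDiff ℝ (⊤ : ℕ∞) fun s => expNegInvGlue (s - α₂) :=
    expNegInvGlue.contDiff.comp (by fun_prop)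
  have := h.transport_zero hθ (fun s => expNegInvGlue.nonneg _)
    (fun x hx => expNegInvGlue.zero_of_nonpos (by linarith [(h.dens0 x hx).2])) ht hx
  by_contra hc
  exact (expNegInvGlue.pos_of_pos (by linarith : 0 < R (t, x) - α₂)).ne' this

lemma le_R (h : Sol Ω φ ν α₁ α₂ U R P f) {t : ℝ} (ht : 0 ≤ t) {x : E2} (hx : x ∈ Ω) :
    α₁ ≤ R (t, x) := by
  have hθ : ContDiff ℝ (⊤ : ℕ∞) fun s => expNegInvGlue (α₁ - s) :=
    expNegInvGlue.contDiff.comp (by fun_prop)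
  have := h.transport_zero hθ (fun s => expNegInvGlue.nonneg _)
    (fun x hx => expNegInvGlue.zero_of_nonpos (by linarith [(h.dens0 x hx).1])) ht hx
  by_contra hc
  exact (expNegInvGlue.pos_of_pos (by linarith : 0 < α₁ - R (t, x))).ne' this

lemma R_bigO (h : Sol Ω φ ν α₁ α₂ U R P f) : R =O[X0 Ω] fun _ => (1 : ℝ) :=
  bigO_X0 α₂ fun t ht x hx => by
    rw [abs_of_pos (h.hα.trans_le (h.le_R ht hx)), abs_one, mul_one]
    exact h.R_le ht hx

lemma nR (h : Sol Ω φ ν α₁ α₂ U R P f) {k : ℕ} {F : Q → ℝ} {m : ℝ → ℝ} (n : NB Ω k F m) :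
    NB Ω k (fun p => R p * F p) m := by
  have := NB.sup_mul h.dom h.smR.continuous (m := fun _ => 1) h.R_bigO n
  simpa using this

lemma one_nb (k : ℕ) : NB Ω k (fun _ => 1) (fun _ => 1) := ⟨continuous_const, nn_const_bigO k⟩

lemma weighted (h : Sol Ω φ ν α₁ α₂ U R P f) {F : Q → ℝ} (hF : Continuous F) (h0 : ∀ p, 0 ≤ F p)
    {t : ℝ} (ht : 0 ≤ t) : α₁ * J Ω F t ≤ J Ω (fun p => R p * F p) t := by
  have := h.smR
  rw [← J_const_mul]
  refine J_mono h.dom (by fun_prop) (by fun_prop) fun x hx => ?_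
  exact mul_le_mul_of_nonneg_right (h.le_R ht hx) (h0 _)

/-- The energy inequality. -/
lemma energy (h : Sol Ω φ ν α₁ α₂ U R P f) :
    (∀ j, NB Ω 1 (U j) fun _ => 1) ∧ L1 (fun t => gn Ω U t ^ 2) := by
  have hD := h.dom
  have hR := h.smR
  have hP := h.smP
  have hf := h.stf.sm
  have u0 := h.sm 0
  have u1 := h.sm 1
  set E : Q → ℝ := fun p => R p * ((1 / 2) * (U 0 p ^ 2 + U 1 p ^ 2)) + R p * f p with hE
  have hEs : ContDiff ℝ (⊤ : ℕ∞) E := by rw [hE]; fun_prop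
  have hgs := gs_sm h.sm
  obtain ⟨c, hc, hcb⟩ := exists_T0 (h.nR ((one_nb 0).stat hD h.stf)).J
  have lower : ∀ t, 0 ≤ t → α₁ * (1 / 2) * vn Ω U t ^ 2 ≤ J Ω E t + c := by
    intro t ht
    have e1 := h.weighted (F := fun p => (1 / 2) * (U 0 p ^ 2 + U 1 p ^ 2)) (by fun_prop)
      (fun p => by positivity) ht
    have e2 := hcb t ht
    simp only [mul_one, abs_one] at e2
    rw [hE, J_add hD (by fun_prop) (by fun_prop), vn_sq]
    rw [J_const_mul] at e1
    linarith [neg_abs_le (J Ω (fun p => R p * f p) t)]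
  have key := gronwall (Y := fun t => J Ω E t + c) (Y' := J Ω (pd et E))
    (Z := fun t => ν * gn Ω U t ^ 2) (a := fun _ => 0)
    (fun t => (J_hasDerivAt hD hEs t).add_const c)
    (fun t ht => le_trans (mul_nonneg (mul_nonneg h.hα.le (by norm_num)) (sq_nonneg _)) (lower t ht))
    (((gn_cont hD h.sm).pow 2).const_mul ν)
    (fun t => mul_nonneg h.hν.le (sq_nonneg _)) continuous_const (fun _ => le_rfl)
    ⟨0, fun T _ => by simp⟩ (fun t ht => by
      rw [zero_mul, gn_sq, ← J_const_mul, ← J_add hD (by fun_prop) (by fun_prop)]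
      refine le_of_eq (J_div2 hD ht
        (V := fun p => -(R p * ((1 / 2) * (U 0 p ^ 2 + U 1 p ^ 2)) * U 0 p)
          + ν * (U 0 p * ∂₀ (U 0) p + U 1 p * ∂₀ (U 1) p) - U 0 p * P p - U 0 p * (R p * f p))
        (W := fun p => -(R p * ((1 / 2) * (U 0 p ^ 2 + U 1 p ^ 2)) * U 1 p)
          + ν * (U 0 p * ∂₁ (U 0) p + U 1 p * ∂₁ (U 1) p) - U 1 p * P p - U 1 p * (R p * f p))
        (by fun_prop) (by fun_prop)
        (fun t ht x hx => by simp [h.b0 _ t ht x hx]) (fun t ht x hx => by simp [h.b0 _ t ht x hx])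
        fun x hx => ?_)
      rw [hE]
      simp (disch := fun_prop) only [pd_add, pd_sub, pd_neg, pd_mul, pd_pow, pd_const, h.stf.dt]
      have m0 := h.mom 0 t ht x hx
      have m1 := h.mom 1 t ht x hx
      have tr := h.tr t ht x hx
      have dv := h.div t ht x hx
      simp only [bb, gs] at *
      push_cast
      linear_combination U 0 (t, x) * m0 + U 1 (t, x) * m1
        + (1 / 2 * (U 0 (t, x) ^ 2 + U 1 (t, x) ^ 2) + f (t, x)) * tr
        + (R (t, x) * (1 / 2 * (U 0 (t, x) ^ 2 + U 1 (t, x) ^ 2)) + P (t, x)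
          + R (t, x) * f (t, x)) * dv)
  obtain ⟨⟨M, hM⟩, hZ⟩ := key
  refine ⟨fun j => (nb_vn hD h.sm j).mono (bigO_of_sq (bigO_T0 (M / (α₁ * (1 / 2))) fun t ht => ?_)),
    ?_⟩
  · simp only [one_pow, abs_one, mul_one]
    rw [abs_of_nonneg (sq_nonneg _), le_div_iff₀ (by have := h.hα; positivity)]
    linarith [lower t ht, hM t ht]
  · refine hZ.mono ((gn_cont hD h.sm).pow 2) (((gn_cont hD h.sm).pow 2).const_mul ν)
      (C := ν⁻¹) (by have := h.hν; positivity) fun t _ => le_of_eq ?_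
    have := h.hν.ne'
    field_simp

end Sol

/-! ### The first-order estimate -/

namespace Sol
variable {Ω : Set E2} {φ : E2 → ℝ} {ν α₁ α₂ : ℝ} {U : Fin 2 → Q → ℝ} {R P f : Q → ℝ}

/-- The time derivative of the velocity. -/
abbrev Ut (U : Fin 2 → Q → ℝ) : Fin 2 → Q → ℝ := fun j => pd et (U j)

lemma smV (h : Sol Ω φ ν α₁ α₂ U R P f) (j : Fin 2) : ContDiff ℝ (⊤ : ℕ∞) (Ut U j) :=
  contDiff_pd (h.sm j)

lemma b0V (h : Sol Ω φ ν α₁ α₂ U R P f) (j : Fin 2) : B0 Ω (Ut U j) := (h.b0 j).dt (h.sm j)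

lemma divV (h : Sol Ω φ ν α₁ α₂ U R P f) : ∀ t, 0 ≤ t → ∀ x ∈ Ω,
    ∂₀ (Ut U 0) (t, x) + ∂₁ (Ut U 1) (t, x) = 0 := by
  intro t ht x hx
  have u0 := h.sm 0
  have u1 := h.sm 1
  have := pd_et_congr (Ω := Ω) (F := fun p => ∂₀ (U 0) p + ∂₁ (U 1) p) (G := fun _ => 0)
    (show ContDiff ℝ (⊤ : ℕ∞) _ by fun_prop) contDiff_const h.div ht hx
  simp (disch := fun_prop) only [pd_add, pd_const] at this
  rw [pd_comm (w := et) u0, pd_comm (w := et) u1] at this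
  exact this

/-- The Stokes estimate for the momentum equation, given a bound `N` for the acceleration. -/
lemma est_of (h : Sol Ω φ ν α₁ α₂ U R P f) {N : ℝ → ℝ} (N0 : ∀ t, 0 ≤ N t)
    (DN : gn Ω U =O[T0] N) (oneN : (fun _ => (1 : ℝ)) =O[T0] N)
    (hV : ∀ j, NB Ω 1 (Ut U j) N) (hb : ∀ j, NB Ω 1 (bb U j) N) : Est Ω φ U (gn Ω U) N where
  dom := h.dom
  sm := h.sm
  b0 := h.b0
  div := h.div
  gU := nb_gn h.dom h.sm
  D0 := gn_nonneg
  N0 := N0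
  DN := DN
  oneN := oneN
  en := h.energy.1
  h2 := fun k => by
    have hD := h.dom
    refine stokes_H2 hD h.hν h.sm h.b0 h.div h.smP
      (F := fun j p => R p * (Ut U j p + bb U j p + pd (ex j) f p * 1)) (fun j => ?_) ?_
      (fun i j => (nb_gn hD h.sm i j).mono DN) (ca_stat hD k) (cb_stat hD k)
      (HH_b1 hD h.sm h.b0 h.div k)
    · exact h.nR (((hV j).add hD (hb j)).add hD
        (((one_nb 1).mono oneN).stat hD (h.stf.pd j)))
    · intro j t ht x hx
      linear_combination h.mom j t ht x hx

/-- The velocity satisfies the estimates `Est` with `N = 1 + ‖∂ₜu‖₂ + ‖∇u‖₂²`. -/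
lemma est1 (h : Sol Ω φ ν α₁ α₂ U R P f) :
    Est Ω φ U (gn Ω U) (fun t => 1 + vn Ω (Ut U) t + gn Ω U t ^ 2) := by
  set D := gn Ω U with hDd
  set V := vn Ω (Ut U) with hVd
  have D0 : ∀ t, 0 ≤ D t := gn_nonneg
  have V0 : ∀ t, 0 ≤ V t := vn_nonneg
  set n0 := nn Ω 1 (bb U 0) with hn0
  set n1 := nn Ω 1 (bb U 1) with hn1
  have p0 : ∀ t, 0 ≤ n0 t := nn_nonneg _ _
  have p1 : ∀ t, 0 ≤ n1 t := nn_nonneg _ _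
  set N : ℝ → ℝ := fun t => 1 + V t + D t + n0 t + n1 t with hN
  have NN : ∀ t, 0 ≤ N t := fun t => by
    have := D0 t; have := V0 t; have := p0 t; have := p1 t
    simp only [hN]; positivity
  have aux : ∀ {q : ℝ → ℝ}, (∀ t, 0 ≤ q t) → (∀ t, q t ≤ N t) → q =O[T0] N := fun hq hqN =>
    bigO_T0 1 fun t _ => by rw [abs_of_nonneg (hq t), abs_of_nonneg (NN t), one_mul]; exact hqN t
  have all : ∀ t, D t ≤ N t ∧ 1 ≤ N t ∧ V t ≤ N t ∧ n0 t ≤ N t ∧ n1 t ≤ N t := fun t => by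
    have := D0 t; have := V0 t; have := p0 t; have := p1 t
    simp only [hN]
    refine ⟨?_, ?_, ?_, ?_, ?_⟩ <;> linarith
  have e0 : Est Ω φ U D N := h.est_of NN (aux D0 fun t => (all t).1)
    (aux (fun _ => zero_le_one) fun t => (all t).2.1)
    (fun j => (nb_vn h.dom h.smV j).mono (aux V0 fun t => (all t).2.2.1))
    (fun j => ⟨(bb_sm h.sm j).continuous, by
      fin_cases j
      · exact aux p0 fun t => (all t).2.2.2.1
      · exact aux p1 fun t => (all t).2.2.2.2⟩)
  obtain ⟨C0, hC0, b0⟩ := exists_T0 (e0.nb 0).bd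
  obtain ⟨C1, hC1, b1⟩ := exists_T0 (e0.nb 1).bd
  have NO : N =O[T0] fun t => 1 + V t + D t ^ 2 := by
    refine bigO_T0 (4 + (C0 + C1) ^ 2) fun t ht => ?_
    have i0 := b0 t ht
    have i1 := b1 t ht
    have d0 := D0 t
    have v0 := V0 t
    rw [abs_of_nonneg (nn_nonneg _ _ _), abs_of_nonneg (by positivity)] at i0 i1
    rw [abs_of_nonneg (NN t), abs_of_nonneg (by positivity)]
    have s := sq_sqrt (NN t)
    have e : N t = 1 + V t + D t + n0 t + n1 t := rfl
    -- `N ≤ 1 + V + D + C √N D`, and the last product is absorbed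
    have i2 : n0 t + n1 t ≤ (C0 + C1) * (√(N t) * D t) := by
      have : n0 t ≤ C0 * (√(N t) * D t) := i0
      have : n1 t ≤ C1 * (√(N t) * D t) := i1
      linarith
    have y := sq_nonneg (√(N t) - (C0 + C1) * D t)
    have y2 := sq_nonneg (D t - 1)
    have k1 : 0 ≤ (C0 + C1) ^ 2 * V t := by positivity
    have k2 := sq_nonneg (C0 + C1)
    nlinarith
  have one' : ∀ {q : ℝ → ℝ} (C : ℝ), (∀ t, 0 ≤ q t) → (∀ t, q t ≤ C * (1 + V t + D t ^ 2)) →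
      q =O[T0] fun t => 1 + V t + D t ^ 2 := fun C hq hqN =>
    bigO_T0 C fun t _ => by
      have := V0 t
      rw [abs_of_nonneg (hq t), abs_of_nonneg (by positivity)]; exact hqN t
  exact { e0 with
    N0 := fun t => by have := V0 t; positivity
    DN := e0.DN.trans NO
    oneN := e0.oneN.trans NO
    h2 := fun k => (e0.h2 k).trans NO }

lemma nV (h : Sol Ω φ ν α₁ α₂ U R P f) (j : Fin 2) : NB Ω 1 (Ut U j) (vn Ω (Ut U)) :=
  nb_vn h.dom h.smV j

/-- The potential part `u · ∇f` of the first-order energy. -/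
def pot (U : Fin 2 → Q → ℝ) (f : Q → ℝ) : Q → ℝ := fun p => ∂₀ f p * U 0 p + ∂₁ f p * U 1 p

/-- The momentum equation tested with `∂ₜu`. -/
lemma first_identity (h : Sol Ω φ ν α₁ α₂ U R P f) {t : ℝ} (ht : 0 ≤ t) :
    J Ω (fun p => pd et (fun p => ν / 2 * gs U p + R p * pot U f p) p
      + R p * (Ut U 0 p ^ 2 + Ut U 1 p ^ 2)
      + (R p * (bb U 0 p * Ut U 0 p + bb U 1 p * Ut U 1 p)
        - R p * (U 0 p * ∂₀ (pot U f) p + U 1 p * ∂₁ (pot U f) p))) t = 0 := by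
  have hD := h.dom
  have hR := h.smR
  have hP := h.smP
  have hf := h.stf.sm
  have u0 := h.sm 0
  have u1 := h.sm 1
  have v0 : ContDiff ℝ (⊤ : ℕ∞) (pd et (U 0)) := h.smV 0
  have v1 : ContDiff ℝ (⊤ : ℕ∞) (pd et (U 1)) := h.smV 1
  have hg : ContDiff ℝ (⊤ : ℕ∞) (pot U f) := by unfold pot; fun_prop
  have gt : pd et (pot U f) = fun p => ∂₀ f p * pd et (U 0) p + ∂₁ f p * pd et (U 1) p := by
    funext p
    unfold pot
    simp (disch := fun_prop) only [pd_add, pd_mul, (h.stf.pd 0).dt, (h.stf.pd 1).dt]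
    ring
  refine J_div2 hD ht
    (V := fun p => ν * (pd et (U 0) p * ∂₀ (U 0) p + pd et (U 1) p * ∂₀ (U 1) p)
      - pd et (U 0) p * P p - U 0 p * (R p * pot U f p))
    (W := fun p => ν * (pd et (U 0) p * ∂₁ (U 0) p + pd et (U 1) p * ∂₁ (U 1) p)
      - pd et (U 1) p * P p - U 1 p * (R p * pot U f p))
    (by fun_prop) (by fun_prop)
    (fun t ht x hx => by
      have a := h.b0V 0 t ht x hx
      have b := h.b0V 1 t ht x hx
      simp only [Ut] at a b
      simp [h.b0 _ t ht x hx, a, b])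
    (fun t ht x hx => by
      have a := h.b0V 0 t ht x hx
      have b := h.b0V 1 t ht x hx
      simp only [Ut] at a b
      simp [h.b0 _ t ht x hx, a, b])
    fun x hx => ?_
  have m0 := h.mom 0 t ht x hx
  have m1 := h.mom 1 t ht x hx
  have tr := h.tr t ht x hx
  have dv := h.div t ht x hx
  have dV := h.divV t ht x hx
  have hgs := gs_sm h.sm
  simp (disch := fun_prop) only [pd_add, pd_sub, pd_mul, pd_const, gt]
  unfold gs
  simp (disch := fun_prop) only [pd_add, pd_pow]
  simp only [pd_comm (w := et) (w' := ex 0) u0, pd_comm (w := et) (w' := ex 1) u0,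
    pd_comm (w := et) (w' := ex 0) u1, pd_comm (w := et) (w' := ex 1) u1]
  simp only [Ut] at dV ⊢
  push_cast
  linear_combination pd et (U 0) (t, x) * m0 + pd et (U 1) (t, x) * m1
    + pot U f (t, x) * tr + R (t, x) * pot U f (t, x) * dv + P (t, x) * dV

/-- `∇u` is bounded in `L²`, and `∂ₜu` belongs to `L²(0,∞; L²)`. -/
lemma first (h : Sol Ω φ ν α₁ α₂ U R P f) :
    (gn Ω U =O[T0] fun _ => (1 : ℝ)) ∧ L1 (fun t => vn Ω (Ut U) t ^ 2) := by
  have hD := h.dom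
  have hR := h.smR
  have hf := h.stf.sm
  have u0 := h.sm 0
  have u1 := h.sm 1
  have v0 : ContDiff ℝ (⊤ : ℕ∞) (pd et (U 0)) := h.smV 0
  have v1 : ContDiff ℝ (⊤ : ℕ∞) (pd et (U 1)) := h.smV 1
  have hg : ContDiff ℝ (⊤ : ℕ∞) (pot U f) := by unfold pot; fun_prop
  have hgs := gs_sm h.sm
  have cb0 := bb_sm h.sm 0
  have cb1 := bb_sm h.sm 1
  have e := h.est1
  set D := gn Ω U with hDd
  set V := vn Ω (Ut U) with hVd
  have D0 : ∀ t, 0 ≤ D t := gn_nonneg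
  have V0 : ∀ t, 0 ≤ V t := vn_nonneg
  set E : Q → ℝ := fun p => ν / 2 * gs U p + R p * pot U f p with hE
  have hEs : ContDiff ℝ (⊤ : ℕ∞) E := by rw [hE]; fun_prop
  have nU1 : ∀ j, NB Ω 1 (U j) D := fun j => ((e.nU j).step hD).step hD
  have npot : ∀ i, NB Ω 1 (pd (ex i) (pot U f)) D := fun i => by
    have : pd (ex i) (pot U f) = fun p => (pd (ex i) (∂₀ f) p * U 0 p
        + ∂₀ f p * pd (ex i) (U 0) p) + (pd (ex i) (∂₁ f) p * U 1 p
        + ∂₁ f p * pd (ex i) (U 1) p) := by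
      funext p
      unfold pot
      simp (disch := fun_prop) only [pd_add, pd_mul]
    rw [this]
    have s0 := h.stf.pd 0
    have s1 := h.stf.pd 1
    exact (((nU1 0).stat hD (s0.pd i)).add hD ((e.gU i 0).stat hD s0)).add hD
      (((nU1 1).stat hD (s1.pd i)).add hD ((e.gU i 1).stat hD s1))
  have hTa : NB Ω 0 (fun p => R p * (bb U 0 p * Ut U 0 p + bb U 1 p * Ut U 1 p))
      (fun t => √(1 + V t + D t ^ 2) * D t * V t) :=
    h.nR (((e.nb 0).mul hD (h.nV 0)).add hD ((e.nb 1).mul hD (h.nV 1)))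
  have hTb : NB Ω 0 (fun p => R p * (U 0 p * ∂₀ (pot U f) p + U 1 p * ∂₁ (pot U f) p))
      (fun t => D t * D t) :=
    h.nR (((nU1 0).mul hD (npot 0)).add hD ((nU1 1).mul hD (npot 1)))
  set a : ℝ → ℝ := fun t => D t ^ 2 * (1 + D t ^ 2) with ha
  have a0 : ∀ t, 0 ≤ a t := fun t => by positivity
  have leA : ∀ {q : ℝ → ℝ}, (∀ t, |q t| ≤ a t) → q =O[T0] a := fun hq =>
    bigO_T0 1 fun t _ => by rw [abs_of_nonneg (a0 t), one_mul]; exact hq t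
  have absA : Absorb V a (fun t => √(1 + V t + D t ^ 2) * D t * V t) := by
    refine (Absorb.young (A := fun t => √(1 + V t + D t ^ 2) * D t) ?_).mono
      (bigO_T0 1 fun t _ => by rw [one_mul, mul_comm])
    have q : (fun t => (√(1 + V t + D t ^ 2) * D t) ^ 2)
        = fun t => a t + V t * D t ^ 2 := by
      funext t
      have := V0 t
      rw [mul_pow, sq_sqrt (by positivity)]
      simp only [ha]; ring
    rw [q]
    refine (Absorb.of_bigO a0 (isBigO_refl _ _)).add (Absorb.young' a0 (isBigO_refl _ _) ?_)
    refine leA fun t => ?_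
    rw [abs_of_nonneg (by positivity)]
    simp only [ha]
    nlinarith [sq_nonneg (D t)]
  have absB : Absorb V a (fun t => D t * D t) := Absorb.of_bigO a0 (leA fun t => by
    rw [abs_of_nonneg (by have := D0 t; positivity)]
    simp only [ha]
    nlinarith [sq_nonneg (D t ^ 2)])
  have absT := (absA.mono hTa.J).add (absB.mono hTb.neg.J)
  obtain ⟨C, hC, hCb⟩ := absT (α₁ / 2) (by have := h.hα; positivity)
  have npotI : NB Ω 1 (pot U f) fun _ => 1 :=
    ((h.energy.1 0).stat hD (h.stf.pd 0)).add hD ((h.energy.1 1).stat hD (h.stf.pd 1))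
  obtain ⟨c, hc, hcb⟩ := exists_T0 (h.nR (npotI.step hD)).J
  have lower : ∀ t, 0 ≤ t → ν / 2 * D t ^ 2 ≤ J Ω E t + c := by
    intro t ht
    have e2 := hcb t ht
    simp only [mul_one, abs_one] at e2
    rw [hE, J_add hD (by fun_prop) (by fun_prop), J_const_mul, hDd, gn_sq]
    linarith [neg_abs_le (J Ω (fun p => R p * pot U f p) t)]
  have key := gronwall (Y := fun t => J Ω E t + c) (Y' := J Ω (pd et E))
    (Z := fun t => α₁ / 2 * V t ^ 2) (a := fun t => C * (1 + 2 / ν) * D t ^ 2)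
    (fun t => (J_hasDerivAt hD hEs t).add_const c)
    (fun t ht => le_trans (by have := h.hν; positivity) (lower t ht))
    (((vn_cont hD h.smV).pow 2).const_mul _)
    (fun t => by have := h.hα; positivity) (((gn_cont hD h.sm).pow 2).const_mul _)
    (fun t => by have := h.hν; positivity)
    (h.energy.2.mono (((gn_cont hD h.sm).pow 2).const_mul _) ((gn_cont hD h.sm).pow 2)
      (C := C * (1 + 2 / ν)) (by have := h.hν; positivity) (fun t _ => le_rfl)) (fun t ht => by
      have id := h.first_identity ht
      rw [J_add hD (by fun_prop) (by fun_prop), J_add hD (by fun_prop) (by fun_prop),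
        J_sub hD (by fun_prop) (by fun_prop)] at id
      have w := h.weighted (F := fun p => Ut U 0 p ^ 2 + Ut U 1 p ^ 2) (by fun_prop)
        (fun p => by positivity) ht
      rw [← vn_sq] at w
      have bd := hCb t ht
      have ng : J Ω (fun p => -(R p * (U 0 p * ∂₀ (pot U f) p + U 1 p * ∂₁ (pot U f) p))) t
          = -J Ω (fun p => R p * (U 0 p * ∂₀ (pot U f) p + U 1 p * ∂₁ (pot U f) p)) t := by
        simp only [J, integral_neg]
      simp only [ng] at bd
      have bd1 := neg_abs_le (J Ω (fun p => R p * (bb U 0 p * Ut U 0 p + bb U 1 p * Ut U 1 p)) t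
        + -J Ω (fun p => R p * (U 0 p * ∂₀ (pot U f) p + U 1 p * ∂₁ (pot U f) p)) t)
      have id' : J Ω (pd et E) t + J Ω (fun p => R p * (Ut U 0 p ^ 2 + Ut U 1 p ^ 2)) t
        + (J Ω (fun p => R p * (bb U 0 p * Ut U 0 p + bb U 1 p * Ut U 1 p)) t
        - J Ω (fun p => R p * (U 0 p * ∂₀ (pot U f) p + U 1 p * ∂₁ (pot U f) p)) t) = 0 := id
      have lo := lower t ht
      have hν := h.hν
      have st : C * a t ≤ C * (1 + 2 / ν) * D t ^ 2 * (1 + (J Ω E t + c)) := by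
        have : 1 + D t ^ 2 ≤ (1 + 2 / ν) * (1 + (J Ω E t + c)) := by
          have k : D t ^ 2 ≤ 2 / ν * (J Ω E t + c) := by
            calc D t ^ 2 = 2 / ν * (ν / 2 * D t ^ 2) := by field_simp
              _ ≤ _ := by gcongr
          have k2 : 0 ≤ J Ω E t + c := le_trans (by positivity) lo
          have k3 : 0 < 2 / ν := by positivity
          linarith
        calc C * a t = C * D t ^ 2 * (1 + D t ^ 2) := by simp only [ha]; ring
          _ ≤ C * D t ^ 2 * ((1 + 2 / ν) * (1 + (J Ω E t + c))) := by gcongr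
          _ = _ := by ring
      have w' : α₁ * V t ^ 2 ≤ _ := w
      linarith)
  obtain ⟨⟨M, hM⟩, hZ⟩ := key
  have hν := h.hν
  have hα := h.hα
  constructor
  · refine bigO_of_sq (bigO_T0 (M / (ν / 2)) fun t ht => ?_)
    simp only [one_pow, abs_one, mul_one]
    rw [abs_of_nonneg (sq_nonneg _), le_div_iff₀ (by positivity)]
    linarith [lower t ht, hM t ht]
  · refine hZ.mono ((vn_cont hD h.smV).pow 2) (((vn_cont hD h.smV).pow 2).const_mul _)
      (C := 2 / α₁) (by positivity) fun t _ => le_of_eq ?_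
    field_simp

end Sol

/-! ### The second-order estimate -/

lemma NB.sum {Ω : Set E2} {φ : E2 → ℝ} (hD : GoodDom Ω φ) {k : ℕ} {F : Fin 2 → Q → ℝ} {m : ℝ → ℝ}
    (h : ∀ j, NB Ω k (F j) m) : NB Ω k (fun p => ∑ j, F j p) m := by
  simp only [Fin.sum_univ_two]
  exact (h 0).add hD (h 1)

namespace Sol
variable {Ω : Set E2} {φ : E2 → ℝ} {ν α₁ α₂ : ℝ} {U : Fin 2 → Q → ℝ} {R P f : Q → ℝ}

/-- Once `‖∇u‖₂` is bounded in time, the velocity satisfies the estimates `Est` with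
`N = 1 + ‖∂ₜu‖₂`. -/
lemma est2 (h : Sol Ω φ ν α₁ α₂ U R P f) :
    Est Ω φ U (gn Ω U) (fun t => 1 + vn Ω (Ut U) t) := by
  have e := h.est1
  obtain ⟨K, hK, hb⟩ := exists_T0 h.first.1
  have NO : (fun t => 1 + vn Ω (Ut U) t + gn Ω U t ^ 2) =O[T0] fun t => 1 + vn Ω (Ut U) t := by
    refine bigO_T0 (1 + K ^ 2) fun t ht => ?_
    have i := hb t ht
    have v0 := vn_nonneg (Ω := Ω) (U := Ut U) t
    have d0 := gn_nonneg (Ω := Ω) (U := U) t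
    rw [abs_one, mul_one, abs_of_nonneg d0] at i
    rw [abs_of_nonneg (by positivity), abs_of_nonneg (by positivity)]
    have k1 : 0 ≤ K ^ 2 * vn Ω (Ut U) t := by positivity
    nlinarith
  exact { e with
    N0 := fun t => by have := vn_nonneg (Ω := Ω) (U := Ut U) t; positivity
    DN := e.DN.trans NO
    oneN := e.oneN.trans NO
    h2 := fun k => (e.h2 k).trans NO }

/-- The time derivative of the momentum equation. -/
lemma momt (h : Sol Ω φ ν α₁ α₂ U R P f) (j : Fin 2) {t : ℝ} (ht : 0 ≤ t) {x : E2} (hx : x ∈ Ω) :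
    pd et R (t, x) * (pd et (U j) (t, x) + bb U j (t, x) + pd (ex j) f (t, x))
      + R (t, x) * (pd et (pd et (U j)) (t, x)
        + (pd et (U 0) (t, x) * ∂₀ (U j) (t, x) + pd et (U 1) (t, x) * ∂₁ (U j) (t, x))
        + (U 0 (t, x) * ∂₀ (pd et (U j)) (t, x) + U 1 (t, x) * ∂₁ (pd et (U j)) (t, x)))
    = ν * (∂₀ (∂₀ (pd et (U j))) (t, x) + ∂₁ (∂₁ (pd et (U j))) (t, x))
      - pd (ex j) (pd et P) (t, x) := by
  have hR := h.smR
  have hP := h.smP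
  have hf := h.stf.sm
  have u0 := h.sm 0
  have u1 := h.sm 1
  have uj := h.sm j
  have cb := bb_sm h.sm j
  have := pd_et_congr (Ω := Ω)
    (F := fun p => R p * (pd et (U j) p + bb U j p))
    (G := fun p => ν * (∂₀ (∂₀ (U j)) p + ∂₁ (∂₁ (U j)) p) - pd (ex j) P p - R p * pd (ex j) f p)
    (show ContDiff ℝ (⊤ : ℕ∞) _ by fun_prop) (show ContDiff ℝ (⊤ : ℕ∞) _ by fun_prop) (h.mom j) ht hx
  simp (disch := fun_prop) only [pd_add, pd_sub, pd_mul, pd_const, (h.stf.pd j).dt] at this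
  have hbt : pd et (bb U j) (t, x)
      = (pd et (U 0) (t, x) * ∂₀ (U j) (t, x) + pd et (U 1) (t, x) * ∂₁ (U j) (t, x))
        + (U 0 (t, x) * ∂₀ (pd et (U j)) (t, x) + U 1 (t, x) * ∂₁ (pd et (U j)) (t, x)) := by
    unfold bb
    simp (disch := fun_prop) only [pd_add, pd_mul]
    rw [pd_comm (w := et) (w' := ex 0) uj, pd_comm (w := et) (w' := ex 1) uj]
    ring
  rw [hbt, pd_comm (w := et) (w' := ex 0) (contDiff_pd uj), pd_comm (w := et) (w' := ex 0) uj,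
    pd_comm (w := et) (w' := ex 1) (contDiff_pd uj), pd_comm (w := et) (w' := ex 1) uj,
    pd_comm (w := et) hP] at this
  linear_combination this

/-- Terms of the second-order energy identity: `2 u·∇v·v`. -/
def S1 (U : Fin 2 → Q → ℝ) : Q → ℝ := fun p =>
  ∑ j, ∑ k, 2 * ((U k p * Ut U j p) * pd (ex k) (Ut U j) p)
/-- Terms of the second-order energy identity: `v·(v·∇u)`. -/
def S2 (U : Fin 2 → Q → ℝ) : Q → ℝ := fun p =>
  ∑ j, ∑ i, (Ut U i p * Ut U j p) * pd (ex i) (U j) p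
/-- Terms of the second-order energy identity: the contribution `u·∇(v·∇f)` of the force. -/
def S3 (U : Fin 2 → Q → ℝ) (f : Q → ℝ) : Q → ℝ := fun p =>
  ∑ j, ∑ k, (pd (ex j) f p * (U k p * pd (ex k) (Ut U j) p)
    + pd (ex k) (pd (ex j) f) p * (U k p * Ut U j p))
/-- Terms of the second-order energy identity: `(u·∇v)·b` with `b = u·∇u`. -/
def S4 (U : Fin 2 → Q → ℝ) : Q → ℝ := fun p =>
  ∑ j, ∑ k, (U k p * bb U j p) * pd (ex k) (Ut U j) p
/-- Terms of the second-order energy identity: `v·(b·∇u)` with `b = u·∇u`. -/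
def S5 (U : Fin 2 → Q → ℝ) : Q → ℝ := fun p =>
  ∑ j, Ut U j p * (bb U 0 p * ∂₀ (U j) p + bb U 1 p * ∂₁ (U j) p)
/-- Terms of the second-order energy identity: `v·(u⊗u : ∇²u)`. -/
def S6 (U : Fin 2 → Q → ℝ) : Q → ℝ := fun p =>
  ∑ j, Ut U j p * (U 0 p * (U 0 p * ∂₀ (∂₀ (U j)) p + U 1 p * ∂₁ (∂₀ (U j)) p)
        + U 1 p * (U 0 p * ∂₀ (∂₁ (U j)) p + U 1 p * ∂₁ (∂₁ (U j)) p))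

/-- The time derivative of the momentum equation tested with `v = ∂ₜu`. The transport equation turns
`∂ₜR` into derivatives of the other factors. -/
lemma second_identity (h : Sol Ω φ ν α₁ α₂ U R P f) {t : ℝ} (ht : 0 ≤ t) :
    J Ω (fun p => pd et (fun p => R p * (1 / 2 * (Ut U 0 p ^ 2 + Ut U 1 p ^ 2))) p
      + ν * gs (Ut U) p
      + (R p * S1 U p + R p * S2 U p + R p * S3 U f p + R p * S4 U p + R p * S5 U p
        + R p * S6 U p)) t = 0 := by
  have hD := h.dom
  have hR := h.smR
  have hP := h.smP
  have hf := h.stf.sm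
  have u0 := h.sm 0
  have u1 := h.sm 1
  have v0 : ContDiff ℝ (⊤ : ℕ∞) (pd et (U 0)) := h.smV 0
  have v1 : ContDiff ℝ (⊤ : ℕ∞) (pd et (U 1)) := h.smV 1
  have cb0 := bb_sm h.sm 0
  have cb1 := bb_sm h.sm 1
  have db : ∀ i j, pd (ex i) (bb U j) = fun p =>
      (pd (ex i) (U 0) p * ∂₀ (U j) p + U 0 p * pd (ex i) (∂₀ (U j)) p)
      + (pd (ex i) (U 1) p * ∂₁ (U j) p + U 1 p * pd (ex i) (∂₁ (U j)) p) := fun i j => by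
    have uj := h.sm j
    funext p
    unfold bb
    simp (disch := fun_prop) only [pd_add, pd_mul]
  refine J_div2 hD ht
    (V := fun p => -(U 0 p * (R p * (1 / 2 * (pd et (U 0) p ^ 2 + pd et (U 1) p ^ 2))))
      + U 0 p * (R p * (pd et (U 0) p * (pd et (U 0) p + bb U 0 p + ∂₀ f p)
        + pd et (U 1) p * (pd et (U 1) p + bb U 1 p + ∂₁ f p)))
      + ν * (pd et (U 0) p * ∂₀ (pd et (U 0)) p + pd et (U 1) p * ∂₀ (pd et (U 1)) p)
      - pd et (U 0) p * pd et P p)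
    (W := fun p => -(U 1 p * (R p * (1 / 2 * (pd et (U 0) p ^ 2 + pd et (U 1) p ^ 2))))
      + U 1 p * (R p * (pd et (U 0) p * (pd et (U 0) p + bb U 0 p + ∂₀ f p)
        + pd et (U 1) p * (pd et (U 1) p + bb U 1 p + ∂₁ f p)))
      + ν * (pd et (U 0) p * ∂₁ (pd et (U 0)) p + pd et (U 1) p * ∂₁ (pd et (U 1)) p)
      - pd et (U 1) p * pd et P p)
    (by fun_prop) (by fun_prop)
    (fun t ht x hx => by
      have a := h.b0V 0 t ht x hx
      have b := h.b0V 1 t ht x hx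
      simp only [Ut] at a b
      simp [h.b0 _ t ht x hx, a, b])
    (fun t ht x hx => by
      have a := h.b0V 0 t ht x hx
      have b := h.b0V 1 t ht x hx
      simp only [Ut] at a b
      simp [h.b0 _ t ht x hx, a, b])
    fun x hx => ?_
  have m0 := h.momt 0 ht hx
  have m1 := h.momt 1 ht hx
  have tr := h.tr t ht x hx
  have dv := h.div t ht x hx
  have dV := h.divV t ht x hx
  simp only [Ut, S1, S2, S3, S4, S5, S6, gs, Fin.sum_univ_two] at dV ⊢
  simp (disch := fun_prop) only [pd_add, pd_sub, pd_neg, pd_mul, pd_pow, pd_const, db]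
  push_cast
  have eb : ∀ j, bb U j (t, x) = U 0 (t, x) * ∂₀ (U j) (t, x) + U 1 (t, x) * ∂₁ (U j) (t, x) :=
    fun _ => rfl
  simp only [eb] at m0 m1 ⊢
  linear_combination pd et (U 0) (t, x) * m0 + pd et (U 1) (t, x) * m1 + pd et P (t, x) * dV
    + (1 / 2 * (pd et (U 0) (t, x) ^ 2 + pd et (U 1) (t, x) ^ 2)
      - (pd et (U 0) (t, x) * (pd et (U 0) (t, x)
          + (U 0 (t, x) * ∂₀ (U 0) (t, x) + U 1 (t, x) * ∂₁ (U 0) (t, x)) + ∂₀ f (t, x))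
        + pd et (U 1) (t, x) * (pd et (U 1) (t, x)
          + (U 0 (t, x) * ∂₀ (U 1) (t, x) + U 1 (t, x) * ∂₁ (U 1) (t, x)) + ∂₁ f (t, x)))) * tr
    + R (t, x) * (1 / 2 * (pd et (U 0) (t, x) ^ 2 + pd et (U 1) (t, x) ^ 2)
      - (pd et (U 0) (t, x) * (pd et (U 0) (t, x)
          + (U 0 (t, x) * ∂₀ (U 0) (t, x) + U 1 (t, x) * ∂₁ (U 0) (t, x)) + ∂₀ f (t, x))
        + pd et (U 1) (t, x) * (pd et (U 1) (t, x)
          + (U 0 (t, x) * ∂₀ (U 1) (t, x) + U 1 (t, x) * ∂₁ (U 1) (t, x)) + ∂₁ f (t, x)))) * dv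

end Sol

namespace Sol
variable {Ω : Set E2} {φ : E2 → ℝ} {ν α₁ α₂ : ℝ} {U : Fin 2 → Q → ℝ} {R P f : Q → ℝ}

/-- `∂ₜu` belongs to `L²(0,∞; H¹)`. -/
lemma second (h : Sol Ω φ ν α₁ α₂ U R P f) : L1 (fun t => gn Ω (Ut U) t ^ 2) := by
  have hD := h.dom
  have hR := h.smR
  have hν := h.hν
  have hα := h.hα
  have v0 : ContDiff ℝ (⊤ : ℕ∞) (pd et (U 0)) := h.smV 0
  have v1 : ContDiff ℝ (⊤ : ℕ∞) (pd et (U 1)) := h.smV 1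
  have hgs := gs_sm h.smV
  have e := h.est2
  obtain ⟨K, hK, hKb⟩ := exists_T0 h.first.1
  set D := gn Ω U with hDd
  set V := vn Ω (Ut U) with hVd
  set G := gn Ω (Ut U) with hGd
  have D0 : ∀ t, 0 ≤ D t := gn_nonneg
  have V0 : ∀ t, 0 ≤ V t := vn_nonneg
  have G0 : ∀ t, 0 ≤ G t := gn_nonneg
  have DK : ∀ t, 0 ≤ t → D t ≤ K := fun t ht => by
    have := hKb t ht
    rwa [abs_one, mul_one, abs_of_nonneg (D0 t)] at this
  have gV : ∀ i j, NB Ω 1 (pd (ex i) (Ut U j)) G := nb_gn hD h.smV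
  have v3 : ∀ j, NB Ω 3 (Ut U j) G := fun j => ⟨(h.smV j).continuous,
    (nn_three_gr hD (h.smV j) (h.b0V j)).trans (gr_bigO fun i => (gV i j).bd)⟩
  have v2 : ∀ j, NB Ω 2 (Ut U j) (fun t => √(V t * G t)) := fun j => by
    refine ⟨(h.smV j).continuous, bigO_of_sq ?_⟩
    refine (nn_two_sq hD (h.smV j) (h.b0V j)).trans ?_
    have p : ∀ t, 0 ≤ V t * G t := fun t => mul_nonneg (V0 t) (G0 t)
    simp only [sq_sqrt (p _)]
    exact (h.nV j).bd.mul (gr_bigO fun i => (gV i j).bd)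
  have u2 : ∀ j, NB Ω 2 (U j) D := fun j => (e.nU j).step hD
  have u1 : ∀ j, NB Ω 1 (U j) D := fun j => (u2 j).step hD
  have n1 : NB Ω 0 (S1 U) (fun t => D t * √(V t * G t) * G t) :=
    NB.sum hD fun j => NB.sum hD fun k =>
      ((((u2 k).mul hD (v2 j)).mul hD (gV k j)).const_mul hD 2)
  have n2 : NB Ω 0 (S2 U) (fun t => √(V t * G t) * √(V t * G t) * D t) :=
    NB.sum hD fun j => NB.sum hD fun i => ((v2 i).mul hD (v2 j)).mul hD (e.gU i j)
  have n3 : NB Ω 0 (S3 U f) (fun t => D t * G t) :=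
    NB.sum hD fun j => NB.sum hD fun k =>
      (((u1 k).mul hD (gV k j)).stat hD (h.stf.pd j)).add hD
        (((u1 k).mul hD (((v3 j).step hD).step hD)).stat hD ((h.stf.pd j).pd k))
  have n4 : NB Ω 0 (S4 U) (fun t => D t * (1 + V t) * D t * G t) :=
    NB.sum hD fun j => NB.sum hD fun k => (e.nUb k j).mul hD (gV k j)
  have n5 : NB Ω 0 (S5 U) (fun t => G t * D t * (1 + V t) * D t) :=
    NB.sum hD fun j => e.nvbU (v3 j) j
  have n6 : NB Ω 0 (S6 U) (fun t => G t * (D t * (1 + V t)) * (1 + V t)) :=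
    NB.sum hD fun j => e.nvUU (h.smV j) (h.b0V j) (fun i => gV i j) j
  set a : ℝ → ℝ := fun t => (D t ^ 2 + V t ^ 2) * (1 + V t ^ 2) with ha
  have a0 : ∀ t, 0 ≤ a t := fun t => by positivity
  have leA : ∀ {q : ℝ → ℝ} (C : ℝ), (∀ t, 0 ≤ t → 0 ≤ q t ∧ q t ≤ C * a t) → q =O[T0] a :=
    fun C hq => bigO_T0 C fun t ht => by
      rw [abs_of_nonneg (a0 t), abs_of_nonneg (hq t ht).1]; exact (hq t ht).2
  have D2 : ∀ t, 0 ≤ t → D t ^ 2 ≤ K ^ 2 := fun t ht => by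
    have := DK t ht; have := D0 t; gcongr
  have aD : ∀ t, D t ^ 2 ≤ a t := fun t => by
    simp only [ha]; nlinarith [sq_nonneg (D t), sq_nonneg (V t), mul_nonneg (sq_nonneg (D t)) (sq_nonneg (V t)),
      mul_nonneg (sq_nonneg (V t)) (sq_nonneg (V t))]
  have aV : ∀ t, V t ^ 2 ≤ a t := fun t => by
    simp only [ha]; nlinarith [sq_nonneg (D t), sq_nonneg (V t), mul_nonneg (sq_nonneg (D t)) (sq_nonneg (V t)),
      mul_nonneg (sq_nonneg (V t)) (sq_nonneg (V t))]
  have aV4 : ∀ t, V t ^ 4 ≤ a t := fun t => by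
    simp only [ha]; nlinarith [sq_nonneg (D t), sq_nonneg (V t), mul_nonneg (sq_nonneg (D t)) (sq_nonneg (V t)),
      mul_nonneg (sq_nonneg (V t)) (sq_nonneg (V t))]
  -- both `D²V²` and `D²V⁴` are controlled since `D` is bounded
  have aDV : ∀ t, 0 ≤ t → D t ^ 2 * V t ^ 2 ≤ K ^ 2 * a t := fun t ht =>
    mul_le_mul (D2 t ht) (aV t) (sq_nonneg _) (sq_nonneg _)
  have aDV4 : ∀ t, 0 ≤ t → D t ^ 2 * V t ^ 4 ≤ K ^ 2 * a t := fun t ht =>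
    mul_le_mul (D2 t ht) (aV4 t) (by positivity) (sq_nonneg _)
  have aN : ∀ t, 0 ≤ t → D t ^ 2 * (1 + V t) ^ 4 ≤ (8 + 8 * K ^ 2) * a t := fun t ht => by
    have i1 : (1 + V t) ^ 4 ≤ 8 * (1 + V t ^ 4) := by
      nlinarith [sq_nonneg (V t - 1), sq_nonneg (V t ^ 2 - 1), sq_nonneg (V t ^ 2 - V t), V0 t,
        sq_nonneg ((V t - 1) ^ 2)]
    have i2 := mul_le_mul_of_nonneg_left i1 (sq_nonneg (D t))
    have i3 := aD t
    have i4 := aDV4 t ht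
    linarith
  have aN2 : ∀ t, 0 ≤ t → D t ^ 2 * (1 + V t) ^ 2 ≤ (8 + 8 * K ^ 2) * a t := fun t ht => by
    refine le_trans (mul_le_mul_of_nonneg_left ?_ (sq_nonneg (D t))) (aN t ht)
    have := V0 t
    exact pow_le_pow_right₀ (by linarith) (by norm_num)
  have t1 : Absorb G a (fun t => D t * √(V t * G t) * G t) := by
    refine (Absorb.young (A := fun t => D t * √(V t * G t)) ?_).mono
      (bigO_T0 1 fun t _ => by rw [one_mul, mul_comm])
    refine Absorb.young' (A := fun t => D t ^ 2 * V t) a0 (bigO_T0 1 fun t _ => ?_)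
      (leA (K ^ 2 * K ^ 2) fun t ht => ⟨by positivity, ?_⟩)
    · rw [mul_pow, sq_sqrt (mul_nonneg (V0 t) (G0 t)), one_mul]
      exact le_of_eq (congrArg _ (by ring))
    · calc (D t ^ 2 * V t) ^ 2 = D t ^ 2 * (D t ^ 2 * V t ^ 2) := by ring
        _ ≤ K ^ 2 * (K ^ 2 * a t) :=
          mul_le_mul (D2 t ht) (aDV t ht) (by positivity) (by positivity)
        _ = _ := by ring
  have t2 : Absorb G a (fun t => √(V t * G t) * √(V t * G t) * D t) := by
    refine Absorb.young' (A := fun t => V t * D t) a0 (bigO_T0 1 fun t _ => ?_)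
      (leA (K ^ 2) fun t ht => ⟨by positivity, ?_⟩)
    · rw [mul_self_sqrt (mul_nonneg (V0 t) (G0 t)), one_mul]
      exact le_of_eq (congrArg _ (by ring))
    · rw [mul_pow, mul_comm]; exact aDV t ht
  have t3 : Absorb G a (fun t => D t * G t) := by
    refine Absorb.young' (A := D) a0 (bigO_T0 1 fun t _ => ?_)
      (leA 1 fun t ht => ⟨by positivity, by rw [one_mul]; exact aD t⟩)
    rw [one_mul, mul_comm]
  have tN : (fun t => (D t * (1 + V t) * D t) ^ 2) =O[T0] a := by
    refine leA (K ^ 2 * (8 + 8 * K ^ 2)) fun t ht => ⟨by positivity, ?_⟩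
    calc (D t * (1 + V t) * D t) ^ 2 = D t ^ 2 * (D t ^ 2 * (1 + V t) ^ 2) := by ring
      _ ≤ K ^ 2 * ((8 + 8 * K ^ 2) * a t) :=
        mul_le_mul (D2 t ht) (aN2 t ht) (by positivity) (by positivity)
      _ = _ := by ring
  have t4 : Absorb G a (fun t => D t * (1 + V t) * D t * G t) :=
    Absorb.young' (A := fun t => D t * (1 + V t) * D t) a0
      (bigO_T0 1 fun t _ => by rw [one_mul, mul_comm]) tN
  have t5 : Absorb G a (fun t => G t * D t * (1 + V t) * D t) :=
    Absorb.young' (A := fun t => D t * (1 + V t) * D t) a0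
      (bigO_T0 1 fun t _ => by rw [one_mul]; exact le_of_eq (congrArg _ (by ring))) tN
  have t6 : Absorb G a (fun t => G t * (D t * (1 + V t)) * (1 + V t)) := by
    refine Absorb.young' (A := fun t => D t * (1 + V t) * (1 + V t)) a0
      (bigO_T0 1 fun t _ => by rw [one_mul]; exact le_of_eq (congrArg _ (by ring)))
      (leA (8 + 8 * K ^ 2) fun t ht => ⟨by positivity, ?_⟩)
    calc (D t * (1 + V t) * (1 + V t)) ^ 2 = D t ^ 2 * (1 + V t) ^ 4 := by ring
      _ ≤ _ := aN t ht
  have absT := (((((t1.mono (h.nR n1).J).add (t2.mono (h.nR n2).J)).add (t3.mono (h.nR n3).J)).add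
    (t4.mono (h.nR n4).J)).add (t5.mono (h.nR n5).J)).add (t6.mono (h.nR n6).J)
  obtain ⟨C, hC, hCb⟩ := absT (ν / 2) (by positivity)
  set E : Q → ℝ := fun p => R p * (1 / 2 * (Ut U 0 p ^ 2 + Ut U 1 p ^ 2)) with hE
  have hEs : ContDiff ℝ (⊤ : ℕ∞) E := by rw [hE]; fun_prop
  have lower : ∀ t, 0 ≤ t → α₁ / 2 * V t ^ 2 ≤ J Ω E t := by
    intro t ht
    have e1 := h.weighted (F := fun p => (1 / 2) * (Ut U 0 p ^ 2 + Ut U 1 p ^ 2)) (by fun_prop)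
      (fun p => by positivity) ht
    rw [J_const_mul, ← vn_sq] at e1
    have : α₁ * (1 / 2 * V t ^ 2) ≤ J Ω E t := e1
    linarith
  have cD := (gn_cont hD h.sm).pow 2
  have cV := (vn_cont hD h.smV).pow 2
  have cG := (gn_cont hD h.smV).pow 2
  have key := gronwall (Y := J Ω E) (Y' := J Ω (pd et E))
    (Z := fun t => ν / 2 * G t ^ 2) (a := fun t => C * (1 + 2 / α₁) * (D t ^ 2 + V t ^ 2))
    (fun t => J_hasDerivAt hD hEs t)
    (fun t ht => le_trans (by positivity) (lower t ht))
    (cG.const_mul _) (fun t => by positivity) ((cD.add cV).const_mul _)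
    (fun t => by positivity)
    ((h.energy.2.add h.first.2 cD cV).mono ((cD.add cV).const_mul _) (cD.add cV)
      (C := C * (1 + 2 / α₁)) (by positivity) (fun t _ => le_rfl)) (fun t ht => by
      have id := h.second_identity ht
      have c1 := n1.cont
      have c2 := n2.cont
      have c3 := n3.cont
      have c4 := n4.cont
      have c5 := n5.cont
      have c6 := n6.cont
      rw [J_add hD (by fun_prop) (by fun_prop),
        J_add hD (by fun_prop) (by fun_prop),
        J_add hD (by fun_prop) (by fun_prop),
        J_add hD (by fun_prop) (by fun_prop),
        J_add hD (by fun_prop) (by fun_prop),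
        J_add hD (by fun_prop) (by fun_prop),
        J_add hD (by fun_prop) (by fun_prop),
        J_const_mul, ← gn_sq] at id
      have bd := hCb t ht
      beta_reduce at bd
      have bd1 := neg_abs_le (J Ω (fun p => R p * S1 U p) t + J Ω (fun p => R p * S2 U p) t
        + J Ω (fun p => R p * S3 U f p) t + J Ω (fun p => R p * S4 U p) t
        + J Ω (fun p => R p * S5 U p) t + J Ω (fun p => R p * S6 U p) t)
      have id' : J Ω (pd et E) t + ν * G t ^ 2 + (J Ω (fun p => R p * S1 U p) t
        + J Ω (fun p => R p * S2 U p) t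
        + J Ω (fun p => R p * S3 U f p) t + J Ω (fun p => R p * S4 U p) t
        + J Ω (fun p => R p * S5 U p) t + J Ω (fun p => R p * S6 U p) t) = 0 := id
      have lo := lower t ht
      have st : C * a t ≤ C * (1 + 2 / α₁) * (D t ^ 2 + V t ^ 2) * (1 + J Ω E t) := by
        have : 1 + V t ^ 2 ≤ (1 + 2 / α₁) * (1 + J Ω E t) := by
          have k : V t ^ 2 ≤ 2 / α₁ * J Ω E t := by
            calc V t ^ 2 = 2 / α₁ * (α₁ / 2 * V t ^ 2) := by field_simp
              _ ≤ _ := by gcongr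
          have k2 : 0 ≤ J Ω E t := le_trans (by positivity) lo
          have k3 : 0 < 2 / α₁ := by positivity
          linarith
        calc C * a t = C * (D t ^ 2 + V t ^ 2) * (1 + V t ^ 2) := by simp only [ha]; ring
          _ ≤ C * (D t ^ 2 + V t ^ 2) * ((1 + 2 / α₁) * (1 + J Ω E t)) := by gcongr
          _ = _ := by ring
      linarith)
  refine key.2.mono cG (cG.const_mul _) (C := 2 / ν) (by positivity) fun t _ => le_of_eq ?_
  field_simp

end Sol

/-! ### Passage to `Lᵖ` -/

/-- A continuous nonnegative function with bounded integrals over `[0, T]` is integrable on the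
half-line. -/
lemma L1.integrableOn {a : ℝ → ℝ} (h : L1 a) (hc : Continuous a) (h0 : ∀ t, 0 ≤ a t) :
    IntegrableOn a (Ioi 0) := by
  obtain ⟨M, hM⟩ := h
  refine integrableOn_Ioi_of_intervalIntegral_norm_bounded (b := fun T : ℝ => T) (l := atTop) M 0
    (fun T => hc.integrableOn_Ioc) tendsto_id ?_
  filter_upwards [eventually_ge_atTop 0] with T hT
  simpa only [norm_eq_abs, abs_of_nonneg (h0 _)] using hM T hT

/-- For a finite measure, an `L²ⁿ` bound of size `G` gives an `Lᵖ` bound of size `G` if `p ≤ 2n`. -/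
lemma rpow_integral_le {μ : Measure E2} [IsFiniteMeasure μ] {w : E2 → ℝ} {C G p : ℝ} {n : ℕ}
    (w0 : ∀ x, 0 ≤ w x) (hC : 0 < C) (hG : 0 ≤ G) (hp : 1 ≤ p) (hn : p ≤ (2 * n : ℕ))
    (hi : Integrable (fun x => w x ^ p) μ) (hi2 : Integrable (fun x => w x ^ (2 * n)) μ)
    (h : ∫ x, w x ^ (2 * n) ∂μ ≤ C * G ^ (2 * n)) :
    (∫ x, w x ^ p ∂μ) ^ (2 / p) ≤ (μ.real univ + C) ^ (2 / p) * G ^ 2 := by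
  have hp0 : 0 < p := by linarith
  have hm : 0 ≤ μ.real univ := measureReal_nonneg
  have I0 : 0 ≤ ∫ x, w x ^ p ∂μ := integral_nonneg fun x => rpow_nonneg (w0 x) p
  -- the bound for any `s > G`; the limit `s → G` is taken afterwards, to cover the case `G = 0`
  have key : ∀ s, G < s → ∫ x, w x ^ p ∂μ ≤ (μ.real univ + C) * s ^ p := by
    intro s hs
    have s0 : 0 < s := hG.trans_lt hs
    have pt : ∀ x, w x ^ p ≤ s ^ p * (1 + w x ^ (2 * n) / s ^ (2 * n)) := by
      intro x
      have e : w x ^ p = s ^ p * (w x / s) ^ p := by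
        rw [← mul_rpow s0.le (div_nonneg (w0 x) s0.le), mul_div_cancel₀ _ s0.ne']
      rw [e, ← div_pow]
      refine mul_le_mul_of_nonneg_left ?_ (rpow_nonneg s0.le p)
      have z0 : 0 ≤ w x / s := div_nonneg (w0 x) s0.le
      rcases le_total (w x / s) 1 with h1 | h1
      · have := rpow_le_one z0 h1 hp0.le
        have := pow_nonneg z0 (2 * n)
        linarith
      · have := rpow_le_rpow_of_exponent_le h1 hn
        rw [rpow_natCast] at this
        linarith
    have b := integral_mono hi ((((integrable_const (1 : ℝ)).add
      (hi2.div_const (s ^ (2 * n)))).const_mul (s ^ p))) pt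
    refine b.trans ?_
    rw [integral_const_mul]
    have e : ∫ x, ((fun _ => (1 : ℝ)) + (fun x => w x ^ (2 * n) / s ^ (2 * n)) : E2 → ℝ) x ∂μ
        = μ.real univ + (∫ x, w x ^ (2 * n) ∂μ) / s ^ (2 * n) := by
      rw [integral_add' (integrable_const _) (hi2.div_const _), integral_div]
      simp
    rw [e, mul_comm]
    refine mul_le_mul_of_nonneg_right ?_ (rpow_nonneg s0.le p)
    have : (∫ x, w x ^ (2 * n) ∂μ) / s ^ (2 * n) ≤ C := by
      rw [div_le_iff₀ (by positivity)]
      refine h.trans ?_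
      gcongr
    linarith
  have lim : ∫ x, w x ^ p ∂μ ≤ (μ.real univ + C) * G ^ p := by
    have ct : Tendsto (fun s : ℝ => (μ.real univ + C) * s ^ p) (𝓝[>] G)
        (𝓝 ((μ.real univ + C) * G ^ p)) :=
      (((continuous_rpow_const hp0.le).const_mul _).tendsto G).mono_left nhdsWithin_le_nhds
    exact ge_of_tendsto ct (eventually_nhdsWithin_of_forall fun s hs => key s hs)
  refine (rpow_le_rpow I0 lim (by positivity)).trans (le_of_eq ?_)
  rw [mul_rpow (by positivity) (by positivity), ← rpow_mul hG, mul_div_cancel₀ _ hp0.ne']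
  norm_num

namespace Sol
variable {Ω : Set E2} {φ : E2 → ℝ} {ν α₁ α₂ : ℝ} {U : Fin 2 → Q → ℝ} {R P f : Q → ℝ}

/-- `‖∂ₜu‖ₚ` is square integrable in time, by Sobolev embedding of `H¹₀` into `L²ⁿ`, `2n ≥ p`. -/
lemma final (h : Sol Ω φ ν α₁ α₂ U R P f) {p : ℝ} (hp : 1 ≤ p) :
    IntegrableOn (fun t =>
      (∫ x in Ω, √(Ut U 0 (t, x) ^ 2 + Ut U 1 (t, x) ^ 2) ^ p) ^ (2 / p)) (Ioi 0) := by
  have hD := h.dom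
  have c0 : Continuous (pd et (U 0)) := (h.smV 0).continuous
  have c1 : Continuous (pd et (U 1)) := (h.smV 1).continuous
  have hp0 : 0 < p := by linarith
  obtain ⟨n, hn⟩ := exists_nat_ge p
  have hn2 : p ≤ (2 * n : ℕ) := by push_cast; linarith
  have hfin : IsFiniteMeasure (volume.restrict Ω) := ⟨by
    rw [Measure.restrict_apply_univ]; exact hD.bdd.measure_lt_top⟩
  set w : Q → ℝ := fun q => √(Ut U 0 q ^ 2 + Ut U 1 q ^ 2) with hw
  have cw : Continuous w := by fun_prop
  have cwp : Continuous fun q => w q ^ p := cw.rpow_const fun _ => Or.inr hp0.le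
  have hb : ∀ j, nn Ω 1 (fun q => Ut U j q ^ n) =O[T0] fun t => gn Ω (Ut U) t ^ n := fun j =>
    (nn_pow_bigO hD (h.smV j) (h.b0V j) n).trans
      ((gr_bigO fun i => (nb_gn hD h.smV i j).bd).pow n)
  obtain ⟨C0, hC0, b0⟩ := exists_T0 (hb 0)
  obtain ⟨C1, hC1, b1⟩ := exists_T0 (hb 1)
  have main : ∀ t, 0 ≤ t → J Ω (fun q => w q ^ (2 * n)) t
      ≤ 2 ^ (n - 1) * (C0 ^ 2 + C1 ^ 2) * gn Ω (Ut U) t ^ (2 * n) := by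
    intro t ht
    have sq : ∀ {j : Fin 2} {C : ℝ}, |nn Ω 1 (fun q => Ut U j q ^ n) t| ≤ C * |gn Ω (Ut U) t ^ n| →
        J Ω (fun q => (Ut U j q ^ n) ^ 2) t ≤ C ^ 2 * gn Ω (Ut U) t ^ (2 * n) := by
      intro j C hj
      rw [← nn_one_sq, ← sq_abs]
      calc _ ≤ (C * |gn Ω (Ut U) t ^ n|) ^ 2 := pow_le_pow_left₀ (abs_nonneg _) hj 2
        _ = _ := by rw [mul_pow, sq_abs, ← pow_mul, mul_comm n 2]
    calc J Ω (fun q => w q ^ (2 * n)) t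
        ≤ J Ω (fun q => 2 ^ (n - 1) * ((Ut U 0 q ^ n) ^ 2 + (Ut U 1 q ^ n) ^ 2)) t := by
          refine J_mono hD (by fun_prop) (by fun_prop) fun x _ => ?_
          have := add_pow_le (sq_nonneg (Ut U 0 (t, x))) (sq_nonneg (Ut U 1 (t, x))) n
          rw [pow_mul, hw]
          beta_reduce
          rw [sq_sqrt (by positivity)]
          refine this.trans (le_of_eq ?_)
          ring
      _ = 2 ^ (n - 1) * (J Ω (fun q => (Ut U 0 q ^ n) ^ 2) t
            + J Ω (fun q => (Ut U 1 q ^ n) ^ 2) t) := by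
          rw [J_const_mul, J_add hD (by fun_prop) (by fun_prop)]
      _ ≤ 2 ^ (n - 1) * (C0 ^ 2 * gn Ω (Ut U) t ^ (2 * n) + C1 ^ 2 * gn Ω (Ut U) t ^ (2 * n)) := by
          have := sq (b0 t ht)
          have := sq (b1 t ht)
          gcongr
      _ = _ := by ring
  have meas : StronglyMeasurable fun t => (∫ x in Ω, w (t, x) ^ p) ^ (2 / p) :=
    ((StronglyMeasurable.integral_prod_right' (ν := volume.restrict Ω)
      cwp.stronglyMeasurable).measurable.pow_const (2 / p)).stronglyMeasurable
  have hG := h.second.integrableOn ((gn_cont hD h.smV).pow 2) fun t => sq_nonneg _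
  refine Integrable.mono' (hG.const_mul (((volume.restrict Ω).real univ
    + 2 ^ (n - 1) * (C0 ^ 2 + C1 ^ 2)) ^ (2 / p))) meas.aestronglyMeasurable ?_
  filter_upwards [ae_restrict_mem measurableSet_Ioi] with t ht
  have w0 : ∀ q, 0 ≤ w q := fun q => sqrt_nonneg _
  rw [norm_of_nonneg (rpow_nonneg (integral_nonneg fun x => rpow_nonneg (w0 _) p) _)]
  exact rpow_integral_le (fun x => w0 (t, x)) (by positivity) (gn_nonneg t) hp hn2
    (J_int hD cwp t) (J_int hD (cw.pow (2 * n)) t) (main t (le_of_lt ht))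

end Sol

/-! ### Coordinates -/

lemma gradient_apply (g : E2 → ℝ) (x : E2) (i : Fin 2) :
    gradient g x i = fderiv ℝ g x (EuclideanSpace.single i 1) := by
  have := InnerProductSpace.toDual_symm_apply (𝕜 := ℝ) (x := EuclideanSpace.single i (1 : ℝ))
    (y := fderiv ℝ g x)
  rw [← this, gradient, EuclideanSpace.inner_single_right]
  simp

namespace Coord

variable {u : ℝ → E2 → E2}

lemma comp_sm (hu : ContDiff ℝ (⊤ : ℕ∞) (fun p : Q => u p.1 p.2))
    (i : Fin 2) : ContDiff ℝ (⊤ : ℕ∞) (fun p : Q => u p.1 p.2 i) :=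
  (contDiff_euclidean.1 hu) i

lemma deriv_comp (hu : ContDiff ℝ (⊤ : ℕ∞) (fun p : Q => u p.1 p.2))
    (t : ℝ) (x : E2) (i : Fin 2) :
    deriv (fun s => u s x) t i = pd et (fun p : Q => u p.1 p.2 i) (t, x) := by
  have d : DifferentiableAt ℝ (fun s => u s x) t :=
    ((hu.comp (contDiff_prodMk_left x)).differentiable (by simp)).differentiableAt
  have e := (EuclideanSpace.proj (𝕜 := ℝ) i : E2 →L[ℝ] ℝ).hasFDerivAt.comp_hasDerivAt t
    d.hasDerivAt
  exact e.unique (pd_et_eq (comp_sm hu i) t x)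

lemma slice_sm (hu : ContDiff ℝ (⊤ : ℕ∞) (fun p : Q => u p.1 p.2))
    (t : ℝ) : ContDiff ℝ (⊤ : ℕ∞) (u t) := hu.comp (contDiff_prodMk_right t)

lemma fderiv_comp_apply {g : E2 → E2} (hg : Differentiable ℝ g) (x v : E2) (i : Fin 2) :
    fderiv ℝ g x v i = fderiv ℝ (fun y => g y i) x v := by
  have e := (EuclideanSpace.proj (𝕜 := ℝ) i : E2 →L[ℝ] ℝ).hasFDerivAt.comp x
    (hg x).hasFDerivAt
  have e2 : (fun y => g y i) = (EuclideanSpace.proj (𝕜 := ℝ) i : E2 →L[ℝ] ℝ) ∘ g := rfl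
  rw [e2, e.fderiv]
  rfl

lemma fderiv_single (hu : ContDiff ℝ (⊤ : ℕ∞) (fun p : Q => u p.1 p.2))
    (t : ℝ) (x : E2) (i j : Fin 2) :
    fderiv ℝ (u t) x (EuclideanSpace.single j 1) i = pd (ex j) (fun p : Q => u p.1 p.2 i) (t, x) := by
  rw [fderiv_comp_apply ((slice_sm hu t).differentiable (by simp)), ← pd_ex_eq (comp_sm hu i)]

lemma fderiv_conv (hu : ContDiff ℝ (⊤ : ℕ∞) (fun p : Q => u p.1 p.2))
    (t : ℝ) (x v : E2) (i : Fin 2) :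
    fderiv ℝ (u t) x v i = v 0 * pd (ex 0) (fun p : Q => u p.1 p.2 i) (t, x)
      + v 1 * pd (ex 1) (fun p : Q => u p.1 p.2 i) (t, x) := by
  rw [fderiv_comp_apply ((slice_sm hu t).differentiable (by simp)), clm_apply_E2,
    ← pd_ex_eq (comp_sm hu i), ← pd_ex_eq (comp_sm hu i)]

lemma vlap_apply (hu : ContDiff ℝ (⊤ : ℕ∞) (fun p : Q => u p.1 p.2))
    (t : ℝ) (x : E2) (i : Fin 2) :
    vlap (u t) x i = pd (ex 0) (pd (ex 0) (fun p : Q => u p.1 p.2 i)) (t, x)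
      + pd (ex 1) (pd (ex 1) (fun p : Q => u p.1 p.2 i)) (t, x) := by
  have key : ∀ j : Fin 2, fderiv ℝ (fun y => fderiv ℝ (u t) y (EuclideanSpace.single j 1)) x
      (EuclideanSpace.single j 1) i = pd (ex j) (pd (ex j) (fun p : Q => u p.1 p.2 i)) (t, x) := by
    intro j
    have d : ContDiff ℝ (⊤ : ℕ∞) fun y => fderiv ℝ (u t) y (EuclideanSpace.single j 1) :=
      ((slice_sm hu t).fderiv_right (by simp)).clm_apply contDiff_const
    rw [fderiv_comp_apply (d.differentiable (by simp)), ← pd_ex_eq (contDiff_pd (comp_sm hu i))]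
    simp only [fderiv_single hu]
  simp only [vlap, Fin.sum_univ_two, PiLp.add_apply, key]

end Coord

/-- `∂_t u ∈ L²((0,∞); Lᵖ(Ω))` for every `1 ≤ p < ∞`. -/
theorem ut_L2_Lp
    (Ω : Set E2) (hΩ : SmoothBoundedDomain Ω)
    (ν : ℝ) (hν : 0 < ν)
    (f ρs : E2 → ℝ) (hf : ContDiff ℝ (⊤ : ℕ∞) f) (hρs : ContDiff ℝ (⊤ : ℕ∞) ρs)
    (hhyd : Hydrostatic Ω f ρs)
    (hgradf : GradfW1inf Ω f)
    (u : ℝ → E2 → E2) (ϱ P : ℝ → E2 → ℝ)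
    (hsmooth : SmoothSol u ϱ P)
    (hsys : PerturbationSystem Ω ν f ρs u ϱ P)
    (α₁ α₂ : ℝ) (hα₁ : 0 < α₁)
    (hinit : ∀ x ∈ Ω, α₁ ≤ ϱ 0 x + ρs x ∧ ϱ 0 x + ρs x ≤ α₂)
    -- initial data (u₀, ϱ₀) ∈ H²(Ω) × L^∞(Ω)
    (hu₀ : MemHk 2 Ω (u 0))
    (hϱ₀ : ∃ M : ℝ, ∀ x ∈ Ω, |ϱ 0 x| ≤ M) :
    ∀ p : ℝ, 1 ≤ p →
      IntegrableOn
        (fun t => (∫ x in Ω, ‖deriv (fun s => u s x) t‖ ^ p) ^ (2 / p))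
        (Set.Ioi (0:ℝ)) := by
  intro p hp
  obtain ⟨φ, hD⟩ := GoodDom.of_smooth hΩ
  obtain ⟨hu, hϱ, hP⟩ := hsmooth
  obtain ⟨hmom, htr, hdiv, hbc⟩ := hsys
  obtain ⟨ps, hps, hpse⟩ := hhyd
  have hρl : ContDiff ℝ (⊤ : ℕ∞) (fun q : Q => ρs q.2) := (Stat.lift hρs).sm
  have hpl : ContDiff ℝ (⊤ : ℕ∞) (fun q : Q => ps q.2) := (Stat.lift hps).sm
  have hfl : ContDiff ℝ (⊤ : ℕ∞) (fun q : Q => f q.2) := (Stat.lift hf).sm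
  -- the total density and the total pressure solve the unperturbed system
  have sol : Sol Ω φ ν α₁ α₂ (fun i q => u q.1 q.2 i) (fun q => ϱ q.1 q.2 + ρs q.2)
      (fun q => P q.1 q.2 + ps q.2) (fun q => f q.2) :=
    { dom := hD
      hν := hν
      hα := hα₁
      sm := Coord.comp_sm hu
      smR := hϱ.add hρl
      smP := hP.add hpl
      stf := Stat.lift hf
      b0 := fun j t ht x hx => by simp [hbc t ht x hx]
      div := fun t ht x hx => by
        have := hdiv t ht x hx
        simpa only [vdiv, Fin.sum_univ_two, Coord.fderiv_single hu] using this
      mom := fun j t ht x hx => by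
        have m := congrArg (fun v : E2 => v j) (hmom t ht x hx)
        have e := congrArg (fun v : E2 => v j) (hpse x hx)
        simp only [PiLp.add_apply, PiLp.sub_apply, PiLp.smul_apply, PiLp.neg_apply, smul_eq_mul,
          Coord.deriv_comp hu, Coord.fderiv_conv hu, Coord.vlap_apply hu, gradient_apply] at m e
        rw [pd_add hP hpl]
        simp only [bb, ← pd_ex_eq hP, ← pd_ex_eq hpl, ← pd_ex_eq hfl]
        linear_combination m + e
      tr := fun t ht x hx => by
        have m := htr t ht x hx
        rw [clm_apply_E2 (fderiv ℝ (ϱ t) x), clm_apply_E2 (fderiv ℝ ρs x),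
          (pd_et_eq hϱ t x).deriv] at m
        have z : pd et (fun q : Q => ρs q.2) (t, x) = 0 :=
          (pd_et_eq hρl t x).unique (hasDerivAt_const t (ρs x))
        simp only [pd_add hϱ hρl, z, ← pd_ex_eq hϱ, ← pd_ex_eq hρl]
        linear_combination m
      dens0 := hinit }
  have e : ∀ t x, ‖deriv (fun s => u s x) t‖ = √(pd et (fun q : Q => u q.1 q.2 0) (t, x) ^ 2
      + pd et (fun q : Q => u q.1 q.2 1) (t, x) ^ 2) := by
    intro t x
    rw [EuclideanSpace.norm_eq, Fin.sum_univ_two, Coord.deriv_comp hu, Coord.deriv_comp hu]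
    simp only [norm_eq_abs, sq_abs]
  simp only [e]
  exact sol.final hp
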